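/- arXiv:1701.02616 — 5 statements merged into one kernel-verified Lean document; each statement's English description precedes it below -/
import Mathlib

section
/- Let z₀ ∈ ℂ, r > 0, and let f : ℂ → ℝ be C¹ on an open neighborhood of the closed disc D(z₀,r) with |∇f| integrable over D(z₀,r). Then (∬_{D(z₀,r)} |f(z) − f_{D(z₀,r)}|² dxdy)^{1/2} ≤ (3√(π³)/4) · ∬_{D(z₀,r)} |∇f(z)| dxdy. -/
open MeasureTheory Metric Real
open scoped ENNReal

lemma ftc_line (f : ℂ → ℝ) (U : Set ℂ) (hU : IsOpen U) (hf : ContDiffOn ℝ 1 f U)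
    (D : Set ℂ) (hDU : D ⊆ U) (p e : ℂ) (u v : ℝ)
    (hseg : ∀ s ∈ Set.uIcc u v, p + s • e ∈ D) :
    ‖f (p + v • e) - f (p + u • e)‖ₑ ≤
      ∫⁻ s : ℝ, D.indicator (fun z => ‖fderiv ℝ f z e‖ₑ) (p + s • e) := by
  have hd : ∀ s ∈ Set.uIcc u v, HasDerivAt (fun s : ℝ => f (p + s • e))
      (fderiv ℝ f (p + s • e) e) s := by
    intro s hs
    have h1 : HasFDerivAt f (fderiv ℝ f (p + s • e)) (p + s • e) :=
      ((hf.differentiableOn one_ne_zero).differentiableAt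
        (hU.mem_nhds (hDU (hseg s hs)))).hasFDerivAt
    have h2 : HasDerivAt (fun s : ℝ => p + s • e) e s := by
      simpa using ((hasDerivAt_id s).smul_const e).const_add p
    exact h1.comp_hasDerivAt s h2
  have hc : ContinuousOn (fun s : ℝ => fderiv ℝ f (p + s • e) e) (Set.uIcc u v) := by
    have h3 : ContinuousOn (fderiv ℝ f) U := hf.continuousOn_fderiv_of_isOpen hU le_rfl
    have h4 : ContinuousOn (fun s : ℝ => fderiv ℝ f (p + s • e)) (Set.uIcc u v) :=
      h3.comp (by fun_prop) (fun s hs => hDU (hseg s hs))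
    exact h4.clm_apply continuousOn_const
  have := intervalIntegral.integral_eq_sub_of_hasDerivAt hd hc.intervalIntegrable
  rw [← this]
  have hn : ‖∫ s in u..v, fderiv ℝ f (p + s • e) e‖ₑ
      = ‖∫ s in Set.uIoc u v, fderiv ℝ f (p + s • e) e‖ₑ := by
    rw [← ofReal_norm, ← ofReal_norm, intervalIntegral.norm_intervalIntegral_eq]
  rw [hn]
  refine (enorm_integral_le_lintegral_enorm _).trans ?_
  rw [← lintegral_indicator measurableSet_uIoc]
  refine lintegral_mono fun s => ?_
  by_cases hs : s ∈ Set.uIoc u v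
  · rw [Set.indicator_of_mem hs, Set.indicator_of_mem (hseg s (Set.uIoc_subset_uIcc hs))]
  · rw [Set.indicator_of_notMem hs]; exact zero_le

lemma avg_est (B : ℝ → ℝ≥0∞) (mB : Measurable B) (a : ℝ) (S : Set (ℝ × ℝ))
    (hS : S ⊆ Set.Icc (-a) a ×ˢ Set.Icc (-a) a) :
    (∫⁻ z in S, B z.1 ≤ ENNReal.ofReal (2 * a) * ∫⁻ y, B y) ∧
    (∫⁻ z in S, B z.2 ≤ ENNReal.ofReal (2 * a) * ∫⁻ y, B y) := by
  have vol : volume (Set.Icc (-a) a) = ENNReal.ofReal (2*a) := by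
    rw [Real.volume_Icc]; ring_nf
  constructor
  · refine (lintegral_mono_set hS).trans ?_
    rw [Measure.volume_eq_prod, ← Measure.prod_restrict]
    have := lintegral_prod_mul (μ := volume.restrict (Set.Icc (-a) a))
      (ν := volume.restrict (Set.Icc (-a) a)) (f := B) (g := fun _ => 1)
      mB.aemeasurable aemeasurable_const
    simp only [mul_one, lintegral_one, Measure.restrict_apply_univ, vol] at this
    rw [this, mul_comm]
    gcongr
    exact Measure.restrict_le_self
  · refine (lintegral_mono_set hS).trans ?_
    rw [Measure.volume_eq_prod, ← Measure.prod_restrict]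
    have := lintegral_prod_mul (μ := volume.restrict (Set.Icc (-a) a))
      (ν := volume.restrict (Set.Icc (-a) a)) (f := fun _ => 1) (g := B)
      aemeasurable_const mB.aemeasurable
    simp only [one_mul, lintegral_one, Measure.restrict_apply_univ, vol] at this
    rw [this]
    gcongr
    exact Measure.restrict_le_self

/-- abstract estimate -/
lemma box_est (p q : ℝ → ℝ → ℝ≥0∞) (hp : Measurable (Function.uncurry p))
    (hq : Measurable (Function.uncurry q)) (A B : ℝ → ℝ≥0∞)
    (hA : A = fun y => ∫⁻ x, p x y) (hB : B = fun x => ∫⁻ y, q x y)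
    (K L : ℝ≥0∞) (b : ℝ) (S : Set (ℝ × ℝ)) (hS : S ⊆ Set.Icc (-b) b ×ˢ Set.Icc (-b) b) :
    ∫⁻ z in S, (A z.2 + K) * (B z.1 + L) ≤
      (∫⁻ y, A y) * (∫⁻ x, B x) + L * (ENNReal.ofReal (2 * b) * ∫⁻ y, A y)
       + K * (ENNReal.ofReal (2 * b) * ∫⁻ x, B x) + K * L * volume S := by
  have mA : Measurable A := by
    rw [hA]; exact Measurable.lintegral_prod_left' (f := Function.uncurry p) hp
  have mB : Measurable B := by
    rw [hB]; exact Measurable.lintegral_prod_right' (f := Function.uncurry q) hq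
  have e : ∀ z : ℝ × ℝ, (A z.2 + K) * (B z.1 + L) =
     A z.2 * B z.1 + L * A z.2 + K * B z.1 + K * L := fun z => by ring
  simp_rw [e]
  rw [lintegral_add_right _ measurable_const, lintegral_add_right _ (by fun_prop),
    lintegral_add_right _ (by fun_prop), lintegral_const, lintegral_const_mul _ (by fun_prop),
    lintegral_const_mul _ (by fun_prop)]
  have h1 : ∫⁻ z in S, A z.2 * B z.1 ≤ (∫⁻ y, A y) * (∫⁻ x, B x) := by
    refine (setLIntegral_le_lintegral _ _).trans ?_
    rw [Measure.volume_eq_prod]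
    simp_rw [mul_comm (A _)]
    rw [lintegral_prod_mul mB.aemeasurable mA.aemeasurable, mul_comm]
  have h2 := (avg_est A mA b S hS).2
  have h3 := (avg_est B mB b S hS).1
  rw [Measure.restrict_apply_univ]
  gcongr

lemma real_est (r a b G : ℝ) (hr : 0 < r) (ha : 0 ≤ a) (hb : 0 ≤ b)
    (h : a + b ≤ √2 * G) :
    a * b + 2 / (π * (0.38 * r)) * a * (2 * (0.925 * r) * a)
      + 2 / (π * (0.38 * r)) * b * (2 * (0.925 * r) * b)
      + 2 / (π * (0.38 * r)) * b * (2 / (π * (0.38 * r)) * a) * (π * r ^ 2) ≤ 8.1 * G ^ 2 := by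
  have hpi : 3.14 < π := Real.pi_gt_d2
  have hpi0 : 0 < π := by linarith
  have e : a * b + 2 / (π * (0.38 * r)) * a * (2 * (0.925 * r) * a)
      + 2 / (π * (0.38 * r)) * b * (2 * (0.925 * r) * b)
      + 2 / (π * (0.38 * r)) * b * (2 / (π * (0.38 * r)) * a) * (π * r ^ 2)
      = a * b + (1/π) * ((3.7/0.38) * (a^2 + b^2) + (4 / 0.38^2) * (a * b)) := by
    field_simp
    ring
  rw [e]
  have h1 : 1 / π ≤ 1/3.14 := by gcongr
  have h2 : 0 ≤ (3.7/0.38) * (a^2 + b^2) + (4 / 0.38^2) * (a * b) := by positivity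
  have h3 : (a + b)^2 ≤ 2 * G^2 := by
    calc (a+b)^2 ≤ (√2 * G)^2 := by gcongr
      _ = _ := by rw [mul_pow, Real.sq_sqrt (by norm_num)]
  have h4 := mul_le_mul_of_nonneg_right h1 h2
  nlinarith [sq_nonneg (a - b), mul_nonneg ha hb]

lemma cover (x y r : ℝ) (h : x^2 + y^2 ≤ r^2) (h' : ¬ (x^2 ≤ 0.8556 * r^2 ∧ y^2 ≤ 0.8556 * r^2)) :
    (x + y)^2 / 2 ≤ 0.8556 * r^2 ∧ (y - x)^2 / 2 ≤ 0.8556 * r^2 := by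
  have key : |x * y| ≤ 0.3555 * r^2 := by
    apply abs_le_of_sq_le_sq _ (by positivity)
    rw [mul_pow]
    rcases not_and_or.mp h' with h1 | h1 <;> push Not at h1
    · nlinarith [sq_nonneg x, sq_nonneg y, sq_nonneg (x^2 - 0.8556 * r^2), mul_nonneg (sq_nonneg x) (sub_nonneg.2 h), mul_nonneg (sq_nonneg r) (sub_nonneg.2 h1.le), sq_nonneg (r^2)]
    · nlinarith [sq_nonneg x, sq_nonneg y, sq_nonneg (y^2 - 0.8556 * r^2), mul_nonneg (sq_nonneg y) (sub_nonneg.2 h), mul_nonneg (sq_nonneg r) (sub_nonneg.2 h1.le), sq_nonneg (r^2)]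
  have := abs_le.1 key
  constructor <;> nlinarith

lemma core (f : ℂ → ℝ) (U : Set ℂ) (hU : IsOpen U) (r : ℝ) (hr : 0 < r)
    (hUr : closedBall 0 r ⊆ U) (hf : ContDiffOn ℝ 1 f U) (c : ℝ)
    (hc : c = ⨍ w in ball (0:ℂ) (0.38 * r), f w)
    (hfin : ∫⁻ z in ball (0:ℂ) r, ‖fderiv ℝ f z‖ₑ ≠ ∞) :
    ∫⁻ z in ball (0:ℂ) r ∩ {z | z.re^2 ≤ 0.8556 * r^2 ∧ z.im^2 ≤ 0.8556 * r^2}, ‖f z - c‖ₑ ^ 2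
      ≤ ENNReal.ofReal (8.1 * (∫⁻ z in ball (0:ℂ) r, ‖fderiv ℝ f z‖ₑ).toReal ^ 2) := by
  set D := ball (0:ℂ) r with hD
  have hDU : D ⊆ U := ball_subset_closedBall.trans hUr
  have mD : MeasurableSet D := measurableSet_ball
  set S := D ∩ {z : ℂ | z.re^2 ≤ 0.8556 * r^2 ∧ z.im^2 ≤ 0.8556 * r^2} with hSdef
  have mS : MeasurableSet S := by
    refine mD.inter (MeasurableSet.inter ?_ ?_)
    · exact measurableSet_le (Complex.measurable_re.pow_const 2) measurable_const
    · exact measurableSet_le (Complex.measurable_im.pow_const 2) measurable_const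
  have memD : ∀ z : ℂ, z ∈ D ↔ z.re^2 + z.im^2 < r^2 := by
    intro z
    rw [hD, mem_ball_zero_iff, ← sq_lt_sq₀ (norm_nonneg _) hr.le, Complex.sq_norm,
      Complex.normSq_apply]
    ring_nf
  set m := Complex.measurableEquivRealProd.symm with hmdef
  have hm : MeasurePreserving m volume volume := Complex.volume_preserving_equiv_real_prod.symm
  have m1 : ∀ x y : ℝ, m (x, y) = (⟨x, y⟩ : ℂ) := fun x y => rfl
  have mre : ∀ z, (m z).re = z.1 := fun x => rfl
  have mim : ∀ z, (m z).im = z.2 := fun x => rfl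
  set P : ℂ → ℝ≥0∞ := D.indicator (fun z => ‖fderiv ℝ f z 1‖ₑ) with hP
  set Q : ℂ → ℝ≥0∞ := D.indicator (fun z => ‖fderiv ℝ f z Complex.I‖ₑ) with hQ
  have mP : Measurable P := (measurable_fderiv_apply_const ℝ f 1).enorm.indicator mD
  have mQ : Measurable Q := (measurable_fderiv_apply_const ℝ f Complex.I).enorm.indicator mD
  set p : ℝ → ℝ → ℝ≥0∞ := fun x y => P (m (x, y)) with hp
  set q : ℝ → ℝ → ℝ≥0∞ := fun x y => Q (m (x, y)) with hq
  have mp : Measurable (Function.uncurry p) := mP.comp m.measurable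
  have mq : Measurable (Function.uncurry q) := mQ.comp m.measurable
  set A : ℝ → ℝ≥0∞ := fun y => ∫⁻ x, p x y with hA
  set B : ℝ → ℝ≥0∞ := fun x => ∫⁻ y, q x y with hB
  have mA : Measurable A := Measurable.lintegral_prod_left' (f := Function.uncurry p) mp
  have mB : Measurable B := Measurable.lintegral_prod_right' (f := Function.uncurry q) mq
  set α := ∫⁻ y, A y with hα
  set β := ∫⁻ x, B x with hβ
  have eα : α = ∫⁻ z, P z := by
    rw [← hm.lintegral_comp mP, Measure.volume_eq_prod]
    exact (lintegral_prod_symm' _ mp).symm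
  have eβ : β = ∫⁻ z, Q z := by
    rw [← hm.lintegral_comp mQ, Measure.volume_eq_prod]
    exact (lintegral_prod _ mq.aemeasurable).symm
  set G := ∫⁻ z in D, ‖fderiv ℝ f z‖ₑ with hG
  have hαβ : α + β ≤ ENNReal.ofReal √2 * G := by
    rw [eα, eβ, ← lintegral_add_left mP, hG, ← lintegral_indicator mD,
      ← lintegral_const_mul _ ((measurable_fderiv ℝ f).enorm.indicator mD)]
    refine lintegral_mono fun z => ?_
    by_cases hz : z ∈ D
    · simp only [hP, hQ, Set.indicator_of_mem hz]
      rw [← ofReal_norm, ← ofReal_norm, ← ofReal_norm,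
        ← ENNReal.ofReal_add (norm_nonneg _) (norm_nonneg _), ← ENNReal.ofReal_mul (by positivity)]
      apply ENNReal.ofReal_le_ofReal
      set L := fderiv ℝ f z
      have n1 : ‖(1:ℂ) + Complex.I‖ = √2 := by
        rw [Complex.norm_def]; congr 1; simp [Complex.normSq_apply]; norm_num
      have n2 : ‖(1:ℂ) - Complex.I‖ = √2 := by
        rw [Complex.norm_def]; congr 1; simp [Complex.normSq_apply]; norm_num
      have h1 := L.le_opNorm (1 + Complex.I)
      have h2 := L.le_opNorm (1 - Complex.I)
      rw [n1, map_add] at h1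
      rw [n2, map_sub] at h2
      rw [Real.norm_eq_abs] at h1 h2 ⊢
      rw [Real.norm_eq_abs]
      rw [abs_le] at h1 h2
      rcases abs_cases (L 1) with ⟨e1, _⟩ | ⟨e1, _⟩ <;>
      rcases abs_cases (L Complex.I) with ⟨e2, _⟩ | ⟨e2, _⟩ <;> rw [e1, e2] <;> nlinarith
    · simp [hP, hQ, Set.indicator_of_notMem hz]
  have hfin2 : ENNReal.ofReal √2 * G ≠ ∞ := ENNReal.mul_ne_top ENNReal.ofReal_ne_top hfin
  have fα : α ≠ ∞ := ne_top_of_le_ne_top hfin2 (le_self_add.trans hαβ)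
  have fβ : β ≠ ∞ := ne_top_of_le_ne_top hfin2 (le_add_self.trans hαβ)
  -- segments
  have hor : ∀ x x' y : ℝ, x^2 + y^2 < r^2 → x'^2 + y^2 < r^2 →
      ‖f ⟨x, y⟩ - f ⟨x', y⟩‖ₑ ≤ A y := by
    intro x x' y h h'
    have e : ∀ s : ℝ, (y • Complex.I) + s • (1:ℂ) = ⟨s, y⟩ := by
      intro s; apply Complex.ext <;> simp
    have := ftc_line f U hU hf D hDU (y • Complex.I) 1 x' x (by
      intro s hs
      rw [e, memD]
      simp only
      have : s^2 ≤ max (x^2) (x'^2) := by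
        rcases Set.mem_uIcc.1 hs with ⟨h1, h2⟩ | ⟨h1, h2⟩
        · rcases le_total 0 s with h3 | h3
          · exact le_max_of_le_left (by nlinarith)
          · exact le_max_of_le_right (by nlinarith)
        · rcases le_total 0 s with h3 | h3
          · exact le_max_of_le_right (by nlinarith)
          · exact le_max_of_le_left (by nlinarith)
      rcases le_max_iff.1 this with h | h <;> linarith)
    simp only [e] at this
    exact this
  have ver : ∀ x y y' : ℝ, x^2 + y^2 < r^2 → x^2 + y'^2 < r^2 →
      ‖f ⟨x, y⟩ - f ⟨x, y'⟩‖ₑ ≤ B x := by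
    intro x y y' h h'
    have e : ∀ s : ℝ, (x : ℂ) + s • Complex.I = ⟨x, s⟩ := by
      intro s; apply Complex.ext <;> simp
    have := ftc_line f U hU hf D hDU (x : ℂ) Complex.I y' y (by
      intro s hs
      rw [e, memD]
      simp only
      have : s^2 ≤ max (y^2) (y'^2) := by
        rcases Set.mem_uIcc.1 hs with ⟨h1, h2⟩ | ⟨h1, h2⟩
        · rcases le_total 0 s with h3 | h3
          · exact le_max_of_le_left (by nlinarith)
          · exact le_max_of_le_right (by nlinarith)
        · rcases le_total 0 s with h3 | h3
          · exact le_max_of_le_right (by nlinarith)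
          · exact le_max_of_le_left (by nlinarith)
      rcases le_max_iff.1 this with h | h <;> linarith)
    simp only [e] at this
    exact this
  -- averages
  set E := ball (0:ℂ) (0.38 * r) with hE
  have mE : MeasurableSet E := measurableSet_ball
  have memE : ∀ z : ℂ, z ∈ E ↔ z.re^2 + z.im^2 < 0.1444 * r^2 := by
    intro z
    rw [hE, mem_ball_zero_iff, ← sq_lt_sq₀ (norm_nonneg _) (by positivity), Complex.sq_norm,
      Complex.normSq_apply]
    ring_nf
  have volE : volume E = ENNReal.ofReal (π * (0.38 * r)^2) := by
    rw [hE, Complex.volume_ball, ENNReal.ofReal_mul pi_pos.le, mul_comm,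
      ENNReal.ofReal_pow (by positivity)]
    congr 1
    rw [← NNReal.coe_real_pi, ENNReal.ofReal_coe_nnreal]
  have volE0 : volume E ≠ 0 := by
    rw [volE]; simp; positivity
  have volET : volume E ≠ ∞ := by rw [volE]; exact ENNReal.ofReal_ne_top
  have hEU : closedBall (0:ℂ) (0.38 * r) ⊆ U :=
    (closedBall_subset_closedBall (by linarith)).trans hUr
  have fint : IntegrableOn f E :=
    ((hf.continuousOn.mono hEU).integrableOn_compact (isCompact_closedBall _ _)).mono_set
      ball_subset_closedBall
  have avg : ∀ (t : ℝ) (H : ℂ → ℝ≥0∞), (∀ w ∈ E, ‖t - f w‖ₑ ≤ H w) →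
      ‖t - c‖ₑ ≤ (volume E)⁻¹ * ∫⁻ w in E, H w := by
    intro t H h
    have : IsProbabilityMeasure ((volume E)⁻¹ • volume.restrict E) := by
      constructor
      simp [ENNReal.inv_mul_cancel volE0 volET]
    have e1 : t - c = ∫ w, (t - f w) ∂((volume E)⁻¹ • volume.restrict E) := by
      rw [integral_sub (integrable_const _) (fint.smul_measure (ENNReal.inv_ne_top.2 volE0)), hc]
      simp [average]
    rw [e1]
    refine (enorm_integral_le_lintegral_enorm _).trans ?_
    rw [lintegral_smul_measure, smul_eq_mul]
    gcongr 1
    exact setLIntegral_mono' mE h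
  have hEbox : m ⁻¹' E ⊆ Set.Icc (-(0.38 * r)) (0.38 * r) ×ˢ Set.Icc (-(0.38 * r)) (0.38 * r) := by
    intro z hz
    have h := (memE _).1 hz
    rw [mre, mim] at h
    constructor
    · exact abs_le.1 (abs_le_of_sq_le_sq (by nlinarith [sq_nonneg z.2]) (by positivity))
    · exact abs_le.1 (abs_le_of_sq_le_sq (by nlinarith [sq_nonneg z.1]) (by positivity))
  have kap : (volume E)⁻¹ * ENNReal.ofReal (2 * (0.38 * r)) =
      ENNReal.ofReal (2 / (π * (0.38 * r))) := by
    rw [volE, ← ENNReal.ofReal_inv_of_pos (by positivity), ← ENNReal.ofReal_mul (by positivity)]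
    congr 1
    field_simp
  set κ := ENNReal.ofReal (2 / (π * (0.38 * r))) with hκ
  have avB : (volume E)⁻¹ * ∫⁻ w in E, B w.re ≤ κ * β := by
    rw [← kap, mul_assoc]
    gcongr
    refine (hm.setLIntegral_comp_preimage mE (mB.comp Complex.measurable_re)).symm.le.trans ?_
    exact (avg_est B mB _ _ hEbox).1
  have avA : (volume E)⁻¹ * ∫⁻ w in E, A w.im ≤ κ * α := by
    rw [← kap, mul_assoc]
    gcongr
    refine (hm.setLIntegral_comp_preimage mE (mA.comp Complex.measurable_im)).symm.le.trans ?_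
    exact (avg_est A mA _ _ hEbox).2
  have avC : ∀ k : ℝ≥0∞, (volume E)⁻¹ * ∫⁻ w in E, k = k := by
    intro k
    rw [setLIntegral_const, mul_comm k, ← mul_assoc, ENNReal.inv_mul_cancel volE0 volET, one_mul]
  have pt1 : ∀ z ∈ S, ‖f z - c‖ₑ ≤ A z.im + κ * β := by
    rintro ⟨x, y⟩ ⟨hz, h1, h2⟩
    have hz' := (memD _).1 hz
    simp only at h1 h2 hz' ⊢
    refine (avg (f ⟨x, y⟩) (fun w => A y + B w.re) ?_).trans ?_
    · rintro ⟨x', y'⟩ hw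
      have hw' := (memE _).1 hw
      simp only at hw' ⊢
      have : f ⟨x, y⟩ - f ⟨x', y'⟩ = (f ⟨x, y⟩ - f ⟨x', y⟩) + (f ⟨x', y⟩ - f ⟨x', y'⟩) := by ring
      rw [this]
      refine (enorm_add_le _ _).trans (add_le_add (hor _ _ _ hz' ?_) (ver _ _ _ ?_ ?_)) <;>
        nlinarith [sq_nonneg x', sq_nonneg y', sq_pos_of_pos hr]
    · rw [lintegral_add_left measurable_const, mul_add, avC]
      gcongr
  have pt2 : ∀ z ∈ S, ‖f z - c‖ₑ ≤ B z.re + κ * α := by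
    rintro ⟨x, y⟩ ⟨hz, h1, h2⟩
    have hz' := (memD _).1 hz
    simp only at h1 h2 hz' ⊢
    refine (avg (f ⟨x, y⟩) (fun w => B x + A w.im) ?_).trans ?_
    · rintro ⟨x', y'⟩ hw
      have hw' := (memE _).1 hw
      simp only at hw' ⊢
      have : f ⟨x, y⟩ - f ⟨x', y'⟩ = (f ⟨x, y⟩ - f ⟨x, y'⟩) + (f ⟨x, y'⟩ - f ⟨x', y'⟩) := by ring
      rw [this]
      refine (enorm_add_le _ _).trans (add_le_add (ver _ _ _ hz' ?_) (hor _ _ _ ?_ ?_)) <;>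
        nlinarith [sq_nonneg x', sq_nonneg y', sq_pos_of_pos hr]
    · rw [lintegral_add_left measurable_const, mul_add, avC]
      gcongr
  have hSbox : m ⁻¹' S ⊆ Set.Icc (-(0.925 * r)) (0.925 * r) ×ˢ Set.Icc (-(0.925 * r)) (0.925 * r) := by
    rintro z ⟨-, h1, h2⟩
    rw [mre] at h1
    rw [mim] at h2
    constructor
    · exact abs_le.1 (abs_le_of_sq_le_sq (by nlinarith [sq_nonneg r]) (by positivity))
    · exact abs_le.1 (abs_le_of_sq_le_sq (by nlinarith [sq_nonneg r]) (by positivity))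
  have volS : volume (m ⁻¹' S) ≤ ENNReal.ofReal (π * r^2) := by
    rw [hm.measure_preimage mS.nullMeasurableSet]
    refine (measure_mono Set.inter_subset_left).trans ?_
    rw [hD, Complex.volume_ball, ENNReal.ofReal_mul pi_pos.le, mul_comm,
      ENNReal.ofReal_pow (by positivity)]
    rw [← NNReal.coe_real_pi, ENNReal.ofReal_coe_nnreal]
  calc ∫⁻ z in S, ‖f z - c‖ₑ ^ 2
      ≤ ∫⁻ z in S, (A z.im + κ * β) * (B z.re + κ * α) := by
        refine setLIntegral_mono' mS fun z hz => ?_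
        rw [sq]
        exact mul_le_mul' (pt1 z hz) (pt2 z hz)
    _ = ∫⁻ z in m ⁻¹' S, (A z.2 + κ * β) * (B z.1 + κ * α) := by
        exact (hm.setLIntegral_comp_preimage mS
          (((mA.comp Complex.measurable_im).add_const (κ * β)).mul
          ((mB.comp Complex.measurable_re).add_const (κ * α)))).symm
    _ ≤ _ := box_est p q mp mq A B hA hB _ _ (0.925 * r) _ hSbox
    _ ≤ α * β + κ * α * (ENNReal.ofReal (2 * (0.925 * r)) * α)
       + κ * β * (ENNReal.ofReal (2 * (0.925 * r)) * β)
       + κ * β * (κ * α) * ENNReal.ofReal (π * r^2) := by gcongr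
    _ ≤ _ := by
        have hle : α.toReal + β.toReal ≤ √2 * G.toReal := by
          rw [← ENNReal.toReal_add fα fβ]
          have := ENNReal.toReal_mono hfin2 hαβ
          rwa [ENNReal.toReal_mul, ENNReal.toReal_ofReal (by positivity)] at this
        have := real_est r α.toReal β.toReal G.toReal hr ENNReal.toReal_nonneg
          ENNReal.toReal_nonneg hle
        refine le_trans (le_of_eq ?_) (ENNReal.ofReal_le_ofReal this)
        have k0 : 0 ≤ 2 / (π * (0.38 * r)) := by positivity
        have a0 : 0 ≤ α.toReal := ENNReal.toReal_nonneg
        have b0 : 0 ≤ β.toReal := ENNReal.toReal_nonneg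
        have pr : 0 ≤ π * r^2 := by positivity
        have r0 : 0 ≤ 2 * (0.925 * r) := by positivity
        set k := 2 / (π * (0.38 * r))
        set d := 2 * (0.925 * r)
        set P := π * r^2
        rw [ENNReal.ofReal_add (by positivity) (by positivity),
          ENNReal.ofReal_add (by positivity) (by positivity),
          ENNReal.ofReal_add (by positivity) (by positivity)]
        rw [ENNReal.ofReal_mul (by positivity : 0 ≤ k * β.toReal * (k * α.toReal)),
          ENNReal.ofReal_mul (by positivity : 0 ≤ k * β.toReal),
          ENNReal.ofReal_mul (by positivity : 0 ≤ k * α.toReal),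
          ENNReal.ofReal_mul (by positivity : 0 ≤ k * β.toReal),
          ENNReal.ofReal_mul k0, ENNReal.ofReal_mul k0, ENNReal.ofReal_mul r0, ENNReal.ofReal_mul r0,
          ENNReal.ofReal_mul a0, ENNReal.ofReal_toReal fα, ENNReal.ofReal_toReal fβ]

lemma rot_est (z₀ ω : ℂ) (hω : ‖ω‖ = 1) (f : ℂ → ℝ) (U : Set ℂ) (hU : IsOpen U) (r : ℝ)
    (hr : 0 < r) (hUr : closedBall z₀ r ⊆ U) (hf : ContDiffOn ℝ 1 f U) (c : ℝ)
    (hc : c = ⨍ w in ball z₀ (0.38 * r), f w)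
    (hfin : ∫⁻ z in ball z₀ r, ‖fderiv ℝ f z‖ₑ ≠ ∞) :
    ∫⁻ z in ball z₀ r ∩ {z | (ω⁻¹ * (z - z₀)).re^2 ≤ 0.8556 * r^2 ∧
        (ω⁻¹ * (z - z₀)).im^2 ≤ 0.8556 * r^2}, ‖f z - c‖ₑ ^ 2
      ≤ ENNReal.ofReal (8.1 * (∫⁻ z in ball z₀ r, ‖fderiv ℝ f z‖ₑ).toReal ^ 2) := by
  have hω0 : ω ≠ 0 := by rintro rfl; simp at hω
  set T : ℂ ≃ₜ ℂ := (Homeomorph.mulLeft₀ ω hω0).trans (Homeomorph.addLeft z₀) with hT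
  have Tz : ∀ z, T z = z₀ + ω * z := fun z => rfl
  have hTm : MeasurePreserving T volume volume := by
    have h1 := (rotation ⟨ω, by simp [Submonoid.unitSphere, hω]⟩).measurePreserving
    exact (measurePreserving_add_left volume z₀).comp h1
  have hemb : MeasurableEmbedding T := T.measurableEmbedding
  have pre : ∀ ρ, T ⁻¹' (ball z₀ ρ) = ball 0 ρ := by
    intro ρ; ext z; simp [Tz, hω]
  have hd : ∀ z, HasFDerivAt (T : ℂ → ℂ) (ω • ContinuousLinearMap.id ℝ ℂ) z := by
    intro z
    have h := ((hasFDerivAt_id (𝕜 := ℝ) z).const_smul ω).const_add z₀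
    exact h
  have hTU : ContDiff ℝ 1 (T : ℂ → ℂ) := by
    have : (T : ℂ → ℂ) = fun z => z₀ + ω * z := rfl
    rw [this]; fun_prop
  have hball : ball z₀ r ⊆ U := ball_subset_closedBall.trans hUr
  have hder : ∀ z ∈ ball (0:ℂ) r, ‖fderiv ℝ (f ∘ T) z‖ₑ ≤ ‖fderiv ℝ f (T z)‖ₑ := by
    intro z hz
    rw [← pre] at hz
    have h1 : HasFDerivAt f (fderiv ℝ f (T z)) (T z) :=
      ((hf.differentiableOn one_ne_zero).differentiableAt
        (hU.mem_nhds (hball hz))).hasFDerivAt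
    rw [(h1.comp z (hd z)).fderiv, ← ofReal_norm, ← ofReal_norm]
    apply ENNReal.ofReal_le_ofReal
    refine (ContinuousLinearMap.opNorm_comp_le _ _).trans ?_
    have : ‖ω • ContinuousLinearMap.id ℝ ℂ‖ ≤ 1 := by
      rw [norm_smul, hω, one_mul]; exact ContinuousLinearMap.norm_id_le
    exact mul_le_of_le_one_right (norm_nonneg _) this
  have hG : ∫⁻ z in ball (0:ℂ) r, ‖fderiv ℝ (f ∘ T) z‖ₑ ≤ ∫⁻ z in ball z₀ r, ‖fderiv ℝ f z‖ₑ := by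
    refine (setLIntegral_mono' measurableSet_ball hder).trans ?_
    rw [← pre]
    exact (hTm.setLIntegral_comp_preimage measurableSet_ball (measurable_fderiv ℝ f).enorm).le
  have hc' : c = ⨍ w in ball (0:ℂ) (0.38 * r), (f ∘ T) w := by
    rw [hc, setAverage_eq, setAverage_eq, ← pre]
    have h1 := hTm.setIntegral_preimage_emb hemb f (ball z₀ (0.38 * r))
    have h2 : volume.real (T ⁻¹' ball z₀ (0.38 * r)) = volume.real (ball z₀ (0.38 * r)) := by
      rw [Measure.real, Measure.real, hTm.measure_preimage measurableSet_ball.nullMeasurableSet]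
    simp only [Function.comp_apply]
    rw [h1, h2]
  have main := core (f ∘ T) (T ⁻¹' U) (hU.preimage T.continuous) r hr (by
      intro z hz
      apply hUr
      simpa [Tz, hω] using hz) (hf.comp hTU.contDiffOn (fun z hz => hz)) c hc'
      (ne_top_of_le_ne_top hfin hG)
  refine le_trans (le_of_eq ?_) (main.trans (ENNReal.ofReal_le_ofReal ?_))
  · rw [← hTm.setLIntegral_comp_preimage_emb hemb, Set.preimage_inter, pre]
    congr 3
    ext z
    have hz : ω⁻¹ * (T z - z₀) = z := by rw [Tz, add_sub_cancel_left, inv_mul_cancel_left₀ hω0]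
    simp only [Set.mem_preimage, Set.mem_ofPred_eq, hz]
  · gcongr

/-- Poincaré–Sobolev inequality in the critical case p = 1, q = 2 on a disc:
for `f` of class `C¹` on a neighborhood of the closed disc `D(z₀,r)` with
integrable gradient norm, the `L²`-norm of `f` minus its mean value over the disc
is bounded by `(3√(π³)/4)` times the `L¹`-norm of the gradient. -/
theorem poincare_sobolev_critical_disc
    (z₀ : ℂ) (r : ℝ) (hr : 0 < r) (f : ℂ → ℝ)
    (U : Set ℂ) (hU : IsOpen U) (hUr : Metric.closedBall z₀ r ⊆ U)
    (hf : ContDiffOn ℝ 1 f U)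
    (hgrad : IntegrableOn (fun z => ‖fderiv ℝ f z‖) (Metric.ball z₀ r)) :
    (∫⁻ z in Metric.ball z₀ r,
        ENNReal.ofReal ((f z - ⨍ w in Metric.ball z₀ r, f w) ^ 2)) ^ (1/2 : ℝ)
      ≤ ENNReal.ofReal
          (3 * Real.sqrt (π ^ 3) / 4 * ∫ z in Metric.ball z₀ r, ‖fderiv ℝ f z‖) := by
  set c := ⨍ w in ball z₀ (0.38 * r), f w with hc
  set D := ball z₀ r with hD
  have hfin : ∫⁻ z in D, ‖fderiv ℝ f z‖ₑ ≠ ∞ := by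
    have := hgrad.hasFiniteIntegral
    simpa [HasFiniteIntegral] using this.ne
  have hGe : ∫ z in D, ‖fderiv ℝ f z‖ = (∫⁻ z in D, ‖fderiv ℝ f z‖ₑ).toReal :=
    integral_norm_eq_lintegral_enorm (measurable_fderiv ℝ f).aestronglyMeasurable
  rw [hGe]
  set G := (∫⁻ z in D, ‖fderiv ℝ f z‖ₑ).toReal with hG
  have hG0 : 0 ≤ G := ENNReal.toReal_nonneg
  set ω : ℂ := ⟨√2 / 2, √2 / 2⟩ with hω
  have s2 : √2 ^ 2 = 2 := Real.sq_sqrt (by norm_num)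
  have nω2 : Complex.normSq ω = 1 := by
    rw [Complex.normSq_apply]; simp only [hω]; nlinarith
  have nω : ‖ω‖ = 1 := by
    rw [Complex.norm_def, nω2, Real.sqrt_one]
  have e1 := rot_est z₀ 1 (by simp) f U hU r hr hUr hf c hc hfin
  have e2 := rot_est z₀ ω nω f U hU r hr hUr hf c hc hfin
  have hcov : D ⊆ (D ∩ {z | ((1:ℂ)⁻¹ * (z - z₀)).re^2 ≤ 0.8556 * r^2 ∧
        ((1:ℂ)⁻¹ * (z - z₀)).im^2 ≤ 0.8556 * r^2}) ∪
      (D ∩ {z | (ω⁻¹ * (z - z₀)).re^2 ≤ 0.8556 * r^2 ∧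
        (ω⁻¹ * (z - z₀)).im^2 ≤ 0.8556 * r^2}) := by
    intro z hz
    by_cases h : (z - z₀).re^2 ≤ 0.8556 * r^2 ∧ (z - z₀).im^2 ≤ 0.8556 * r^2
    · left; refine ⟨hz, ?_⟩; simpa using h
    · right; refine ⟨hz, ?_⟩
      have hn : (z - z₀).re^2 + (z - z₀).im^2 ≤ r^2 := by
        have h1 : ‖z - z₀‖ ≤ r := by
          rw [← dist_eq_norm]; exact (mem_ball.1 hz).le
        have h2 : ‖z - z₀‖^2 ≤ r^2 := by gcongr
        rw [Complex.sq_norm, Complex.normSq_apply] at h2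
        linarith
      have := cover _ _ r hn h
      have inv : ω⁻¹ = ⟨√2 / 2, -(√2 / 2)⟩ := by
        rw [Complex.inv_def, nω2]; simp [hω]; rfl
      rw [Set.mem_ofPred_eq, inv, Complex.mul_re, Complex.mul_im]
      simp only
      constructor
      · convert this.1 using 1; linear_combination ((z - z₀).re + (z - z₀).im)^2 / 4 * s2
      · convert this.2 using 1; linear_combination ((z - z₀).im - (z - z₀).re)^2 / 4 * s2
  have hcb : ∫⁻ z in D, ‖f z - c‖ₑ ^ 2 ≤ ENNReal.ofReal (16.2 * G^2) := by
    refine (lintegral_mono_set hcov).trans ((lintegral_union_le _ _ _).trans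
      ((add_le_add e1 e2).trans (le_of_eq ?_)))
    rw [← ENNReal.ofReal_add (by positivity) (by positivity)]
    congr 1; ring
  -- passing from `c` to the mean
  have hvar : ∫⁻ z in D, ENNReal.ofReal ((f z - ⨍ w in D, f w) ^ 2) ≤
      ∫⁻ z in D, ‖f z - c‖ₑ ^ 2 := by
    have e : ∀ z, ‖f z - c‖ₑ ^ 2 = ENNReal.ofReal ((f z - c)^2) := by
      intro z
      rw [← ofReal_norm, ← ENNReal.ofReal_pow (norm_nonneg _), Real.norm_eq_abs, sq_abs]
    simp_rw [e]
    have fcont : ContinuousOn f (closedBall z₀ r) := hf.continuousOn.mono hUr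
    have io : ∀ g : ℂ → ℝ, ContinuousOn g (closedBall z₀ r) → IntegrableOn g D := fun g hg =>
      (hg.integrableOn_compact (isCompact_closedBall _ _)).mono_set ball_subset_closedBall
    have i1 := io f fcont
    set μ := ⨍ w in D, f w with hμ
    have vpos : 0 < volume.real D :=
      ENNReal.toReal_pos (measure_ball_pos _ _ hr).ne' measure_ball_lt_top.ne
    have hμ' : ∫ z in D, f z = volume.real D * μ := by
      rw [hμ, setAverage_eq, smul_eq_mul]; field_simp
    have iμ := io (fun z => (f z - μ)^2) (by fun_prop)
    have ic := io (fun z => (f z - c)^2) (by fun_prop)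
    rw [← ofReal_integral_eq_lintegral_ofReal iμ (ae_of_all _ fun z => sq_nonneg _),
      ← ofReal_integral_eq_lintegral_ofReal ic (ae_of_all _ fun z => sq_nonneg _)]
    apply ENNReal.ofReal_le_ofReal
    have hfinD : IsFiniteMeasure (volume.restrict D) := ⟨by simpa using measure_ball_lt_top⟩
    have : ∫ z in D, (f z - c)^2 = ∫ z in D, ((f z - μ)^2 + (2 * (μ - c) * f z + (c^2 - μ^2))) := by
      congr 1; ext z; ring
    rw [this, integral_add iμ (io (fun z => 2 * (μ - c) * f z + (c^2 - μ^2)) (by fun_prop)),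
      integral_add (i1.const_mul _) (integrable_const _), integral_const_mul, hμ',
      integral_const, smul_eq_mul, measureReal_restrict_apply_univ]
    nlinarith [mul_nonneg vpos.le (sq_nonneg (μ - c))]
  have hfinal := hvar.trans hcb
  have hpi : 3.14 < π := Real.pi_gt_d2
  calc _ ≤ (ENNReal.ofReal (16.2 * G^2)) ^ (1/2 : ℝ) := by gcongr
    _ ≤ (ENNReal.ofReal ((3 * √(π^3) / 4 * G)^2)) ^ (1/2 : ℝ) := by
      gcongr
      rw [mul_pow]
      gcongr
      rw [div_pow, mul_pow, Real.sq_sqrt (by positivity)]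
      have : (3.14:ℝ)^3 ≤ π^3 := by gcongr
      norm_num at this ⊢
      linarith
    _ = _ := by
      rw [ENNReal.ofReal_rpow_of_nonneg (by positivity) (by norm_num), ← Real.sqrt_eq_rpow,
        Real.sqrt_sq (by positivity)]
end

section
/- Let Ω, Ω′ ⊂ ℂ be planar domains and let φ : Ω → Ω′ be a C¹ K-quasiconformal homeomorphism. Then for every disc D(z₀,r) with D(z₀,2r) ⊂ Ω, the weak inverse Hölder inequality ((1/|D(z₀,r)|) ∬_{D(z₀,r)} ‖Dφ(z)‖² dxdy)^{1/2} ≤ (24π²K/|D(z₀,2r)|) ∬_{D(z₀,2r)} ‖Dφ(z)‖ dxdy holds. -/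
open MeasureTheory Metric Real
open scoped ENNReal NNReal

/-- A `C¹` `K`-quasiconformal homeomorphism of a planar domain `Ω` onto `Ω′`:
a `C¹` homeomorphism whose Jacobian determinant is everywhere positive on `Ω`
and whose differential satisfies `‖Dφ(z)‖² ≤ K·J(z,φ)` on `Ω`. -/
def IsC1QCHomeoOn (K : ℝ) (φ : ℂ → ℂ) (Ω Ω' : Set ℂ) : Prop :=
  IsOpen Ω ∧ IsConnected Ω ∧ IsOpen Ω' ∧ IsConnected Ω' ∧
  ContDiffOn ℝ 1 φ Ω ∧ Set.InjOn φ Ω ∧ φ '' Ω = Ω' ∧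
  ∀ z ∈ Ω, 0 < (fderiv ℝ φ z).det ∧ ‖fderiv ℝ φ z‖ ^ 2 ≤ K * (fderiv ℝ φ z).det

lemma wih_max (φ : ℂ → ℂ) (z₀ : ℂ) (s : ℝ) (hs : 0 < s)
    (hd : ∀ z ∈ closedBall z₀ s, ContDiffAt ℝ 1 φ z ∧ (fderiv ℝ φ z).det ≠ 0)
    (p : ℂ) (L : ℝ) (hL : ∀ z ∈ sphere z₀ s, dist (φ z) p ≤ L) :
    ∀ z ∈ closedBall z₀ s, dist (φ z) p ≤ L := by
  have hc : ContinuousOn (fun z => dist (φ z) p) (closedBall z₀ s) := fun z hz =>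
    Filter.Tendsto.dist (hd z hz).1.continuousAt.continuousWithinAt tendsto_const_nhds
  obtain ⟨m, hm, hmax⟩ := (isCompact_closedBall z₀ s).exists_isMaxOn
    ⟨z₀, mem_closedBall_self hs.le⟩ hc
  intro z hz
  refine (hmax hz).trans ?_
  change dist (φ m) p ≤ L
  by_cases hms : m ∈ sphere z₀ s
  · exact hL m hms
  exfalso
  have hmb : m ∈ ball z₀ s := by
    rw [mem_ball]; exact lt_of_le_of_ne hm hms
  have hst : HasStrictFDerivAt φ
      (((fderiv ℝ φ m).toContinuousLinearEquivOfDetNeZero (hd m hm).2 : ℂ ≃L[ℝ] ℂ) : ℂ →L[ℝ] ℂ) m := by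
    rw [ContinuousLinearMap.coe_toContinuousLinearEquivOfDetNeZero]
    exact (hd m hm).1.hasStrictFDerivAt one_ne_zero
  have hmap := hst.map_nhds_eq_of_equiv
  have h1 : ∀ᶠ w in nhds (φ m), dist w p ≤ dist (φ m) p := by
    rw [← hmap, Filter.eventually_map]
    filter_upwards [isOpen_ball.mem_nhds hmb] with w hw
    exact hmax (ball_subset_closedBall hw)
  -- move radially
  obtain ⟨v, hv, hv2⟩ : ∃ v : ℂ, v ≠ 0 ∧ ∀ t : ℝ, 0 < t → dist (φ m) p < dist (φ m + t * v) p := by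
    by_cases h : φ m = p
    · refine ⟨1, one_ne_zero, fun t ht => ?_⟩
      rw [h]; simp [dist_eq_norm, ht.ne']
    · refine ⟨φ m - p, sub_ne_zero.2 h, fun t ht => ?_⟩
      rw [dist_eq_norm, dist_eq_norm]
      have : φ m + t * (φ m - p) - p = ((1 + t : ℝ) : ℂ) * (φ m - p) := by push_cast; ring
      rw [this, norm_mul, Complex.norm_real, Real.norm_of_nonneg (by linarith)]
      have : 0 < ‖φ m - p‖ := norm_pos_iff.2 (sub_ne_zero.2 h)
      nlinarith
  have ht : Filter.Tendsto (fun t : ℝ => φ m + t * v) (nhdsWithin 0 (Set.Ioi 0)) (nhds (φ m)) := by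
    have : Continuous (fun t : ℝ => φ m + t * v) := by fun_prop
    have h2 := this.tendsto 0
    simp only [Complex.ofReal_zero, zero_mul, add_zero] at h2
    exact h2.mono_left nhdsWithin_le_nhds
  obtain ⟨t, ht1, ht2⟩ := ((ht.eventually h1).and self_mem_nhdsWithin).exists
  exact absurd ht1 (not_le.2 (hv2 t ht2))

lemma wih_len (φ : ℂ → ℂ) (z₀ : ℂ) (s : ℝ) (hs : 0 < s)
    (hd : ∀ z ∈ closedBall z₀ s, ContDiffAt ℝ 1 φ z) (θ : ℝ) (hθ : θ ∈ Set.Icc (-π) π) :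
    ‖φ (circleMap z₀ s θ) - φ (circleMap z₀ s (-π))‖ₑ ≤
      ∫⁻ t in Set.Ioo (-π) π, ENNReal.ofReal s * (‖fderiv ℝ φ (circleMap z₀ s t)‖₊ : ℝ≥0∞) := by
  have hmem : ∀ t, circleMap z₀ s t ∈ closedBall z₀ s := fun t =>
    circleMap_mem_closedBall z₀ hs.le t
  have hC : ContDiffOn ℝ 1 (fun t => φ (circleMap z₀ s t)) (Set.Icc (-π) θ) := fun t _ =>
    ((hd _ (hmem t)).comp t (contDiff_circleMap z₀ s).contDiffAt).contDiffWithinAt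
  refine (enorm_sub_le_lintegral_deriv_of_contDiffOn_Icc hC hθ.1).trans ?_
  rw [restrict_Ioo_eq_restrict_Icc]
  refine (lintegral_mono_set (Set.Icc_subset_Icc_right hθ.2)).trans ?_
  refine lintegral_mono fun t => ?_
  have h1 : HasDerivAt (fun t => φ (circleMap z₀ s t))
      (fderiv ℝ φ (circleMap z₀ s t) (circleMap 0 s t * Complex.I)) t :=
    (((hd _ (hmem t)).differentiableAt one_ne_zero).hasFDerivAt).comp_hasDerivAt t
      (hasDerivAt_circleMap z₀ s t)
  simp only
  rw [h1.deriv]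
  have h2 : ‖fderiv ℝ φ (circleMap z₀ s t) (circleMap 0 s t * Complex.I)‖
      ≤ s * ‖fderiv ℝ φ (circleMap z₀ s t)‖ := by
    refine (ContinuousLinearMap.le_opNorm _ _).trans (le_of_eq ?_)
    simp [abs_of_pos hs, mul_comm]
  rw [← ofReal_norm, ← enorm_eq_nnnorm, ← ofReal_norm,
    ← ENNReal.ofReal_mul hs.le]
  exact ENNReal.ofReal_le_ofReal h2

lemma wih_polar (g : ℂ → ℝ≥0∞) (hg : Measurable g) (z₀ : ℂ) (r : ℝ) (hr : 0 < r) :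
    ∫⁻ s in Set.Ioo r (2 * r), ∫⁻ t in Set.Ioo (-π) π, ENNReal.ofReal s * g (circleMap z₀ s t)
      ≤ ∫⁻ z in ball z₀ (2 * r), g z := by
  have hm : Measurable (fun p : ℝ × ℝ => ENNReal.ofReal p.1 * g (circleMap z₀ p.1 p.2)) := by
    have : Continuous (fun p : ℝ × ℝ => circleMap z₀ p.1 p.2) := by
      unfold circleMap; fun_prop
    exact (ENNReal.measurable_ofReal.comp measurable_fst).mul (hg.comp this.measurable)
  rw [← setLIntegral_prod (μ := volume) (ν := volume)
    (fun p : ℝ × ℝ => ENNReal.ofReal p.1 * g (circleMap z₀ p.1 p.2)) hm.aemeasurable]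
  rw [← lintegral_indicator measurableSet_ball, ← lintegral_add_left_eq_self _ z₀,
    ← Complex.lintegral_comp_polarCoord_symm, polarCoord_target]
  have hsub : Set.Ioo r (2 * r) ×ˢ Set.Ioo (-π) π ⊆ Set.Ioi (0:ℝ) ×ˢ Set.Ioo (-π) π :=
    Set.prod_mono (fun x hx => hr.trans hx.1) le_rfl
  refine le_trans (le_of_eq ?_) (lintegral_mono_set hsub)
  refine setLIntegral_congr_fun (measurableSet_Ioo.prod measurableSet_Ioo) fun p hp => ?_
  have h1 : z₀ + Complex.polarCoord.symm p = circleMap z₀ p.1 p.2 := by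
    rw [Complex.polarCoord_symm_apply, circleMap, Complex.exp_mul_I]; simp
  have h2 : circleMap z₀ p.1 p.2 ∈ ball z₀ (2 * r) := by
    have h3 : 0 < p.1 := hr.trans hp.1.1
    rw [mem_ball, dist_eq_norm, circleMap_sub_center, norm_circleMap_zero, abs_of_pos h3]
    exact hp.1.2
  simp only [h1, Set.indicator_of_mem h2, smul_eq_mul]

lemma wih_arith (X A I : ℝ≥0∞) (K r : ℝ) (hK : 1 ≤ K) (hr : 0 < r)
    (h : ENNReal.ofReal r * A ≤ I) (hX : X ≤ ENNReal.ofReal (K / r) * A) :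
    X ≤ ENNReal.ofReal (24 * π ^ 2 * K) * (ENNReal.ofReal (2 * r) ^ 2 * NNReal.pi)⁻¹ * I := by
  have hpi : (NNReal.pi : ℝ≥0∞) = ENNReal.ofReal π := by
    rw [← NNReal.coe_real_pi, ENNReal.ofReal_coe_nnreal]
  have h3 := Real.pi_gt_three
  rw [hpi, ← ENNReal.ofReal_pow (by positivity), ← ENNReal.ofReal_mul (by positivity),
    ← ENNReal.ofReal_inv_of_pos (by positivity), ← ENNReal.ofReal_mul (by positivity)]
  refine le_trans ?_ (mul_le_mul_right h _)
  rw [← mul_assoc, ← ENNReal.ofReal_mul (by positivity)]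
  refine hX.trans (mul_le_mul_left (ENNReal.ofReal_le_ofReal ?_) _)
  have : 24 * π ^ 2 * K * ((2 * r) ^ 2 * π)⁻¹ * r = 6 * π * (K / r) := by
    field_simp; ring
  rw [this]
  have : 0 < K / r := by positivity
  nlinarith

lemma wih_arith2 (M L : ℝ≥0∞) (K r : ℝ) (hK : 1 ≤ K) (hr : 0 < r)
    (h : M ≤ ENNReal.ofReal K * (L ^ 2 * NNReal.pi)) :
    ((ENNReal.ofReal r ^ 2 * NNReal.pi)⁻¹ * M) ^ (1/2 : ℝ) ≤ ENNReal.ofReal (K / r) * L := by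
  have hpi : (NNReal.pi : ℝ≥0∞) = ENNReal.ofReal π := by
    rw [← NNReal.coe_real_pi, ENNReal.ofReal_coe_nnreal]
  have h3 := Real.pi_pos
  rw [hpi] at h ⊢
  have key : (ENNReal.ofReal r ^ 2 * ENNReal.ofReal π)⁻¹ * M ≤ (ENNReal.ofReal (K / r) * L) ^ 2 := by
    rw [← ENNReal.ofReal_pow (by positivity), ← ENNReal.ofReal_mul (by positivity),
      ← ENNReal.ofReal_inv_of_pos (by positivity)]
    refine (mul_le_mul_right h _).trans ?_
    rw [mul_comm (L ^ 2), ← mul_assoc, ← mul_assoc, ← ENNReal.ofReal_mul (by positivity),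
      ← ENNReal.ofReal_mul (by positivity), mul_pow, ← ENNReal.ofReal_pow (by positivity)]
    refine mul_le_mul_left (ENNReal.ofReal_le_ofReal ?_) _
    have : (r ^ 2 * π)⁻¹ * K * π = K / r ^ 2 := by field_simp
    rw [this, div_pow]
    gcongr
    nlinarith
  refine (ENNReal.rpow_le_rpow key (by norm_num)).trans (le_of_eq ?_)
  rw [← ENNReal.rpow_natCast, ← ENNReal.rpow_mul]
  norm_num

/-- Weak inverse Hölder inequality for derivatives of a `C¹` `K`-quasiconformal
homeomorphism `φ : Ω → Ω′`: for any disc `D(z₀,r)` with `D(z₀,2r) ⊂ Ω`,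
`((1/|D(z₀,r)|)∬_{D(z₀,r)} ‖Dφ‖²)^{1/2} ≤ (24π²K/|D(z₀,2r)|)∬_{D(z₀,2r)} ‖Dφ‖`. -/
theorem weak_inverse_holder_inequality
    (K : ℝ) (hK : 1 ≤ K) (Ω Ω' : Set ℂ) (φ : ℂ → ℂ)
    (hφ : IsC1QCHomeoOn K φ Ω Ω')
    (z₀ : ℂ) (r : ℝ) (hr : 0 < r) (hball : Metric.ball z₀ (2 * r) ⊆ Ω) :
    ((volume (Metric.ball z₀ r))⁻¹ *
        ∫⁻ z in Metric.ball z₀ r, (‖fderiv ℝ φ z‖₊ : ℝ≥0∞) ^ 2) ^ (1/2 : ℝ)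
      ≤ ENNReal.ofReal (24 * π ^ 2 * K) * (volume (Metric.ball z₀ (2 * r)))⁻¹ *
          ∫⁻ z in Metric.ball z₀ (2 * r), (‖fderiv ℝ φ z‖₊ : ℝ≥0∞) := by
  obtain ⟨hΩ, -, -, -, hC, hinj, -, hqc⟩ := hφ
  rw [Complex.volume_ball, Complex.volume_ball]
  set A : ℝ≥0∞ := ⨅ s ∈ Set.Ioo r (2 * r), ∫⁻ t in Set.Ioo (-π) π,
    ENNReal.ofReal s * (‖fderiv ℝ φ (circleMap z₀ s t)‖₊ : ℝ≥0∞) with hA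
  have hCat : ∀ z ∈ Ω, ContDiffAt ℝ 1 φ z := fun z hz => hC.contDiffAt (hΩ.mem_nhds hz)
  have hmain : ∀ s ∈ Set.Ioo r (2 * r), ((ENNReal.ofReal r ^ 2 * NNReal.pi)⁻¹ *
        ∫⁻ z in Metric.ball z₀ r, (‖fderiv ℝ φ z‖₊ : ℝ≥0∞) ^ 2) ^ (1/2 : ℝ) ≤
      ENNReal.ofReal (K / r) * ∫⁻ t in Set.Ioo (-π) π,
        ENNReal.ofReal s * (‖fderiv ℝ φ (circleMap z₀ s t)‖₊ : ℝ≥0∞) := by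
    intro s hs
    have hs0 : 0 < s := hr.trans hs.1
    have hsub : closedBall z₀ s ⊆ Ω := (closedBall_subset_ball hs.2).trans hball
    apply wih_arith2 _ _ K r hK hr
    have hlen := wih_len φ z₀ s hs0 (fun z hz => hCat z (hsub hz))
    set L := ∫⁻ t in Set.Ioo (-π) π,
        ENNReal.ofReal s * (‖fderiv ℝ φ (circleMap z₀ s t)‖₊ : ℝ≥0∞)
    have hpi : (NNReal.pi : ℝ≥0∞) ≠ 0 := by
      simpa using NNReal.pi_ne_zero
    have hK0 : ENNReal.ofReal K ≠ 0 := by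
      simp; linarith
    by_cases hL : L = ⊤
    · rw [hL]
      simp [ENNReal.top_mul hpi, ENNReal.mul_top hK0]
    have himg : φ '' ball z₀ r ⊆ closedBall (φ (circleMap z₀ s (-π))) L.toReal := by
      rintro _ ⟨z, hz, rfl⟩
      refine wih_max φ z₀ s hs0 (fun z hz => ⟨hCat z (hsub hz), (hqc z (hsub hz)).1.ne'⟩) _ _ ?_ z
        (ball_subset_closedBall (ball_subset_ball hs.1.le hz))
      intro w hw
      obtain ⟨t, ht, rfl⟩ : w ∈ circleMap z₀ s '' Set.Ioc (-π) π := by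
        rw [← abs_of_pos hs0, ← range_circleMap] at hw
        obtain ⟨t, rfl⟩ := hw
        obtain ⟨y, hy, hy2⟩ := (periodic_circleMap z₀ s).exists_mem_Ioc Real.two_pi_pos t (-π)
        refine ⟨y, ⟨hy.1, by linarith [hy.2]⟩, hy2.symm⟩
      have := hlen t ⟨ht.1.le, ht.2⟩
      rw [dist_eq_norm, ← toReal_enorm]
      exact ENNReal.toReal_mono hL this
    have hsubr : ball z₀ r ⊆ Ω := (ball_subset_ball (by linarith)).trans hball
    calc ∫⁻ z in Metric.ball z₀ r, (‖fderiv ℝ φ z‖₊ : ℝ≥0∞) ^ 2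
        ≤ ∫⁻ z in Metric.ball z₀ r, ENNReal.ofReal K * ENNReal.ofReal |(fderiv ℝ φ z).det| := by
          refine setLIntegral_mono' measurableSet_ball fun z hz => ?_
          have := (hqc z (hsubr hz))
          rw [abs_of_pos this.1, ← ENNReal.ofReal_mul (by linarith), ← enorm_eq_nnnorm,
            ← ofReal_norm, ← ENNReal.ofReal_pow (norm_nonneg _)]
          exact ENNReal.ofReal_le_ofReal this.2
      _ = ENNReal.ofReal K * volume (φ '' ball z₀ r) := by
          rw [lintegral_const_mul' _ _ ENNReal.ofReal_ne_top,
            lintegral_abs_det_fderiv_eq_addHaar_image volume measurableSet_ball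
              (fun z hz => ((hCat z (hsubr hz)).differentiableAt
                one_ne_zero).hasFDerivAt.hasFDerivWithinAt) (hinj.mono hsubr)]
      _ ≤ ENNReal.ofReal K * (L ^ 2 * NNReal.pi) := by
          gcongr
          refine (measure_mono himg).trans ?_
          rw [Complex.volume_closedBall, ENNReal.ofReal_toReal hL]
  refine wih_arith _ A _ K r hK hr ?_ ?_
  · refine le_trans ?_ (wih_polar (fun z => (‖fderiv ℝ φ z‖₊ : ℝ≥0∞))
      (measurable_fderiv ℝ φ).nnnorm.coe_nnreal_ennreal z₀ r hr)
    have : ENNReal.ofReal r * A = ∫⁻ s in Set.Ioo r (2 * r), A := by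
      rw [setLIntegral_const, Real.volume_Ioo, mul_comm]; congr 2; ring
    rw [this]
    exact setLIntegral_mono' measurableSet_Ioo fun s hs => iInf₂_le s hs
  · have hc0 : ENNReal.ofReal (K / r) ≠ 0 := by
      have : 0 < K / r := by positivity
      simpa using this
    rw [hA, mul_comm (ENNReal.ofReal (K / r)), ← ENNReal.div_le_iff_le_mul (Or.inl hc0) (Or.inl ENNReal.ofReal_ne_top)]
    refine le_iInf₂ fun s hs => ?_
    rw [ENNReal.div_le_iff_le_mul (Or.inl hc0) (Or.inl ENNReal.ofReal_ne_top), mul_comm _ (ENNReal.ofReal (K / r))]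
    exact hmain s hs
end

section
/- Let Ω, Ω′ ⊂ ℂ be planar domains and let φ : Ω → Ω′ be a C¹ K-quasiconformal homeomorphism. Then for every disc D(z₀,r) with D(z₀,2r) ⊂ Ω and every σ > 2 such that ν := 10^{4σ}·((σ−2)/(σ−1))·(24π²K)^σ < 1, the inequality ((1/|D(z₀,r)|) ∬_{D(z₀,r)} ‖Dφ(z)‖^σ dxdy)^{1/σ} ≤ C_σ · ((1/|D(z₀,2r)|) ∬_{D(z₀,2r)} ‖Dφ(z)‖² dxdy)^{1/2} holds with C_σ = 10⁶/[(σ−1)(1−ν)]^{1/σ}. -/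
open MeasureTheory Metric Real
open scoped ENNReal NNReal

lemma aux_max {φ : ℂ → ℂ} {Ω : Set ℂ} (hΩ : IsOpen Ω) (hd : ContDiffOn ℝ 1 φ Ω)
    (hdet : ∀ z ∈ Ω, 0 < (fderiv ℝ φ z).det) {x : ℂ} {s : ℝ} (hs : 0 < s)
    (hsub : closedBall x s ⊆ Ω) {w : ℂ} {R : ℝ}
    (hR : ∀ p ∈ sphere x s, dist (φ p) w ≤ R) :
    ∀ y ∈ closedBall x s, dist (φ y) w ≤ R := by
  have hc : ContinuousOn (fun y => dist (φ y) w) (closedBall x s) :=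
    (continuous_id.dist continuous_const).comp_continuousOn (hd.continuousOn.mono hsub)
  obtain ⟨y0, hy0, hmax⟩ := (isCompact_closedBall x s).exists_isMaxOn
    ⟨x, mem_closedBall_self hs.le⟩ hc
  suffices h : y0 ∈ sphere x s from fun y hy => (hmax hy).trans (hR _ h)
  by_contra hns
  have hb : y0 ∈ ball x s := by
    rw [← ball_union_sphere] at hy0
    exact hy0.resolve_right hns
  have hat : ContDiffAt ℝ 1 φ y0 := hd.contDiffAt (hΩ.mem_nhds (hsub hy0))
  have hst : HasStrictFDerivAt φ (fderiv ℝ φ y0) y0 := hat.hasStrictFDerivAt one_ne_zero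
  have hsurj : (fderiv ℝ φ y0).range = ⊤ := by
    have h0 := (hdet y0 (hsub hy0)).ne'
    have hu : IsUnit (LinearMap.det ((fderiv ℝ φ y0 : ℂ →L[ℝ] ℂ) : ℂ →ₗ[ℝ] ℂ)) :=
      isUnit_iff_ne_zero.2 h0
    have := LinearMap.equivOfDetNeZero ((fderiv ℝ φ y0 : ℂ →L[ℝ] ℂ) : ℂ →ₗ[ℝ] ℂ) h0
    exact LinearMap.range_eq_top.2 ((LinearMap.equivOfDetNeZero _ h0).surjective)
  have hmap := hst.map_nhds_eq_of_surj hsurj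
  have h1 : closedBall w (dist (φ y0) w) ∈ nhds (φ y0) := by
    rw [← hmap, Filter.mem_map]
    filter_upwards [isOpen_ball.mem_nhds hb] with y hy
    exact hmax (ball_subset_closedBall hy)
  have h2 := mem_interior_iff_mem_nhds.2 h1
  rw [interior_closedBall'] at h2
  exact lt_irrefl _ (mem_ball.1 h2)

lemma aux_len {φ : ℂ → ℂ} {Ω : Set ℂ} (hΩ : IsOpen Ω) (hd : ContDiffOn ℝ 1 φ Ω)
    {x : ℂ} {s : ℝ} (hs : 0 < s)
    (hsub : closedBall x s ⊆ Ω) :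
    ∀ p ∈ sphere x s, edist (φ p) (φ (x + Complex.polarCoord.symm (s, -π))) ≤
      ∫⁻ θ in Set.Ioo (-π) π, ENNReal.ofReal s *
        (‖fderiv ℝ φ (x + Complex.polarCoord.symm (s, θ))‖₊ : ℝ≥0∞) := by
  intro p hp
  set c : ℝ → ℂ := fun θ => x + Complex.polarCoord.symm (s, θ) with hc
  have hc' : c = fun θ : ℝ => x + s * Complex.exp (θ * Complex.I) := by
    funext θ
    simp [hc, Complex.polarCoord_symm_apply, Complex.exp_mul_I]
  have hder : ∀ θ : ℝ, HasDerivAt c ((s : ℂ) * (Complex.exp (θ * Complex.I) * Complex.I)) θ := by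
    intro θ
    rw [hc']
    have h1 : HasDerivAt (fun θ : ℝ => ((θ : ℂ) * Complex.I)) (Complex.I) θ := by
      simpa using (Complex.ofRealCLM.hasDerivAt (x := θ)).mul_const Complex.I
    exact (h1.cexp.const_mul (s : ℂ)).const_add x
  have hmem : ∀ θ, c θ ∈ closedBall x s := by
    intro θ
    rw [hc']
    simp [Complex.norm_exp_ofReal_mul_I, abs_of_pos hs]
  have hcd : ContDiff ℝ 1 c := by
    rw [hc']
    have : ContDiff ℝ 1 (fun θ : ℝ => (θ : ℂ)) := Complex.ofRealCLM.contDiff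
    fun_prop
  obtain ⟨θ, hθ, rfl⟩ : ∃ θ ∈ Set.Icc (-π) π, c θ = p := by
    refine ⟨Complex.arg (p - x), ⟨(Complex.neg_pi_lt_arg _).le, Complex.arg_le_pi _⟩, ?_⟩
    rw [hc']
    have : ‖p - x‖ = s := by simpa [dist_eq_norm] using hp
    have h2 := Complex.norm_mul_exp_arg_mul_I (p - x)
    rw [this] at h2
    simp only [h2]; ring
  have hcomp : ContDiff ℝ 1 (φ ∘ c) := by
    rw [contDiff_iff_contDiffAt]
    intro t
    exact (hd.contDiffAt (hΩ.mem_nhds (hsub (hmem t)))).comp t hcd.contDiffAt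
  have h := enorm_sub_le_lintegral_deriv_of_contDiffOn_Icc (f := φ ∘ c) hcomp.contDiffOn hθ.1
  rw [edist_eq_enorm_sub]
  refine h.trans ?_
  rw [← restrict_Ioo_eq_restrict_Icc]
  refine (lintegral_mono_set (Set.Ioo_subset_Ioo_right hθ.2)).trans ?_
  refine lintegral_mono fun t => ?_
  have hD : HasDerivAt (φ ∘ c) (fderiv ℝ φ (c t) (s * (Complex.exp (t * Complex.I) * Complex.I))) t :=
    ((hd.contDiffAt (hΩ.mem_nhds (hsub (hmem t)))).differentiableAt
      one_ne_zero).hasFDerivAt.comp_hasDerivAt t (hder t)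
  rw [hD.deriv]
  have h3 : ‖fderiv ℝ φ (c t) (s * (Complex.exp (t * Complex.I) * Complex.I))‖ ≤
      s * ‖fderiv ℝ φ (c t)‖ := by
    refine (ContinuousLinearMap.le_opNorm _ _).trans ?_
    simp [abs_of_pos hs, mul_comm]
  calc _ = ENNReal.ofReal ‖fderiv ℝ φ (c t) (s * (Complex.exp (t * Complex.I) * Complex.I))‖ :=
        (ofReal_norm _).symm
    _ ≤ ENNReal.ofReal (s * ‖fderiv ℝ φ (c t)‖) := ENNReal.ofReal_le_ofReal h3
    _ = _ := by
      rw [ENNReal.ofReal_mul hs.le, ofReal_norm]; rfl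

lemma aux_vol {φ : ℂ → ℂ} {Ω : Set ℂ} (hΩ : IsOpen Ω) (hd : ContDiffOn ℝ 1 φ Ω)
    (hdet : ∀ z ∈ Ω, 0 < (fderiv ℝ φ z).det) {x : ℂ} {s : ℝ} (hs : 0 < s)
    (hsub : closedBall x s ⊆ Ω) :
    volume (φ '' closedBall x s) ≤ NNReal.pi *
      (∫⁻ θ in Set.Ioo (-π) π, ENNReal.ofReal s *
        (‖fderiv ℝ φ (x + Complex.polarCoord.symm (s, θ))‖₊ : ℝ≥0∞)) ^ 2 := by
  have hl := aux_len hΩ hd hs hsub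
  set L := ∫⁻ θ in Set.Ioo (-π) π, ENNReal.ofReal s *
        (‖fderiv ℝ φ (x + Complex.polarCoord.symm (s, θ))‖₊ : ℝ≥0∞) with hL
  set w := φ (x + Complex.polarCoord.symm (s, -π))
  by_cases htop : L = ⊤
  · rw [htop]; simp [ENNReal.mul_top, NNReal.pi_ne_zero]
  have h1 : φ '' closedBall x s ⊆ closedBall w L.toReal := by
    rintro _ ⟨y, hy, rfl⟩
    refine aux_max hΩ hd hdet hs hsub (R := L.toReal) (fun p hp => ?_) y hy
    rw [dist_edist]
    exact ENNReal.toReal_mono htop (hl p hp)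
  refine (measure_mono h1).trans ?_
  rw [Complex.volume_closedBall, ENNReal.ofReal_toReal htop, mul_comm]

lemma aux_polar (G : ℂ → ℝ≥0∞) (hG : Measurable G) (x : ℂ) {ρ : ℝ} (hρ : 0 < ρ) :
    ∫⁻ s in Set.Ioo ρ (2 * ρ), (∫⁻ θ in Set.Ioo (-π) π, ENNReal.ofReal s *
        G (x + Complex.polarCoord.symm (s, θ))) ≤ ∫⁻ z in closedBall x (2 * ρ), G z := by
  rw [← lintegral_indicator isClosed_closedBall.measurableSet,
    ← lintegral_add_left_eq_self _ x, ← Complex.lintegral_comp_polarCoord_symm]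
  have hsub : Set.Ioo ρ (2 * ρ) ×ˢ Set.Ioo (-π) π ⊆ polarCoord.target := by
    rintro ⟨a, b⟩ ⟨h1, h2⟩
    exact ⟨hρ.trans h1.1, h2⟩
  refine le_trans ?_ (lintegral_mono_set hsub)
  have hm : Measurable fun p : ℝ × ℝ => Complex.polarCoord.symm p := by
    have : (fun p : ℝ × ℝ => Complex.polarCoord.symm p) =
      fun p : ℝ × ℝ => (p.1 : ℂ) * (Real.cos p.2 + Real.sin p.2 * Complex.I) := by
      funext p; rw [Complex.polarCoord_symm_apply]
    rw [this]; fun_prop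
  have hm2 : Measurable fun p : ℝ × ℝ => ENNReal.ofReal p.1 * G (x + Complex.polarCoord.symm p) := by
    fun_prop
  rw [← lintegral_prod (f := fun p : ℝ × ℝ => ENNReal.ofReal p.1 * G (x + Complex.polarCoord.symm p))
    hm2.aemeasurable, Measure.prod_restrict]
  refine setLIntegral_mono' (measurableSet_Ioo.prod measurableSet_Ioo) ?_
  rintro ⟨a, b⟩ ⟨h1, h2⟩
  rw [Set.indicator_of_mem, smul_eq_mul]
  rw [Complex.polarCoord_symm_apply]
  have : ‖Complex.cos b + Complex.sin b * Complex.I‖ = 1 := by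
    rw [← Complex.exp_mul_I, Complex.norm_exp_ofReal_mul_I]
  simp [abs_of_pos (hρ.trans h1.1), this, h1.2.le]

lemma aux_rh {φ : ℂ → ℂ} {Ω : Set ℂ} {K : ℝ} (hK : 1 ≤ K) (hΩ : IsOpen Ω)
    (hd : ContDiffOn ℝ 1 φ Ω) (hinj : Set.InjOn φ Ω)
    (hdet : ∀ z ∈ Ω, 0 < (fderiv ℝ φ z).det ∧ ‖fderiv ℝ φ z‖ ^ 2 ≤ K * (fderiv ℝ φ z).det)
    {x : ℂ} {ρ : ℝ} (hρ : 0 < ρ) (hsub : closedBall x (2 * ρ) ⊆ Ω) :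
    ENNReal.ofReal (ρ ^ 2) * ∫⁻ z in closedBall x ρ, (‖fderiv ℝ φ z‖₊ : ℝ≥0∞) ^ 2 ≤
      ENNReal.ofReal (K * π) * (∫⁻ z in closedBall x (2 * ρ), (‖fderiv ℝ φ z‖₊ : ℝ≥0∞)) ^ 2 := by
  have hsub' : closedBall x ρ ⊆ Ω := (closedBall_subset_closedBall (by linarith)).trans hsub
  set A := volume (φ '' closedBall x ρ) with hA
  have hm : Measurable fun z => (‖fderiv ℝ φ z‖₊ : ℝ≥0∞) := by
    have := measurable_fderiv ℝ φ
    fun_prop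
  have h1 : ∫⁻ z in closedBall x ρ, (‖fderiv ℝ φ z‖₊ : ℝ≥0∞) ^ 2 ≤ ENNReal.ofReal K * A := by
    rw [hA, ← lintegral_abs_det_fderiv_eq_addHaar_image volume isClosed_closedBall.measurableSet
      (fun z hz => ((hd.contDiffAt (hΩ.mem_nhds (hsub' hz))).differentiableAt
      one_ne_zero).hasFDerivAt.hasFDerivWithinAt) (hinj.mono hsub'),
      ← lintegral_const_mul' _ _ ENNReal.ofReal_ne_top]
    refine setLIntegral_mono' isClosed_closedBall.measurableSet fun z hz => ?_
    obtain ⟨h2, h3⟩ := hdet z (hsub' hz)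
    rw [abs_of_pos h2, ← ENNReal.ofReal_mul (by linarith)]
    refine le_trans (le_of_eq ?_) (ENNReal.ofReal_le_ofReal h3)
    rw [ENNReal.ofReal_pow (norm_nonneg _), ofReal_norm]; rfl
  have hp0 : (NNReal.pi : ℝ≥0∞) ≠ 0 := by simp [NNReal.pi_ne_zero]
  have hpt : (NNReal.pi : ℝ≥0∞) ≠ ⊤ := ENNReal.coe_ne_top
  set V : ℝ≥0∞ := (A / NNReal.pi) ^ (1/2 : ℝ) with hV
  have hV2 : A = NNReal.pi * V ^ 2 := by
    rw [hV, ← ENNReal.rpow_natCast, ← ENNReal.rpow_mul]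
    norm_num
    rw [ENNReal.mul_div_cancel hp0 hpt]
  have h2 : ENNReal.ofReal ρ * V ≤ ∫⁻ z in closedBall x (2 * ρ), (‖fderiv ℝ φ z‖₊ : ℝ≥0∞) := by
    refine le_trans ?_ (aux_polar _ hm x hρ)
    calc ENNReal.ofReal ρ * V = ∫⁻ s in Set.Ioo ρ (2 * ρ), V := by
          rw [setLIntegral_const, Real.volume_Ioo, mul_comm]; congr 2; ring
      _ ≤ _ := by
        refine setLIntegral_mono' measurableSet_Ioo fun s hs => ?_
        have h3 := aux_vol hΩ hd (fun z hz => (hdet z hz).1) (hρ.trans hs.1)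
          ((closedBall_subset_closedBall hs.2.le).trans hsub)
        have h4 : A ≤ volume (φ '' closedBall x s) :=
          measure_mono (Set.image_mono (closedBall_subset_closedBall hs.1.le))
        have h5 := h4.trans h3
        rw [hV2, ENNReal.mul_le_mul_iff_right hp0 hpt] at h5
        exact (ENNReal.pow_le_pow_left_iff two_ne_zero).1 h5
  calc _ ≤ ENNReal.ofReal (ρ ^ 2) * (ENNReal.ofReal K * A) := by gcongr
    _ = ENNReal.ofReal (K * π) * (ENNReal.ofReal ρ * V) ^ 2 := by
      rw [hV2, ENNReal.ofReal_pow hρ.le, ENNReal.ofReal_mul (by linarith)]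
      have : ENNReal.ofReal π = NNReal.pi := by
        rw [← NNReal.coe_real_pi, ENNReal.ofReal_coe_nnreal]
      rw [this]; ring
    _ ≤ _ := by gcongr

lemma aux_volcb (x : ℂ) {ρ : ℝ} (hρ : 0 ≤ ρ) :
    volume (closedBall x ρ) = ENNReal.ofReal (π * ρ ^ 2) := by
  have : ENNReal.ofReal π = NNReal.pi := by
    rw [← NNReal.coe_real_pi, ENNReal.ofReal_coe_nnreal]
  rw [Complex.volume_closedBall, ENNReal.ofReal_mul pi_pos.le, ENNReal.ofReal_pow hρ, this, mul_comm]

lemma aux_stop {g : ℂ → ℝ} {U : Set ℂ} (hU : IsOpen U)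
    (hc : ContinuousOn g U) {x : ℂ} {δ t : ℝ} (hδ : 0 < δ) (ht : 0 < t)
    (hx : closedBall x δ ⊆ U) (hgx : t < g x)
    (hI : 16 * ∫⁻ z in U, ENNReal.ofReal (g z) ^ 2 < ENNReal.ofReal (π * δ ^ 2 * t ^ 2)) :
    ∃ ρ : ℝ, 0 < ρ ∧ 8 * ρ ≤ δ ∧
      ENNReal.ofReal (t ^ 2 * (π * ρ ^ 2)) ≤ ∫⁻ z in closedBall x ρ, ENNReal.ofReal (g z) ^ 2 ∧
      ∫⁻ z in closedBall x (8 * ρ), ENNReal.ofReal (g z) ^ 2 ≤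
        ENNReal.ofReal (t ^ 2 * (π * (8 * ρ) ^ 2)) := by
  classical
  have hxU : x ∈ U := hx (mem_closedBall_self hδ.le)
  have hex : ∃ k : ℕ, ENNReal.ofReal (t ^ 2 * (π * (δ / 2 ^ k) ^ 2)) ≤
      ∫⁻ z in closedBall x (δ / 2 ^ k), ENNReal.ofReal (g z) ^ 2 := by
    have hn : {z | t < g z} ∈ nhds x :=
      (hc.continuousAt (hU.mem_nhds hxU)).eventually (lt_mem_nhds hgx)
    obtain ⟨ε, hε, hsub⟩ := nhds_basis_closedBall.mem_iff.1 hn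
    obtain ⟨k, hk⟩ := exists_pow_lt_of_lt_one (div_pos hε hδ) (by norm_num : (1/2 : ℝ) < 1)
    refine ⟨k, ?_⟩
    have hRε : δ / 2 ^ k ≤ ε := by
      rw [lt_div_iff₀ hδ] at hk
      rw [div_eq_mul_inv, ← inv_pow, mul_comm]
      simpa using hk.le
    calc _ = ∫⁻ z in closedBall x (δ / 2 ^ k), ENNReal.ofReal (t ^ 2) := by
          rw [setLIntegral_const, aux_volcb _ (by positivity), ENNReal.ofReal_mul (by positivity)]
      _ ≤ _ := by
        refine setLIntegral_mono' isClosed_closedBall.measurableSet fun z hz => ?_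
        rw [ENNReal.ofReal_pow ht.le]
        gcongr
        exact (hsub (closedBall_subset_closedBall hRε hz)).le
  set k := Nat.find hex with hk
  have h1 := Nat.find_spec hex
  have h3 : 3 ≤ k := by
    by_contra hlt
    have hR : δ / 4 ≤ δ / 2 ^ k := by
      have : (2:ℝ) ^ k ≤ 2 ^ 2 := pow_le_pow_right₀ (by norm_num) (by omega)
      gcongr; linarith
    have hR2 : δ / 2 ^ k ≤ δ := div_le_self hδ.le (one_le_pow₀ (by norm_num))
    have h4 : ENNReal.ofReal (t ^ 2 * (π * (δ / 2 ^ k) ^ 2)) ≤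
        ∫⁻ z in U, ENNReal.ofReal (g z) ^ 2 :=
      h1.trans (lintegral_mono_set ((closedBall_subset_closedBall hR2).trans hx))
    have h5 : ENNReal.ofReal (t ^ 2 * (π * (δ / 4) ^ 2)) ≤
        ∫⁻ z in U, ENNReal.ofReal (g z) ^ 2 := by
      refine le_trans (ENNReal.ofReal_le_ofReal ?_) h4
      gcongr
    have h6 : ENNReal.ofReal (π * δ ^ 2 * t ^ 2) ≤ 16 * ∫⁻ z in U, ENNReal.ofReal (g z) ^ 2 := by
      calc _ = 16 * ENNReal.ofReal (t ^ 2 * (π * (δ / 4) ^ 2)) := by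
            rw [show (16 : ℝ≥0∞) = ENNReal.ofReal 16 by norm_num, ← ENNReal.ofReal_mul (by norm_num)]
            congr 1; ring
        _ ≤ _ := by gcongr
    exact absurd hI (not_lt.2 h6)
  have h8 : 8 * (δ / 2 ^ k) = δ / 2 ^ (k - 3) := by
    obtain ⟨m, hm⟩ := Nat.exists_eq_add_of_le h3
    rw [hm]; simp only [add_tsub_cancel_left]; rw [pow_add]; field_simp; norm_num
  refine ⟨δ / 2 ^ k, by positivity, ?_, h1, ?_⟩
  · rw [h8]; exact div_le_self hδ.le (one_le_pow₀ (by norm_num))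
  · rw [h8]
    exact (not_le.1 (Nat.find_min hex (m := k - 3) (by omega))).le

lemma aux_gl {g : ℂ → ℝ} (hg : Measurable g) {U : Set ℂ} (hU : IsOpen U)
    (hc : ContinuousOn g U) {K : ℝ} (hK : 1 ≤ K)
    (H : ∀ (x : ℂ) (ρ : ℝ), 0 < ρ → closedBall x (2 * ρ) ⊆ U →
      ENNReal.ofReal (ρ ^ 2) * ∫⁻ z in closedBall x ρ, ENNReal.ofReal (g z) ^ 2 ≤
      ENNReal.ofReal (K * π) * (∫⁻ z in closedBall x (2 * ρ), ENNReal.ofReal (g z)) ^ 2)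
    {z₀ : ℂ} {a b t : ℝ} (hab : a < b) (hb : ball z₀ b ⊆ U) (ht : 0 < t)
    (hI : 16 * ∫⁻ z in U, ENNReal.ofReal (g z) ^ 2 < ENNReal.ofReal (π * (b - a) ^ 2 * t ^ 2)) :
    ∫⁻ z in ball z₀ a ∩ {z | t < g z}, ENNReal.ofReal (g z) ^ 2 ≤
      ENNReal.ofReal (16 * (8 * π * √K) * t) *
        ∫⁻ z in ball z₀ b ∩ {z | t < 8 * π * √K * g z}, ENNReal.ofReal (g z) := by
  set P := √K with hP
  have hP1 : 1 ≤ P := by rw [hP]; exact Real.one_le_sqrt.2 hK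
  have hP2 : P ^ 2 = K := Real.sq_sqrt (by linarith)
  set E := ball z₀ a ∩ {z | t < g z} with hE
  set F := {z | t < 8 * π * P * g z} with hF
  have hFm : MeasurableSet F := measurableSet_lt measurable_const (hg.const_mul _)
  have hδ : 0 < b - a := sub_pos.2 hab
  have hin : ∀ x ∈ E, ∀ ρ, ρ < b - a → closedBall x ρ ⊆ ball z₀ b := by
    intro x hx ρ hρ
    refine closedBall_subset_ball' ?_
    have := mem_ball.1 hx.1
    linarith
  -- stopping radius
  have hst : ∀ x ∈ E, ∃ ρ : ℝ, 0 < ρ ∧ 8 * ρ < b - a ∧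
      ENNReal.ofReal (t ^ 2 * (π * ρ ^ 2)) ≤ ∫⁻ z in closedBall x ρ, ENNReal.ofReal (g z) ^ 2 ∧
      ∫⁻ z in closedBall x (8 * ρ), ENNReal.ofReal (g z) ^ 2 ≤
        ENNReal.ofReal (t ^ 2 * (π * (8 * ρ) ^ 2)) := by
    intro x hx
    have hcl : ∃ δ, 0 < δ ∧ δ < b - a ∧
      16 * ∫⁻ z in U, ENNReal.ofReal (g z) ^ 2 < ENNReal.ofReal (π * δ ^ 2 * t ^ 2) := by
      have hcont : Filter.Tendsto (fun δ : ℝ => ENNReal.ofReal (π * δ ^ 2 * t ^ 2))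
          (nhdsWithin (b - a) (Set.Iio (b - a))) (nhds (ENNReal.ofReal (π * (b - a) ^ 2 * t ^ 2))) := by
        apply ENNReal.tendsto_ofReal
        have : Continuous fun δ : ℝ => π * δ ^ 2 * t ^ 2 := by fun_prop
        exact this.continuousAt.tendsto.mono_left nhdsWithin_le_nhds
      have h1 := hcont.eventually (lt_mem_nhds hI)
      have h2 : ∀ᶠ δ in nhdsWithin (b - a) (Set.Iio (b - a)), 0 < δ :=
        nhdsWithin_le_nhds (lt_mem_nhds hδ)
      obtain ⟨δ, hd1, hd2, hd3⟩ := (h1.and (h2.and self_mem_nhdsWithin)).exists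
      exact ⟨δ, hd2, hd3, hd1⟩
    obtain ⟨δ, hδ0, hδ1, hδ2⟩ := hcl
    obtain ⟨ρ, h1, h2, h3, h4⟩ := aux_stop hU hc hδ0 ht ((hin x hx δ hδ1).trans hb) hx.2 hδ2
    exact ⟨ρ, h1, by linarith, h3, h4⟩
  choose! ρ hρ0 hρ8 hlow hup using hst
  obtain ⟨u, huE, hdisj, hcov⟩ := Vitali.exists_disjoint_subfamily_covering_enlargement_closedBall
    E (fun x => x) (fun x => 2 * ρ x) (b - a)
    (fun x hx => by have := hρ8 x hx; have := hρ0 x hx; linarith) 4 (by norm_num)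
  have hucount : u.Countable := by
    refine hdisj.countable_of_nonempty_interior fun x hx => ?_
    have : (ball x (2 * ρ x)).Nonempty := nonempty_ball.2 (by have := hρ0 x (huE hx); linarith)
    exact this.mono ball_subset_interior_closedBall
  have hcover : E ⊆ ⋃ x ∈ u, closedBall x (8 * ρ x) := by
    intro x hx
    obtain ⟨y, hy, hxy⟩ := hcov x hx
    refine Set.mem_biUnion hy ?_
    have := hxy (mem_closedBall_self (by have := hρ0 x hx; linarith))
    rwa [← mul_assoc, show (4:ℝ) * 2 = 8 by norm_num] at this
  -- each ball
  have hball : ∀ x ∈ u, ∫⁻ z in closedBall x (8 * ρ x), ENNReal.ofReal (g z) ^ 2 ≤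
      ENNReal.ofReal (16 * (8 * π * P) * t) *
        ∫⁻ z in closedBall x (2 * ρ x) ∩ F, ENNReal.ofReal (g z) := by
    intro x hx
    have hr0 := hρ0 x (huE hx)
    have hr8 := hρ8 x (huE hx)
    set q := ρ x with hq
    have hsub : closedBall x (2 * q) ⊆ ball z₀ b := hin x (huE hx) _ (by linarith)
    have h1 := H x q hr0 (hsub.trans hb)
    have h2 := hlow x (huE hx)
    set B := ∫⁻ z in closedBall x (2 * q), ENNReal.ofReal (g z) with hB
    have h3 : ENNReal.ofReal (t * q ^ 2) ≤ ENNReal.ofReal P * B := by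
      have h4 : ENNReal.ofReal π * (ENNReal.ofReal (t * q ^ 2)) ^ 2 ≤
          ENNReal.ofReal π * (ENNReal.ofReal P * B) ^ 2 := by
        calc _ = ENNReal.ofReal (q ^ 2) * ENNReal.ofReal (t ^ 2 * (π * q ^ 2)) := by
              rw [← ENNReal.ofReal_pow (by positivity), ← ENNReal.ofReal_mul (by positivity),
                ← ENNReal.ofReal_mul (by positivity)]
              congr 1; ring
          _ ≤ _ := (by gcongr : _ ≤ _).trans h1
          _ = _ := by
            rw [← hP2, ENNReal.ofReal_mul (by positivity), ENNReal.ofReal_pow (by positivity)]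
            ring
      rw [ENNReal.mul_le_mul_iff_right (by simp [pi_pos]) ENNReal.ofReal_ne_top] at h4
      exact (ENNReal.pow_le_pow_left_iff two_ne_zero).1 h4
    set S := ∫⁻ z in closedBall x (2 * q) ∩ F, ENNReal.ofReal (g z) with hS
    have h5 : B ≤ S + ENNReal.ofReal (t / (8 * π * P) * (π * (2 * q) ^ 2)) := by
      rw [hB, ← lintegral_inter_add_sdiff _ _ hFm]
      gcongr
      calc _ ≤ ∫⁻ z in closedBall x (2 * q) \ F, ENNReal.ofReal (t / (8 * π * P)) := by
            refine setLIntegral_mono' (isClosed_closedBall.measurableSet.diff hFm) fun z hz => ?_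
            apply ENNReal.ofReal_le_ofReal
            rw [le_div_iff₀ (by positivity), mul_comm]
            exact not_lt.1 hz.2
        _ ≤ ∫⁻ z in closedBall x (2 * q), ENNReal.ofReal (t / (8 * π * P)) :=
            lintegral_mono_set Set.sdiff_subset
        _ = _ := by
          rw [setLIntegral_const, aux_volcb _ (by positivity),
            ← ENNReal.ofReal_mul (by positivity)]
    have h6 : ENNReal.ofReal (t * q ^ 2) ≤ ENNReal.ofReal (2 * P) * S := by
      have h7 : ENNReal.ofReal (t * q ^ 2) ≤
          ENNReal.ofReal P * S + ENNReal.ofReal (t * q ^ 2 / 2) := by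
        refine h3.trans ((mul_le_mul_right h5 _).trans ?_)
        rw [mul_add, ← ENNReal.ofReal_mul (by positivity)]
        gcongr
        apply le_of_eq
        field_simp; ring
      have h8 : ENNReal.ofReal (t * q ^ 2) =
          ENNReal.ofReal (t * q ^ 2 / 2) + ENNReal.ofReal (t * q ^ 2 / 2) := by
        rw [← ENNReal.ofReal_add (by positivity) (by positivity)]; congr 1; ring
      have h9 : ENNReal.ofReal (t * q ^ 2 / 2) ≤ ENNReal.ofReal P * S := by
        rw [h8] at h7
        exact (ENNReal.add_le_add_iff_right ENNReal.ofReal_ne_top).1 h7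
      rw [h8, ENNReal.ofReal_mul (by norm_num), mul_assoc]
      calc _ ≤ ENNReal.ofReal P * S + ENNReal.ofReal P * S := by gcongr
        _ = _ := by rw [← two_mul]; norm_num
    calc _ ≤ ENNReal.ofReal (t ^ 2 * (π * (8 * q) ^ 2)) := hup x (huE hx)
      _ = ENNReal.ofReal (64 * π * t) * ENNReal.ofReal (t * q ^ 2) := by
        rw [← ENNReal.ofReal_mul (by positivity)]; congr 1; ring
      _ ≤ ENNReal.ofReal (64 * π * t) * (ENNReal.ofReal (2 * P) * S) := by gcongr
      _ = _ := by
        rw [← mul_assoc, ← ENNReal.ofReal_mul (by positivity)]; congr 2; ring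
  have hEm : MeasurableSet E := measurableSet_ball.inter (measurableSet_lt measurable_const hg)
  calc _ ≤ ∫⁻ z in ⋃ x ∈ u, closedBall x (8 * ρ x), ENNReal.ofReal (g z) ^ 2 :=
        lintegral_mono_set hcover
    _ ≤ ∑' x : u, ∫⁻ z in closedBall (x : ℂ) (8 * ρ x), ENNReal.ofReal (g z) ^ 2 := by
      have := hucount.to_subtype
      rw [Set.biUnion_eq_iUnion]
      exact lintegral_iUnion_le _ _
    _ ≤ ∑' x : u, ENNReal.ofReal (16 * (8 * π * P) * t) *
        ∫⁻ z in closedBall (x : ℂ) (2 * ρ x) ∩ F, ENNReal.ofReal (g z) :=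
      ENNReal.tsum_le_tsum fun x => hball x x.2
    _ = ENNReal.ofReal (16 * (8 * π * P) * t) *
        ∫⁻ z in ⋃ x ∈ u, closedBall (x : ℂ) (2 * ρ x) ∩ F, ENNReal.ofReal (g z) := by
      rw [ENNReal.tsum_mul_left, lintegral_biUnion hucount
        (fun x _ => isClosed_closedBall.measurableSet.inter hFm)]
      exact hdisj.mono fun x => Set.inter_subset_left
    _ ≤ _ := by
      gcongr
      refine Set.iUnion₂_subset fun x hx => ?_
      refine Set.inter_subset_inter_left _ (hin x (huE hx) _ ?_)
      have := hρ8 x (huE hx); have := hρ0 x (huE hx); linarith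

lemma aux_cake {g : ℂ → ℝ} (hg : Measurable g) (hg0 : ∀ z, 0 ≤ g z) {A B : Set ℂ}
    {I : ℝ≥0∞} {C σ t₀ : ℝ} (hC : 0 < C) (hσ : 2 < σ)
    (ht₀ : 0 < t₀) (hAI : ∫⁻ z in A, ENNReal.ofReal (g z) ^ 2 ≤ I)
    (H : ∀ t, t₀ ≤ t → ∫⁻ z in A ∩ {z | t < g z}, ENNReal.ofReal (g z) ^ 2 ≤
      ENNReal.ofReal (16 * C * t) * ∫⁻ z in B ∩ {z | t < C * g z}, ENNReal.ofReal (g z)) :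
    ∫⁻ z in A, ENNReal.ofReal (g z ^ σ) ≤ I * ENNReal.ofReal (t₀ ^ (σ - 2)) +
      ENNReal.ofReal (16 * C ^ σ * ((σ - 2) / (σ - 1))) * ∫⁻ z in B, ENNReal.ofReal (g z ^ σ) := by
  have hgm : Measurable fun z => ENNReal.ofReal (g z) := hg.ennreal_ofReal
  set μ := (volume.restrict A).withDensity (fun z => ENNReal.ofReal (g z) ^ 2) with hμ
  set ν := (volume.restrict B).withDensity (fun z => ENNReal.ofReal (g z)) with hν
  have e1 : ∫⁻ z, ENNReal.ofReal (g z ^ (σ - 2)) ∂μ = ∫⁻ z in A, ENNReal.ofReal (g z ^ σ) := by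
    rw [hμ, lintegral_withDensity_eq_lintegral_mul _ (hgm.pow_const 2)
      (by fun_prop)]
    refine lintegral_congr fun z => ?_
    simp only [Pi.mul_apply]
    rw [← ENNReal.ofReal_pow (hg0 z), ← ENNReal.ofReal_mul (by have := hg0 z; positivity),
      ← Real.rpow_natCast, ← Real.rpow_add' (hg0 z) (by push_cast; linarith)]
    congr 2; push_cast; ring
  have e2 : ∫⁻ z, ENNReal.ofReal ((C * g z) ^ (σ - 1)) ∂ν =
      ENNReal.ofReal (C ^ (σ - 1)) * ∫⁻ z in B, ENNReal.ofReal (g z ^ σ) := by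
    rw [hν, lintegral_withDensity_eq_lintegral_mul _ hgm (by fun_prop),
      ← lintegral_const_mul' _ _ ENNReal.ofReal_ne_top]
    refine lintegral_congr fun z => ?_
    simp only [Pi.mul_apply]
    rw [← ENNReal.ofReal_mul (hg0 z), ← ENNReal.ofReal_mul (by positivity),
      Real.mul_rpow hC.le (hg0 z)]
    congr 1
    have : g z ^ σ = g z * g z ^ (σ - 1) := by
      have h := Real.rpow_add' (hg0 z) (y := 1) (z := σ - 1) (by linarith)
      rw [Real.rpow_one] at h
      rw [← h]; congr 1; ring
    rw [this]; ring
  have c1 := lintegral_rpow_eq_lintegral_meas_lt_mul μ (f := g)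
    (Filter.Eventually.of_forall hg0) hg.aemeasurable (p := σ - 2) (by linarith)
  have c2 := lintegral_rpow_eq_lintegral_meas_lt_mul ν (f := fun z => C * g z)
    (Filter.Eventually.of_forall fun z => mul_nonneg hC.le (hg0 z))
    (hg.const_mul C).aemeasurable (p := σ - 1) (by linarith)
  have c3 := lintegral_rpow_eq_lintegral_meas_lt_mul (Measure.dirac (0 : ℝ)) (f := fun _ => t₀)
    (Filter.Eventually.of_forall fun _ => ht₀.le)
    measurable_const.aemeasurable (p := σ - 2) (by linarith)
  rw [lintegral_const] at c3
  simp only [measure_univ, mul_one] at c3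
  rw [e1] at c1
  rw [e2] at c2
  have hm3 : Measurable fun t : ℝ => (Measure.dirac (0 : ℝ)) {a : ℝ | t < t₀} := by
    refine Antitone.measurable fun s t hst => measure_mono fun a (ha : t < t₀) => ?_
    exact lt_of_le_of_lt hst ha
  have key : ∫⁻ t in Set.Ioi (0:ℝ), μ {a | t < g a} * ENNReal.ofReal (t ^ (σ - 2 - 1)) ≤
      I * (∫⁻ t in Set.Ioi (0:ℝ), (Measure.dirac (0 : ℝ)) {a : ℝ | t < t₀} *
        ENNReal.ofReal (t ^ (σ - 2 - 1))) + ENNReal.ofReal (16 * C) *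
      ∫⁻ t in Set.Ioi (0:ℝ), ν {a | t < C * g a} * ENNReal.ofReal (t ^ (σ - 1 - 1)) := by
    rw [← lintegral_const_mul' (ENNReal.ofReal (16 * C)) _ ENNReal.ofReal_ne_top]
    have hmm : Measurable fun t : ℝ => (Measure.dirac (0 : ℝ)) {a : ℝ | t < t₀} *
        ENNReal.ofReal (t ^ (σ - 2 - 1)) := hm3.mul (by fun_prop)
    rw [← lintegral_const_mul _ hmm, ← lintegral_add_left (hmm.const_mul _)]
    refine setLIntegral_mono' measurableSet_Ioi fun t (ht : 0 < t) => ?_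
    have hμt : μ {a | t < g a} = ∫⁻ z in A ∩ {z | t < g z}, ENNReal.ofReal (g z) ^ 2 := by
      rw [hμ, withDensity_apply _ (measurableSet_lt measurable_const hg),
        Measure.restrict_restrict (measurableSet_lt measurable_const hg), Set.inter_comm]
    have hνt : ν {a | t < C * g a} = ∫⁻ z in B ∩ {z | t < C * g z}, ENNReal.ofReal (g z) := by
      rw [hν, withDensity_apply _ (measurableSet_lt measurable_const (hg.const_mul C)),
        Measure.restrict_restrict (measurableSet_lt measurable_const (hg.const_mul C)),
        Set.inter_comm]
    by_cases h : t < t₀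
    · refine le_trans ?_ le_self_add
      simp only [h, Set.ofPred_true, measure_univ, one_mul]
      gcongr
      rw [hμt]
      exact (lintegral_mono_set Set.inter_subset_left).trans hAI
    · refine le_trans ?_ le_add_self
      rw [hμt, hνt]
      refine (mul_le_mul_left (H t (not_lt.1 h)) _).trans (le_of_eq ?_)
      have : t ^ (σ - 1 - 1) = t * t ^ (σ - 2 - 1) := by
        rw [← Real.rpow_one_add' ht.le (by linarith)]; congr 1; ring
      rw [this, ENNReal.ofReal_mul (by positivity), ENNReal.ofReal_mul ht.le]
      ring
  have hs1 : 0 < σ - 1 := by linarith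
  have hs2 : 0 < σ - 2 := by linarith
  calc _ = _ := c1
    _ ≤ ENNReal.ofReal (σ - 2) * _ := mul_le_mul_right key _
    _ = I * ENNReal.ofReal (t₀ ^ (σ - 2)) + ENNReal.ofReal (16 * C * ((σ - 2) / (σ - 1))) *
          (ENNReal.ofReal (σ - 1) * ∫⁻ t in Set.Ioi (0:ℝ), ν {a | t < C * g a} *
            ENNReal.ofReal (t ^ (σ - 1 - 1))) := by
      rw [c3, mul_add, ← mul_assoc (ENNReal.ofReal (16 * C * ((σ - 2) / (σ - 1)))),
        ← ENNReal.ofReal_mul (by positivity), ← mul_assoc (ENNReal.ofReal (σ - 2)) (ENNReal.ofReal (16 * C)),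
        ← ENNReal.ofReal_mul hs2.le]
      congr 1
      · ring
      · congr 2; field_simp
    _ = _ := by
      rw [← c2, ← mul_assoc, ← ENNReal.ofReal_mul (by positivity)]
      congr 3
      have : C ^ σ = C * C ^ (σ - 1) := by
        rw [← Real.rpow_one_add' hC.le (by linarith)]; congr 1; ring
      rw [this]; ring

lemma aux_iter {X : ℕ → ℝ} {A M θ : ℝ} (hA : 0 ≤ A) (hX : ∀ n, X n ≤ M) (hX0 : ∀ n, 0 ≤ X n)
    (hθ : θ ≤ 1 / 8)
    (h : ∀ n, X n ≤ A * 2 ^ n + θ * X (n + 1)) : X 0 ≤ 2 * A := by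
  have hM : 0 ≤ M := (hX0 0).trans (hX 0)
  have key : ∀ m n, X n ≤ 2 * A * 2 ^ n + M * (1 / 8) ^ m := by
    intro m
    induction m with
    | zero =>
      intro n
      have : 0 ≤ 2 * A * 2 ^ n := by positivity
      have := hX n
      simp; linarith
    | succ m ih =>
      intro n
      have h1 := ih (n + 1)
      have h2 : θ * X (n + 1) ≤ 1 / 8 * (2 * A * 2 ^ (n + 1) + M * (1 / 8) ^ m) :=
        mul_le_mul hθ h1 (hX0 _) (by norm_num)
      have h3 := h n
      have h4 : 0 ≤ A * 2 ^ n := by positivity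
      calc X n ≤ A * 2 ^ n + 1 / 8 * (2 * A * 2 ^ (n + 1) + M * (1 / 8) ^ m) := by linarith
        _ = 3 / 2 * (A * 2 ^ n) + M * (1 / 8) ^ (m + 1) := by ring
        _ ≤ _ := by linarith
  have hlim : Filter.Tendsto (fun m : ℕ => 2 * A * 2 ^ 0 + M * (1 / 8 : ℝ) ^ m) Filter.atTop
      (nhds (2 * A * 2 ^ 0 + M * 0)) :=
    ((tendsto_pow_atTop_nhds_zero_of_lt_one (by norm_num) (by norm_num)).const_mul M).const_add _
  have := ge_of_tendsto' hlim fun m => key m 0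
  simpa using this

lemma aux_const {K σ : ℝ} (hK : 1 ≤ K) (hσ : 2 < σ)
    (hν : (10 : ℝ) ^ (4 * σ) * ((σ - 2) / (σ - 1)) * (24 * π ^ 2 * K) ^ σ < 1) :
    σ ≤ 3 ∧ 16 * (8 * π * √K) ^ σ * ((σ - 2) / (σ - 1)) ≤ 1 / 8 := by
  have hpi := Real.pi_gt_three
  have hs : √K ≤ K := by
    rw [Real.sqrt_le_left (by linarith)]; nlinarith
  have h0 : 0 ≤ √K := Real.sqrt_nonneg K
  have hbase : 8 * π * √K ≤ 24 * π ^ 2 * K := by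
    have : 8 * π ≤ 24 * π ^ 2 := by nlinarith
    exact mul_le_mul this hs h0 (by positivity)
  have h1 : (8 * π * √K) ^ σ ≤ (24 * π ^ 2 * K) ^ σ :=
    Real.rpow_le_rpow (by positivity) hbase (by linarith)
  have h10 : (10 : ℝ) ^ (8 : ℝ) ≤ 10 ^ (4 * σ) :=
    Real.rpow_le_rpow_of_exponent_le (by norm_num) (by linarith)
  have h10' : (128 : ℝ) ≤ 10 ^ (4 * σ) := by
    refine le_trans ?_ h10
    norm_num
  have hq : 0 ≤ (σ - 2) / (σ - 1) := div_nonneg (by linarith) (by linarith)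
  have hb1 : 1 ≤ (24 * π ^ 2 * K) ^ σ := Real.one_le_rpow (by nlinarith) (by linarith)
  set q := (σ - 2) / (σ - 1) with hqd
  set T := (24 * π ^ 2 * K) ^ σ
  have h128 : 128 * q * T < 1 := by
    refine lt_of_le_of_lt ?_ hν
    gcongr
  constructor
  · by_contra hcon
    push Not at hcon
    have : 1 / 2 ≤ q := by
      rw [hqd, div_le_div_iff₀ (by norm_num) (by linarith)]; linarith
    nlinarith
  · have : (8 * π * √K) ^ σ * q ≤ T * q := by gcongr
    nlinarith

/-- Weak (inverse) Hölder inequality with exponent `σ > 2` for derivatives of a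
`C¹` `K`-quasiconformal homeomorphism `φ : Ω → Ω′`: if `D(z₀,2r) ⊂ Ω` and
`ν = 10^{4σ}·((σ−2)/(σ−1))·(24π²K)^σ < 1`, then
`((1/|D(z₀,r)|)∬_{D(z₀,r)} ‖Dφ‖^σ)^{1/σ}
  ≤ C_σ ((1/|D(z₀,2r)|)∬_{D(z₀,2r)} ‖Dφ‖²)^{1/2}`
with `C_σ = 10⁶/[(σ−1)(1−ν)]^{1/σ}`. -/
theorem weak_holder_inequality_sigma
    (K : ℝ) (hK : 1 ≤ K) (Ω Ω' : Set ℂ) (φ : ℂ → ℂ)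
    (hφ : IsC1QCHomeoOn K φ Ω Ω')
    (z₀ : ℂ) (r : ℝ) (hr : 0 < r) (hball : Metric.ball z₀ (2 * r) ⊆ Ω)
    (σ : ℝ) (hσ : 2 < σ)
    (hν : (10 : ℝ) ^ (4 * σ) * ((σ - 2) / (σ - 1)) * (24 * π ^ 2 * K) ^ σ < 1) :
    ((volume (Metric.ball z₀ r))⁻¹ *
        ∫⁻ z in Metric.ball z₀ r, (‖fderiv ℝ φ z‖₊ : ℝ≥0∞) ^ σ) ^ (1/σ)
      ≤ ENNReal.ofReal (10 ^ 6 /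
            ((σ - 1) * (1 - (10 : ℝ) ^ (4 * σ) * ((σ - 2) / (σ - 1)) * (24 * π ^ 2 * K) ^ σ))
              ^ (1/σ)) *
          ((volume (Metric.ball z₀ (2 * r)))⁻¹ *
            ∫⁻ z in Metric.ball z₀ (2 * r), (‖fderiv ℝ φ z‖₊ : ℝ≥0∞) ^ 2) ^ (1/2 : ℝ) := by
  obtain ⟨hΩ, -, -, -, hd, hinj, -, hdet⟩ := hφ
  obtain ⟨hσ3, hθ⟩ := aux_const hK hσ hν
  -- the constant
  have hCσ : (10 : ℝ) ^ 6 / 2 ≤ 10 ^ 6 /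
      ((σ - 1) * (1 - (10 : ℝ) ^ (4 * σ) * ((σ - 2) / (σ - 1)) * (24 * π ^ 2 * K) ^ σ))
              ^ (1/σ) := by
    have hν0 : 0 ≤ (10 : ℝ) ^ (4 * σ) * ((σ - 2) / (σ - 1)) * (24 * π ^ 2 * K) ^ σ := by
      have : 0 ≤ (σ - 2) / (σ - 1) := div_nonneg (by linarith) (by linarith)
      positivity
    set ν := (10 : ℝ) ^ (4 * σ) * ((σ - 2) / (σ - 1)) * (24 * π ^ 2 * K) ^ σ
    have hpos : 0 < (σ - 1) * (1 - ν) := mul_pos (by linarith) (by linarith)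
    have hle : (σ - 1) * (1 - ν) ≤ 2 := by nlinarith
    have h1 : ((σ - 1) * (1 - ν)) ^ (1 / σ) ≤ 2 := by
      calc _ ≤ (2:ℝ) ^ (1 / σ) := Real.rpow_le_rpow hpos.le hle (by positivity)
        _ ≤ (2:ℝ) ^ (1 : ℝ) := Real.rpow_le_rpow_of_exponent_le (by norm_num)
            (by rw [div_le_one (by linarith)]; linarith)
        _ = 2 := Real.rpow_one 2
    gcongr
  refine le_trans ?_ (mul_le_mul_left (ENNReal.ofReal_le_ofReal hCσ) _)
  set g : ℂ → ℝ := fun z => ‖fderiv ℝ φ z‖ with hgdef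
  have hG : ∀ z, (‖fderiv ℝ φ z‖₊ : ℝ≥0∞) = ENNReal.ofReal (g z) := fun z => by
    rw [hgdef, ofReal_norm]; rfl
  have hg : Measurable g := (measurable_fderiv ℝ φ).norm
  have hg0 : ∀ z, 0 ≤ g z := fun z => norm_nonneg _
  have hX : ∫⁻ z in ball z₀ r, (‖fderiv ℝ φ z‖₊ : ℝ≥0∞) ^ σ =
      ∫⁻ z in ball z₀ r, ENNReal.ofReal (g z ^ σ) := by
    refine lintegral_congr fun z => ?_
    rw [hG, ENNReal.ofReal_rpow_of_nonneg (hg0 z) (by linarith)]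
  rw [hX]
  simp only [hG]
  set U := ball z₀ (2 * r) with hUdef
  have hU : IsOpen U := isOpen_ball
  have hc : ContinuousOn g U :=
    ((hd.continuousOn_fderiv_of_isOpen hΩ le_rfl).mono hball).norm
  have H : ∀ (x : ℂ) (ρ : ℝ), 0 < ρ → closedBall x (2 * ρ) ⊆ U →
      ENNReal.ofReal (ρ ^ 2) * ∫⁻ z in closedBall x ρ, ENNReal.ofReal (g z) ^ 2 ≤
      ENNReal.ofReal (K * π) * (∫⁻ z in closedBall x (2 * ρ), ENNReal.ofReal (g z)) ^ 2 := by
    intro x ρ hρ hs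
    have := aux_rh hK hΩ hd hinj hdet hρ (hs.trans hball)
    simpa only [hG] using this
  have hvol : ∀ s : ℝ, 0 ≤ s → volume (ball z₀ s) = ENNReal.ofReal (π * s ^ 2) := fun s hs => by
    rw [← aux_volcb z₀ hs, Measure.addHaar_closedBall_eq_addHaar_ball]
  set I := ∫⁻ z in U, ENNReal.ofReal (g z) ^ 2 with hI
  have hV0 : volume U ≠ ⊤ := measure_ball_lt_top.ne
  by_cases htop : I = ⊤
  · rw [htop, ENNReal.mul_top (ENNReal.inv_ne_zero.2 hV0), ENNReal.top_rpow_of_pos (by norm_num),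
      ENNReal.mul_top]
    · exact le_top
    · simp
  have hI0 : I ≠ 0 := by
    have : 0 < I := by
      rw [hI, setLIntegral_pos_iff (hg.ennreal_ofReal.pow_const 2)]
      have hsup : Function.support (fun z => ENNReal.ofReal (g z) ^ 2) ∩ U = U := by
        refine Set.inter_eq_right.2 fun z hz => ?_
        have h1 := (hdet z (hball hz)).1
        have h2 : fderiv ℝ φ z ≠ 0 := by
          intro h0
          rw [h0] at h1
          simp [ContinuousLinearMap.det] at h1
        have h3 : 0 < g z := norm_pos_iff.2 h2
        simp [h3]
      rw [hsup]
      exact measure_ball_pos _ _ (by linarith)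
    exact this.ne'
  set i := I.toReal with hi
  have hi0 : 0 < i := ENNReal.toReal_pos hI0 htop
  have hIi : I = ENNReal.ofReal i := (ENNReal.ofReal_toReal htop).symm
  set Q := i / (π * r ^ 2) with hQ
  have hQ0 : 0 < Q := by positivity
  have hiQ : i = π * r ^ 2 * Q := by rw [hQ]; field_simp
  set q := √Q with hq
  have hq0 : 0 < q := Real.sqrt_pos.2 hQ0
  have hq2 : q ^ 2 = Q := Real.sq_sqrt hQ0.le
  set a : ℕ → ℝ := fun n => r * (3 / 2 - 1 / 2 * (1 / 2) ^ n) with ha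
  have hadiff : ∀ n, a (n + 1) - a n = r / 4 * (1 / 2) ^ n := fun n => by
    simp only [ha]; ring
  have haU : ∀ n, a n ≤ 3 / 2 * r := fun n => by
    have : 0 ≤ r * (1 / 2 * (1 / 2) ^ n) := by positivity
    simp only [ha]; linarith
  have hballU : ∀ n, ball z₀ (a n) ⊆ U := fun n => ball_subset_ball (by have := haU n; linarith)
  set X : ℕ → ℝ≥0∞ := fun n => ∫⁻ z in ball z₀ (a n), ENNReal.ofReal (g z ^ σ) with hXdef
  obtain ⟨m, hm⟩ := (isCompact_closedBall z₀ (3 / 2 * r)).exists_bound_of_continuousOn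
    (hc.mono (closedBall_subset_ball (by linarith)))
  obtain ⟨M, hMtop, hM⟩ : ∃ M : ℝ≥0∞, M ≠ ⊤ ∧ ∀ n, X n ≤ M := by
    refine ⟨∫⁻ z in closedBall z₀ (3 / 2 * r), ENNReal.ofReal (m ^ σ), ?_, fun n => ?_⟩
    · rw [setLIntegral_const]
      exact ENNReal.mul_ne_top ENNReal.ofReal_ne_top measure_closedBall_lt_top.ne
    · refine (lintegral_mono_set (ball_subset_closedBall.trans
        (closedBall_subset_closedBall (haU n)))).trans ?_
      refine setLIntegral_mono' isClosed_closedBall.measurableSet fun z hz => ?_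
      apply ENNReal.ofReal_le_ofReal
      have := hm z hz
      rw [Real.norm_of_nonneg (hg0 z)] at this
      exact Real.rpow_le_rpow (hg0 z) this (by linarith)
  have hXtop : ∀ n, X n ≠ ⊤ := fun n => ne_top_of_le_ne_top hMtop (hM n)
  have hC0 : 0 < 8 * π * √K := by
    have : 0 < √K := Real.sqrt_pos.2 (by linarith)
    positivity
  set θ := 16 * (8 * π * √K) ^ σ * ((σ - 2) / (σ - 1)) with hθdef
  have hθ0 : 0 ≤ θ := by
    have : 0 ≤ (σ - 2) / (σ - 1) := div_nonneg (by linarith) (by linarith)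
    positivity
  have hstep : ∀ n, (X n).toReal ≤ (17 * i * q ^ (σ - 2)) * 2 ^ n + θ * (X (n + 1)).toReal := by
    intro n
    have h1 : X n ≤ I * ENNReal.ofReal ((17 * 2 ^ n * q) ^ (σ - 2)) +
        ENNReal.ofReal θ * X (n + 1) := by
      refine aux_cake hg hg0 hC0 hσ (by positivity) (lintegral_mono_set (hballU n)) ?_
      intro t ht
      have ht0 : 0 < t := lt_of_lt_of_le (by positivity) ht
      refine aux_gl hg hU hc hK H ?_ (hballU (n + 1)) ht0 ?_
      · have := hadiff n
        have h2 : 0 < r / 4 * (1 / 2) ^ n := by positivity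
        linarith
      · rw [← hI, hIi, show (16 : ℝ≥0∞) = ENNReal.ofReal 16 by norm_num,
          ← ENNReal.ofReal_mul (by norm_num), hadiff]
        rw [ENNReal.ofReal_lt_ofReal_iff (by positivity)]
        calc 16 * i < 289 / 16 * i := by linarith
          _ = π * (r / 4 * (1 / 2) ^ n) ^ 2 * (17 * 2 ^ n * q) ^ 2 := by
            rw [hiQ, ← hq2]
            have h5 : ((1:ℝ) / 2) ^ n * 2 ^ n = 1 := by rw [← mul_pow]; norm_num
            calc _ = 289 / 16 * (π * r ^ 2 * q ^ 2) * (1:ℝ) ^ 2 := by ring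
              _ = 289 / 16 * (π * r ^ 2 * q ^ 2) * (((1:ℝ) / 2) ^ n * 2 ^ n) ^ 2 := by rw [h5]
              _ = _ := by ring
          _ ≤ _ := by gcongr
    have h2 := ENNReal.toReal_mono (by
      exact ENNReal.add_ne_top.2 ⟨ENNReal.mul_ne_top htop ENNReal.ofReal_ne_top,
        ENNReal.mul_ne_top ENNReal.ofReal_ne_top (hXtop _)⟩) h1
    rw [ENNReal.toReal_add (ENNReal.mul_ne_top htop ENNReal.ofReal_ne_top)
      (ENNReal.mul_ne_top ENNReal.ofReal_ne_top (hXtop _)), ENNReal.toReal_mul, ENNReal.toReal_mul,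
      ENNReal.toReal_ofReal hθ0, ENNReal.toReal_ofReal (by positivity), ← hi] at h2
    have h3 : (17 * 2 ^ n * q) ^ (σ - 2) ≤ 17 * 2 ^ n * q ^ (σ - 2) := by
      rw [Real.mul_rpow (by positivity) hq0.le]
      gcongr
      have h17 : (1:ℝ) ≤ 17 * 2 ^ n := by
        have : (1:ℝ) ≤ 2 ^ n := one_le_pow₀ (by norm_num)
        linarith
      calc ((17:ℝ) * 2 ^ n) ^ (σ - 2) ≤ (17 * 2 ^ n) ^ (1:ℝ) :=
            Real.rpow_le_rpow_of_exponent_le h17 (by linarith)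
        _ = _ := Real.rpow_one _
    have h4 : i * (17 * 2 ^ n * q) ^ (σ - 2) ≤ i * (17 * 2 ^ n * q ^ (σ - 2)) := by gcongr
    linarith
  have hfin := aux_iter (X := fun n => (X n).toReal) (A := 17 * i * q ^ (σ - 2)) (M := M.toReal)
    (by positivity) (fun n => ENNReal.toReal_mono hMtop (hM n)) (fun n => ENNReal.toReal_nonneg)
    hθ hstep
  have ha0 : a 0 = r := by simp only [ha]; ring
  have hX0 : ∫⁻ z in ball z₀ r, ENNReal.ofReal (g z ^ σ) ≤
      ENNReal.ofReal (π * r ^ 2 * (34 * q ^ σ)) := by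
    have h1 : X 0 = ∫⁻ z in ball z₀ r, ENNReal.ofReal (g z ^ σ) := by simp only [hXdef, ha0]
    rw [← h1, ← ENNReal.ofReal_toReal (hXtop 0)]
    refine ENNReal.ofReal_le_ofReal (hfin.trans (le_of_eq ?_))
    have h2 : q ^ σ = q ^ 2 * q ^ (σ - 2) := by
      rw [← Real.rpow_natCast, ← Real.rpow_add hq0]; congr 1; push_cast; ring
    rw [h2, hiQ, hq2]; ring
  have hpr : 0 < π * r ^ 2 := by positivity
  have hL : ((volume (ball z₀ r))⁻¹ * ∫⁻ z in ball z₀ r, ENNReal.ofReal (g z ^ σ)) ^ (1 / σ) ≤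
      ENNReal.ofReal (34 * q) := by
    have h1 : (volume (ball z₀ r))⁻¹ * ∫⁻ z in ball z₀ r, ENNReal.ofReal (g z ^ σ) ≤
        ENNReal.ofReal (34 * q ^ σ) := by
      refine (mul_le_mul_right hX0 _).trans (le_of_eq ?_)
      rw [hvol r hr.le, ENNReal.ofReal_mul hpr.le, ← mul_assoc,
        ENNReal.inv_mul_cancel (by simpa using hpr) ENNReal.ofReal_ne_top, one_mul]
    refine (ENNReal.rpow_le_rpow h1 (by positivity)).trans ?_
    rw [ENNReal.ofReal_rpow_of_nonneg (by positivity) (by positivity)]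
    apply ENNReal.ofReal_le_ofReal
    rw [Real.mul_rpow (by norm_num) (by positivity), ← Real.rpow_mul hq0.le,
      mul_one_div_cancel (by linarith), Real.rpow_one]
    gcongr
    calc (34:ℝ) ^ (1 / σ) ≤ (34:ℝ) ^ (1 : ℝ) := Real.rpow_le_rpow_of_exponent_le (by norm_num)
            (by rw [div_le_one (by linarith)]; linarith)
      _ = 34 := Real.rpow_one _
  refine hL.trans ?_
  have hR : ((volume U)⁻¹ * I) ^ (1 / 2 : ℝ) = ENNReal.ofReal (q / 2) := by
    have h1 : (volume U)⁻¹ * I = ENNReal.ofReal ((q / 2) ^ 2) := by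
      rw [hUdef, hvol _ (by linarith), ← ENNReal.ofReal_inv_of_pos (by positivity), hIi,
        ← ENNReal.ofReal_mul (by positivity), hiQ, ← hq2]
      congr 1; field_simp
    rw [h1, ENNReal.ofReal_pow (by positivity), ← ENNReal.rpow_natCast, ← ENNReal.rpow_mul]
    norm_num
  rw [hR, ← ENNReal.ofReal_mul (by norm_num)]
  apply ENNReal.ofReal_le_ofReal
  linarith
end

section
/- Let φ : ℂ → ℂ be a C¹ K-quasiconformal homeomorphism of ℂ onto itself. Then for every z₀ ∈ ℂ and every r > 0, the doubling inequality ∬_{D(z₀,2r)} J(z,φ) dxdy ≤ exp{Kπ²(2 + π⁴)²/(2 log 3)} · ∬_{D(z₀,r)} J(z,φ) dxdy holds; equivalently, |φ(D(z₀,2r))| ≤ exp{Kπ²(2 + π⁴)²/(2 log 3)}·|φ(D(z₀,r))|. -/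
open MeasureTheory Metric Real
open scoped ENNReal NNReal

/-- A `C¹` `K`-quasiconformal homeomorphism of `ℂ` onto itself: a `C¹`
bijection of the plane with everywhere positive Jacobian determinant satisfying
`‖Dφ(z)‖² ≤ K·J(z,φ)` everywhere. -/
def IsC1QCPlane (K : ℝ) (φ : ℂ → ℂ) : Prop :=
  ContDiff ℝ 1 φ ∧ Function.Bijective φ ∧
  ∀ z : ℂ, 0 < (fderiv ℝ φ z).det ∧ ‖fderiv ℝ φ z‖ ^ 2 ≤ K * (fderiv ℝ φ z).det


lemma qc_homeo {K : ℝ} {φ : ℂ → ℂ} (hφ : IsC1QCPlane K φ) : ∃ h : ℂ ≃ₜ ℂ, ∀ z, h z = φ z := by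
  obtain ⟨h1, h2, h3⟩ := hφ
  have hop : IsOpenMap φ := by
    rw [isOpenMap_iff_nhds_le]
    intro z
    have hs : HasStrictFDerivAt φ (fderiv ℝ φ z) z :=
      h1.contDiffAt.hasStrictFDerivAt (by norm_num)
    have hd : (fderiv ℝ φ z).det ≠ 0 := (h3 z).1.ne'
    have hu := ContinuousLinearMap.coe_toContinuousLinearEquivOfDetNeZero (fderiv ℝ φ z) hd
    rw [← hu] at hs
    exact hs.map_nhds_eq_of_equiv.ge
  exact ⟨(Equiv.ofBijective φ h2).toHomeomorphOfContinuousOpen h1.continuous hop, fun z => rfl⟩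

lemma geom (p q : ℂ) (hp : ‖p‖ = 1) (hq : ‖q‖ = 2) :
    ∃ c : ℂ, ‖q - c‖ ≤ 1 ∧ 1 ≤ ‖c‖ ∧ ‖c‖ ≤ 4 ∧ 1 ≤ ‖p - c‖ ∧ ‖p - c‖ ≤ 4 ∧
      1 / 8 ≤ |‖p - c‖ - ‖c‖| := by
  have hp2 : p.re ^ 2 + p.im ^ 2 = 1 := by
    have := Complex.sq_norm p
    rw [hp, Complex.normSq_apply] at this; nlinarith
  have hq2 : q.re ^ 2 + q.im ^ 2 = 4 := by
    have := Complex.sq_norm q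
    rw [hq, Complex.normSq_apply] at this; nlinarith
  have key : ∃ s : ℝ, s ^ 2 = 1 ∧
      1 ≤ |1 - 2 * (p.re * q.re + p.im * q.im) - s * (p.im * q.re - p.re * q.im)| := by
    set X := p.re * q.re + p.im * q.im
    set Y := p.im * q.re - p.re * q.im
    have hXY : X ^ 2 + Y ^ 2 = 4 := by
      have : X ^ 2 + Y ^ 2 = (p.re ^ 2 + p.im ^ 2) * (q.re ^ 2 + q.im ^ 2) := by
        simp only [X, Y]; ring
      rw [this, hp2, hq2]; norm_num
    by_contra hcon
    push Not at hcon
    have e1 := abs_lt.1 (hcon 1 (by norm_num))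
    have e2 := abs_lt.1 (hcon (-1) (by norm_num))
    obtain ⟨a1, a2⟩ := e1
    obtain ⟨b1, b2⟩ := e2
    have hX0 : 0 < X := by linarith
    have hX1 : X < 1 := by linarith
    have hY1 : Y < 1 := by linarith
    have hY2 : -1 < Y := by linarith
    nlinarith
  obtain ⟨s, hs, hkey⟩ := key
  set c : ℂ := ⟨q.re - s * q.im / 2, q.im + s * q.re / 2⟩ with hc
  have hqc : ‖q - c‖ ^ 2 = 1 := by
    rw [Complex.sq_norm, Complex.normSq_apply]
    simp only [hc, Complex.sub_re, Complex.sub_im]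
    linear_combination (q.re ^ 2 + q.im ^ 2) / 4 * hs + hq2 / 4
  have hcc : ‖c‖ ^ 2 = 5 := by
    rw [Complex.sq_norm, Complex.normSq_apply]
    simp only [hc]
    linear_combination (q.re ^ 2 + q.im ^ 2) / 4 * hs + hq2 * 5 / 4
  have hpc : ‖p - c‖ ^ 2 - ‖c‖ ^ 2 =
      1 - 2 * (p.re * q.re + p.im * q.im) - s * (p.im * q.re - p.re * q.im) := by
    rw [Complex.sq_norm, Complex.normSq_apply, Complex.sq_norm, Complex.normSq_apply]
    simp only [hc, Complex.sub_re, Complex.sub_im]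
    linear_combination hp2
  have hc0 := norm_nonneg c
  have h1 : ‖c‖ ≤ 2.25 := by nlinarith
  have h2 : 2.2 ≤ ‖c‖ := by nlinarith
  have h3 : ‖p - c‖ ≤ 3.25 := by
    have := norm_sub_le p c; linarith
  have h4 : 1.2 ≤ ‖p - c‖ := by
    have := norm_sub_norm_le c p
    rw [norm_sub_rev] at this; linarith
  refine ⟨c, ?_, by linarith, by linarith, by linarith, by linarith, ?_⟩
  · nlinarith [norm_nonneg (q - c)]
  · rw [← hpc] at hkey
    have : ‖p - c‖ ^ 2 - ‖c‖ ^ 2 = (‖p - c‖ - ‖c‖) * (‖p - c‖ + ‖c‖) := by ring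
    rw [this, abs_mul, abs_of_nonneg (by linarith : 0 ≤ ‖p - c‖ + ‖c‖)] at hkey
    nlinarith [abs_nonneg (‖p - c‖ - ‖c‖)]

lemma topE (h : ℂ ≃ₜ ℂ) (h0 : h 0 = 0) (p c : ℂ) (t : ℝ)
    (ht : t ∈ Set.uIcc ‖c‖ ‖p - c‖) : ∃ z, ‖z - c‖ = t ∧ ‖h z‖ ≤ ‖h p‖ := by
  have hcont : Continuous (fun s : ℝ => ‖h.symm (s • h p) - c‖) := by fun_prop
  have := intermediate_value_uIcc (a := (0:ℝ)) (b := 1) hcont.continuousOn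
  have e0 : h.symm 0 = 0 := by rw [Homeomorph.symm_apply_eq]; exact h0.symm
  simp only [zero_smul, one_smul, Homeomorph.symm_apply_apply, e0, zero_sub, norm_neg] at this
  obtain ⟨s, hs, hst⟩ := this ht
  rw [Set.uIcc_of_le zero_le_one] at hs
  refine ⟨_, hst, ?_⟩
  rw [Homeomorph.apply_symm_apply, norm_smul, Real.norm_eq_abs, abs_of_nonneg hs.1]
  nlinarith [norm_nonneg (h p), hs.2]

lemma topF (h : ℂ ≃ₜ ℂ) (q c : ℂ) (hq : h q ≠ 0) (t : ℝ)
    (ht : ‖q - c‖ ≤ t) : ∃ z, ‖z - c‖ = t ∧ ‖h q‖ ≤ ‖h z‖ := by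
  have hcont : Continuous (fun s : ℝ => ‖h.symm (s • h q) - c‖) := by fun_prop
  obtain ⟨R, hR⟩ := ((isCompact_closedBall c t).image h.continuous).isBounded.exists_norm_le
  have hqp : 0 < ‖h q‖ := norm_pos_iff.2 hq
  set s1 := max 1 ((R + 1) / ‖h q‖)
  have hs1 : 1 ≤ s1 := le_max_left _ _
  have hs2 : R + 1 ≤ s1 * ‖h q‖ := by
    rw [← div_le_iff₀ hqp]; exact le_max_right _ _
  have hbig : t ≤ ‖h.symm (s1 • h q) - c‖ := by
    by_contra hcon
    push Not at hcon
    have := hR (s1 • h q) ⟨h.symm (s1 • h q), by simpa [dist_eq_norm] using hcon.le, by simp⟩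
    rw [norm_smul, Real.norm_eq_abs, abs_of_nonneg (by linarith)] at this
    linarith
  have := intermediate_value_Icc hs1 hcont.continuousOn
  simp only [one_smul, Homeomorph.symm_apply_apply] at this
  obtain ⟨s, hs, hst⟩ := this ⟨ht, hbig⟩
  refine ⟨_, hst, ?_⟩
  rw [Homeomorph.apply_symm_apply, norm_smul, Real.norm_eq_abs, abs_of_nonneg (by linarith [hs.1])]
  nlinarith [norm_nonneg (h q), hs.1]

lemma topP (h : ℂ ≃ₜ ℂ) (h0 : h 0 = 0) : ∃ p : ℂ, ‖p‖ = 1 ∧ ball 0 ‖h p‖ ⊆ h '' ball 0 1 := by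
  obtain ⟨p, hp, hmin⟩ := (isCompact_sphere (0:ℂ) 1).exists_isMinOn
    ⟨1, by simp⟩ (f := fun z => ‖h z‖) (by fun_prop)
  refine ⟨p, by simpa using hp, fun w hw => ?_⟩
  refine ⟨h.symm w, ?_, by simp⟩
  by_contra hcon
  have h1 : 1 ≤ ‖h.symm w‖ := by simpa using hcon
  obtain ⟨z, hz, hz2⟩ := topE h h0 (h.symm w) 0 1 (by
    rw [Set.mem_uIcc]; left; simpa using h1)
  have := hmin (show z ∈ sphere (0:ℂ) 1 by simpa using hz)
  simp at this hz2 hw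
  linarith

lemma topQ (h : ℂ ≃ₜ ℂ) (h0 : h 0 = 0) : ∃ q : ℂ, ‖q‖ = 2 ∧
    h '' ball 0 2 ⊆ closedBall 0 ‖h q‖ := by
  obtain ⟨p, hp, hmax⟩ := (isCompact_closedBall (0:ℂ) 2).exists_isMaxOn
    ⟨2, by simp⟩ (f := fun z => ‖h z‖) (by fun_prop)
  have hp0 : h p ≠ 0 := by
    intro hp0
    have := hmax (show (1:ℂ) ∈ closedBall (0:ℂ) 2 by simp)
    simp [hp0] at this
    rw [← h0] at this
    simpa using h.injective this
  obtain ⟨q, hq, hq2⟩ := topF h p 0 hp0 2 (by simpa using hp)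
  refine ⟨q, by simpa using hq, ?_⟩
  rintro _ ⟨z, hz, rfl⟩
  have := hmax (ball_subset_closedBall hz)
  simp at this ⊢
  linarith

/-- The potential on the image side. -/
noncomputable def pot (m M : ℝ) (s : ℝ) : ℝ := (Real.log (m ^ 2 + s) - Real.log (M ^ 2 + s)) / 2

/-- The density on the image side. -/
noncomputable def dens (m M : ℝ) (w : ℂ) : ℝ :=
  (M ^ 2 - m ^ 2) / ((m ^ 2 + ‖w‖ ^ 2) * (M ^ 2 + ‖w‖ ^ 2))

lemma dens_nonneg {m M : ℝ} (hm : 0 < m) (hM : m < M) (w : ℂ) : 0 ≤ dens m M w := by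
  unfold dens
  have : 0 ≤ M ^ 2 - m ^ 2 := by nlinarith
  positivity

lemma dens_cont {m M : ℝ} (hm : 0 < m) (hM : m < M) : Continuous (dens m M) := by
  unfold dens
  have : 0 < M := hm.trans hM
  refine Continuous.div (by fun_prop) (by fun_prop) fun w => ?_
  positivity

lemma pot_deriv {m M : ℝ} (hm : 0 < m) (hM : m < M) {s : ℝ} (hs : 0 ≤ s) :
    HasDerivAt (pot m M) ((M ^ 2 - m ^ 2) / ((m ^ 2 + s) * (M ^ 2 + s)) / 2) s := by
  have hM0 : 0 < M := hm.trans hM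
  have h1 : m ^ 2 + s ≠ 0 := by positivity
  have h2 : M ^ 2 + s ≠ 0 := by positivity
  have d1 := ((hasDerivAt_id s).const_add (m ^ 2)).log h1
  have d2 := ((hasDerivAt_id s).const_add (M ^ 2)).log h2
  have := (d1.sub d2).div_const 2
  refine this.congr_deriv ?_
  simp only [id]
  field_simp
  ring

lemma pot_mono {m M : ℝ} (hm : 0 < m) (hM : m < M) {s t : ℝ} (hs : 0 ≤ s) (hst : s ≤ t) :
    pot m M s ≤ pot m M t := by
  have : MonotoneOn (pot m M) (Set.Ici 0) := by
    refine monotoneOn_of_hasDerivWithinAt_nonneg (convex_Ici 0)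
      (fun x hx => (pot_deriv hm hM hx).continuousAt.continuousWithinAt)
      (fun x hx => (pot_deriv hm hM (interior_subset hx)).hasDerivWithinAt) (fun x hx => ?_)
    have hx0 : 0 ≤ x := interior_subset hx
    have : 0 ≤ M ^ 2 - m ^ 2 := by nlinarith
    positivity
  exact this hs (hs.trans hst) hst

lemma pot_gap {m M : ℝ} (hm : 0 < m) (hM : m < M) :
    Real.log (M / m) - Real.log 2 ≤ pot m M (M ^ 2) - pot m M (m ^ 2) := by
  have hM0 : 0 < M := hm.trans hM
  unfold pot
  have e1 : Real.log (m ^ 2 + m ^ 2) = Real.log 2 + 2 * Real.log m := by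
    rw [← two_mul, Real.log_mul (by norm_num) (by positivity), Real.log_pow]; norm_num
  have e2 : Real.log (M ^ 2 + M ^ 2) = Real.log 2 + 2 * Real.log M := by
    rw [← two_mul, Real.log_mul (by norm_num) (by positivity), Real.log_pow]; norm_num
  have e3 : 2 * Real.log M ≤ Real.log (m ^ 2 + M ^ 2) := by
    have : 2 * Real.log M = Real.log (M ^ 2) := by rw [Real.log_pow]; norm_num
    rw [this]
    exact Real.log_le_log (by positivity) (by nlinarith)
  rw [e1, e2, Real.log_div hM0.ne' hm.ne', add_comm (M ^ 2) (m ^ 2)]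
  linarith

lemma radial {m M : ℝ} (hm : 0 < m) (hM : m < M) :
    ∫⁻ x in Set.Ioi (0:ℝ), ENNReal.ofReal (x * ((M ^ 2 - m ^ 2) / ((m ^ 2 + x ^ 2) * (M ^ 2 + x ^ 2))))
      = ENNReal.ofReal (Real.log (M / m)) := by
  have hM0 : 0 < M := hm.trans hM
  have hd : ∀ x ∈ Set.Ici (0:ℝ), HasDerivAt (fun x : ℝ => pot m M (x ^ 2))
      (x * ((M ^ 2 - m ^ 2) / ((m ^ 2 + x ^ 2) * (M ^ 2 + x ^ 2)))) x := by
    intro x hx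
    have := HasDerivAt.comp (h := fun y : ℝ => y ^ 2) x (pot_deriv hm hM (sq_nonneg x))
      (hasDerivAt_pow 2 x)
    refine this.congr_deriv ?_
    push_cast
    ring
  have hpos : ∀ x ∈ Set.Ioi (0:ℝ),
      0 ≤ x * ((M ^ 2 - m ^ 2) / ((m ^ 2 + x ^ 2) * (M ^ 2 + x ^ 2))) := by
    intro x hx
    have hx : 0 < x := hx
    have : 0 ≤ M ^ 2 - m ^ 2 := by nlinarith
    positivity
  have hlim : Filter.Tendsto (fun x : ℝ => pot m M (x ^ 2)) Filter.atTop (nhds 0) := by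
    have h1 : Filter.Tendsto (fun x : ℝ => M ^ 2 + x ^ 2) Filter.atTop Filter.atTop :=
      Filter.tendsto_atTop_add_const_left _ _ (Filter.tendsto_pow_atTop (by norm_num))
    have h2 : Filter.Tendsto (fun x : ℝ => 1 - (M ^ 2 - m ^ 2) * (M ^ 2 + x ^ 2)⁻¹)
        Filter.atTop (nhds (1 - (M ^ 2 - m ^ 2) * 0)) :=
      tendsto_const_nhds.sub (h1.inv_tendsto_atTop.const_mul _)
    have h3 := (h2.log (by norm_num)).div_const 2
    simp only [mul_zero, sub_zero, Real.log_one, zero_div] at h3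
    refine h3.congr fun x => ?_
    unfold pot
    rw [← Real.log_div (by positivity) (by positivity)]
    congr 2
    field_simp
    ring
  have hi := integrableOn_Ioi_deriv_of_nonneg' hd hpos hlim
  have hv := integral_Ioi_of_hasDerivAt_of_nonneg' hd hpos hlim
  rw [← ofReal_integral_eq_lintegral_ofReal hi
    ((ae_restrict_iff' measurableSet_Ioi).2 (Filter.Eventually.of_forall hpos)), hv]
  congr 1
  unfold pot
  rw [Real.log_div hM0.ne' hm.ne']
  simp
  ring

lemma dens_total {m M : ℝ} (hm : 0 < m) (hM : m < M) :
    ∫⁻ w, ENNReal.ofReal (dens m M w) ≤ ENNReal.ofReal (2 * π * Real.log (M / m)) := by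
  rw [← Complex.lintegral_comp_polarCoord_symm]
  have htar : polarCoord.target = Set.Ioi (0:ℝ) ×ˢ Set.Ioo (-π) π := rfl
  rw [htar, Measure.volume_eq_prod, ← Measure.prod_restrict]
  refine (lintegral_prod_le _).trans ?_
  have hint : ∀ x ∈ Set.Ioi (0:ℝ), (∫⁻ y in Set.Ioo (-π) π, ENNReal.ofReal (x, y).1 •
      ENNReal.ofReal (dens m M (Complex.polarCoord.symm (x, y)))) =
      ENNReal.ofReal (x * ((M ^ 2 - m ^ 2) / ((m ^ 2 + x ^ 2) * (M ^ 2 + x ^ 2)))) *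
        ENNReal.ofReal (2 * π) := by
    intro x hx
    have hx : 0 < x := hx
    unfold dens
    simp only [Complex.norm_polarCoord_symm, sq_abs, smul_eq_mul]
    rw [lintegral_const, Measure.restrict_apply MeasurableSet.univ, Set.univ_inter,
      Real.volume_Ioo, ENNReal.ofReal_mul hx.le]
    congr 2
    ring
  rw [setLIntegral_congr_fun measurableSet_Ioi hint, lintegral_mul_const' _ _ ENNReal.ofReal_ne_top,
    radial hm hM, mul_comm, ← ENNReal.ofReal_mul (by positivity)]

lemma energy {K : ℝ} (hK : 1 ≤ K) {φ : ℂ → ℂ} (hφ : IsC1QCPlane K φ)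
    {m M : ℝ} (hm : 0 < m) (hM : m < M) :
    ∫⁻ z, ENNReal.ofReal (dens m M (φ z) * ‖fderiv ℝ φ z‖ ^ 2) ≤
      ENNReal.ofReal (K * (2 * π * Real.log (M / m))) := by
  have hc := lintegral_image_eq_lintegral_abs_det_fderiv_mul (volume : Measure ℂ)
    (s := Set.univ) (f := φ) (f' := fderiv ℝ φ) MeasurableSet.univ
    (fun x _ => ((hφ.1.differentiable (by norm_num)) x).hasFDerivAt.hasFDerivWithinAt)
    (hφ.2.1.injective.injOn) (fun w => ENNReal.ofReal (dens m M w))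
  rw [Set.image_univ_of_surjective hφ.2.1.surjective] at hc
  simp only [Measure.restrict_univ] at hc
  calc _ ≤ ∫⁻ z, ENNReal.ofReal K * (ENNReal.ofReal |(fderiv ℝ φ z).det| *
        ENNReal.ofReal (dens m M (φ z))) := by
        refine lintegral_mono fun z => ?_
        rw [← ENNReal.ofReal_mul (by positivity), ← ENNReal.ofReal_mul (by positivity)]
        refine ENNReal.ofReal_le_ofReal ?_
        obtain ⟨h1, h2⟩ := hφ.2.2 z
        rw [abs_of_pos h1]
        nlinarith [mul_le_mul_of_nonneg_left h2 (dens_nonneg hm hM (φ z))]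
    _ = ENNReal.ofReal K * ∫⁻ w, ENNReal.ofReal (dens m M w) := by
        rw [lintegral_const_mul' _ _ ENNReal.ofReal_ne_top, hc]
    _ ≤ _ := by
        rw [ENNReal.ofReal_mul (by positivity)]
        gcongr
        exact dens_total hm hM

/-- Parametrised circle. -/
noncomputable def circ (c : ℂ) (t θ : ℝ) : ℂ := c + Complex.polarCoord.symm (t, θ)

lemma circ_eq (c : ℂ) (t θ : ℝ) :
    circ c t θ = c + t * (Real.cos θ + Real.sin θ * Complex.I) := by
  simp [circ]

lemma circ_cont (c : ℂ) (t : ℝ) : Continuous (circ c t) := by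
  have : circ c t = fun θ : ℝ => c + t * (Real.cos θ + Real.sin θ * Complex.I) :=
    funext fun θ => circ_eq c t θ
  rw [this]
  fun_prop

lemma circ_deriv (c : ℂ) {t : ℝ} (ht : 0 < t) (θ : ℝ) :
    ∃ v : ℂ, ‖v‖ = t ∧ HasDerivAt (circ c t) v θ := by
  have h0 : circ c t = fun θ : ℝ => c + t * (Real.cos θ + Real.sin θ * Complex.I) :=
    funext fun θ => circ_eq c t θ
  refine ⟨t * (((-Real.sin θ : ℝ) : ℂ) + Real.cos θ * Complex.I), ?_, ?_⟩
  · have : ((-Real.sin θ : ℝ) : ℂ) + Real.cos θ * Complex.I =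
        (Real.cos θ + Real.sin θ * Complex.I) * Complex.I := by
      rw [Complex.ofReal_neg]
      linear_combination -((Real.sin θ : ℝ) : ℂ) * Complex.I_sq
    rw [this, norm_mul, norm_mul, Complex.norm_I, Complex.ofReal_cos, Complex.ofReal_sin,
      Complex.norm_cos_add_sin_mul_I]
    simp [abs_of_pos ht]
  · rw [h0]
    have h1 : HasDerivAt (fun θ : ℝ => ((Real.cos θ : ℝ) : ℂ)) ((-Real.sin θ : ℝ) : ℂ) θ :=
      (Real.hasDerivAt_cos θ).ofReal_comp
    have h2 : HasDerivAt (fun θ : ℝ => ((Real.sin θ : ℝ) : ℂ)) ((Real.cos θ : ℝ) : ℂ) θ :=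
      (Real.hasDerivAt_sin θ).ofReal_comp
    exact ((h1.add (h2.mul_const Complex.I)).const_mul (t : ℂ)).const_add c

lemma circ_surj (c z : ℂ) {t : ℝ} (h : ‖z - c‖ = t) :
    ∃ θ ∈ Set.Icc (-π) π, circ c t θ = z := by
  refine ⟨Complex.arg (z - c), ⟨(Complex.neg_pi_lt_arg _).le, Complex.arg_le_pi _⟩, ?_⟩
  rw [circ_eq, ← h, Complex.ofReal_cos, Complex.ofReal_sin, Complex.norm_mul_cos_add_sin_mul_I]
  ring

/-- pointwise derivative bound -/
lemma along_deriv {φ : ℂ → ℂ} (hφ : ContDiff ℝ 1 φ) {m M : ℝ} (hm : 0 < m) (hM : m < M)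
    (c : ℂ) {t : ℝ} (ht : 0 < t) (θ : ℝ) :
    ∃ d : ℝ, HasDerivAt (fun θ => pot m M (‖φ (circ c t θ)‖ ^ 2)) d θ ∧
      d ^ 2 ≤ t ^ 2 * (dens m M (φ (circ c t θ)) * ‖fderiv ℝ φ (circ c t θ)‖ ^ 2) := by
  obtain ⟨v, hv, hd⟩ := circ_deriv c ht θ
  have hM0 : 0 < M := hm.trans hM
  have h1 : HasDerivAt (fun θ => φ (circ c t θ)) (fderiv ℝ φ (circ c t θ) v) θ :=
    ((hφ.differentiable (by norm_num)) _).hasFDerivAt.comp_hasDerivAt θ hd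
  have h2 := h1.norm_sq
  have h3 := HasDerivAt.comp (h := fun θ => ‖φ (circ c t θ)‖ ^ 2) θ
    (pot_deriv hm hM (sq_nonneg ‖φ (circ c t θ)‖)) h2
  refine ⟨_, h3, ?_⟩
  set w := φ (circ c t θ)
  set A := fderiv ℝ φ (circ c t θ)
  have e : (M ^ 2 - m ^ 2) / ((m ^ 2 + ‖w‖ ^ 2) * (M ^ 2 + ‖w‖ ^ 2)) / 2 * (2 * inner ℝ w (A v)) =
      dens m M w * inner ℝ w (A v) := by
    unfold dens; ring
  rw [e]
  have hg := dens_nonneg hm hM w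
  have hg1 : dens m M w * ‖w‖ ^ 2 ≤ 1 := by
    unfold dens
    rw [div_mul_eq_mul_div, div_le_one (by positivity)]
    have a1 : M ^ 2 - m ^ 2 ≤ M ^ 2 + ‖w‖ ^ 2 := by nlinarith [sq_nonneg ‖w‖]
    have a2 : ‖w‖ ^ 2 ≤ m ^ 2 + ‖w‖ ^ 2 := by nlinarith
    rw [mul_comm (m ^ 2 + ‖w‖ ^ 2)]
    exact mul_le_mul a1 a2 (by positivity) (by positivity)
  have hi : (inner ℝ w (A v)) ^ 2 ≤ (‖w‖ * (‖A‖ * t)) ^ 2 := by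
    rw [← sq_abs (inner ℝ w (A v))]
    have b1 := abs_real_inner_le_norm w (A v)
    have b2 := A.le_opNorm v
    rw [hv] at b2
    have b3 : ‖w‖ * ‖A v‖ ≤ ‖w‖ * (‖A‖ * t) := by gcongr
    exact pow_le_pow_left₀ (abs_nonneg _) (b1.trans b3) 2
  calc (dens m M w * inner ℝ w (A v)) ^ 2 = dens m M w ^ 2 * (inner ℝ w (A v)) ^ 2 := by ring
    _ ≤ dens m M w ^ 2 * (‖w‖ * (‖A‖ * t)) ^ 2 := by gcongr
    _ = (dens m M w * ‖w‖ ^ 2) * (t ^ 2 * (dens m M w * ‖A‖ ^ 2)) := by ring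
    _ ≤ 1 * (t ^ 2 * (dens m M w * ‖A‖ ^ 2)) := by gcongr
    _ = _ := one_mul _

lemma Q_cont {φ : ℂ → ℂ} (hφ : ContDiff ℝ 1 φ) {m M : ℝ} (hm : 0 < m) (hM : m < M) :
    Continuous (fun z => dens m M (φ z) * ‖fderiv ℝ φ z‖ ^ 2) :=
  ((dens_cont hm hM).comp hφ.continuous).mul
    (((hφ.continuous_fderiv (by norm_num)).norm).pow 2)

lemma osc_general {f I : ℝ → ℝ} (hI : Continuous I)
    (hf : ∀ x, ∃ d, HasDerivAt f d x ∧ d ^ 2 ≤ I x) {x y S : ℝ} (hx : x ∈ Set.Icc (-π) π)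
    (hy : y ∈ Set.Icc (-π) π) (hS : 0 < S) (hxy : S ≤ f y - f x) :
    S ^ 2 / (2 * π) ≤ ∫ θ in (-π)..π, I θ := by
  have hpi := Real.pi_pos
  choose d hd hdI using hf
  have hI0 : ∀ x, 0 ≤ I x := fun x => (sq_nonneg _).trans (hdI x)
  set q : ℝ → ℝ := fun θ => π / S * I θ + S / (4 * π) with hq
  have hqc : Continuous q := by fun_prop
  have hdq : ∀ θ, |d θ| ≤ q θ := by
    intro θ
    have h1 := hdI θ
    rw [← sq_abs] at h1
    have h2 : |d θ| ≤ π / S * |d θ| ^ 2 + S / (4 * π) := by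
      have : π / S * |d θ| ^ 2 + S / (4 * π) - |d θ| =
        (2 * π * |d θ| - S) ^ 2 / (4 * π * S) := by field_simp; ring
      have h3 : 0 ≤ (2 * π * |d θ| - S) ^ 2 / (4 * π * S) := by positivity
      linarith
    have h4 : π / S * |d θ| ^ 2 ≤ π / S * I θ := by gcongr
    simp only [hq]
    linarith
  set F : ℝ → ℝ := fun u => ∫ θ in (-π)..u, q θ with hF
  have hFd : ∀ u, HasDerivAt F (q u) u := fun u =>
    intervalIntegral.integral_hasDerivAt_right (hqc.intervalIntegrable _ _)
      (hqc.stronglyMeasurableAtFilter _ _) hqc.continuousAt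
  have hq0 : ∀ u, 0 ≤ q u := fun u => (abs_nonneg _).trans (hdq u)
  have hmF : Monotone F := monotone_of_hasDerivAt_nonneg hFd hq0
  have hm1 : Monotone (fun u => F u - f u) :=
    monotone_of_hasDerivAt_nonneg (fun u => (hFd u).sub (hd u))
      (fun u => by have := (abs_le.1 (hdq u)).2; simp; linarith)
  have hm2 : Monotone (fun u => F u + f u) :=
    monotone_of_hasDerivAt_nonneg (fun u => (hFd u).add (hd u))
      (fun u => by have := (abs_le.1 (hdq u)).1; simp; linarith)
  have hF0 : F (-π) = 0 := by simp [hF]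
  have hle : f y - f x ≤ F π := by
    have a1 := hmF hx.1
    have a2 := hmF hx.2
    have a3 := hmF hy.1
    have a4 := hmF hy.2
    rcases le_total x y with h | h
    · have := hm1 h
      simp only at this
      linarith
    · have := hm2 h
      simp only at this
      linarith
  have hFpi : F π = π / S * (∫ θ in (-π)..π, I θ) + S / 2 := by
    simp only [hF, hq]
    rw [intervalIntegral.integral_add ((hI.const_mul _).intervalIntegrable _ _)
      (continuous_const.intervalIntegrable _ _), intervalIntegral.integral_const_mul,
      intervalIntegral.integral_const]
    simp only [smul_eq_mul]
    field_simp
    ring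
  rw [hFpi] at hle
  have h5 : S / 2 ≤ π / S * (∫ θ in (-π)..π, I θ) := by linarith
  calc S ^ 2 / (2 * π) = S / π * (S / 2) := by field_simp
    _ ≤ S / π * (π / S * (∫ θ in (-π)..π, I θ)) := by gcongr
    _ = _ := by field_simp

lemma circle_bound {φ : ℂ → ℂ} (hφ : ContDiff ℝ 1 φ) {m M : ℝ} (hm : 0 < m) (hM : m < M)
    (c : ℂ) {t : ℝ} (ht : 0 < t) {z w : ℂ} (hz : ‖z - c‖ = t) (hw : ‖w - c‖ = t)
    (hzm : ‖φ z‖ ≤ m) (hwM : M ≤ ‖φ w‖) {S : ℝ} (hS : 0 < S)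
    (hSL : S ≤ Real.log (M / m) - Real.log 2) :
    S ^ 2 / (2 * π) ≤ ∫ θ in (-π)..π, t ^ 2 * (dens m M (φ (circ c t θ)) *
      ‖fderiv ℝ φ (circ c t θ)‖ ^ 2) := by
  have hM0 : 0 < M := hm.trans hM
  obtain ⟨x, hx, rfl⟩ := circ_surj c z hz
  obtain ⟨y, hy, rfl⟩ := circ_surj c w hw
  refine osc_general (f := fun θ => pot m M (‖φ (circ c t θ)‖ ^ 2))
    (((Q_cont hφ hm hM).comp (circ_cont c t)).const_mul (t ^ 2))
    (along_deriv hφ hm hM c ht) hx hy hS ?_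
  have h1 := pot_gap hm hM
  have h2 := pot_mono hm hM (sq_nonneg ‖φ (circ c t x)‖)
    (pow_le_pow_left₀ (norm_nonneg _) hzm 2)
  have h3 := pot_mono hm hM (sq_nonneg M) (pow_le_pow_left₀ hM0.le hwM 2)
  linarith

lemma polar_lower {Q : ℂ → ℝ} (hQ : Continuous Q) (hQ0 : ∀ z, 0 ≤ Q z) (c : ℂ) {a b B : ℝ}
    (ha : 1 ≤ a) (hab : a ≤ b) (hb : b ≤ 4)
    (h : ∀ t ∈ Set.Icc a b, B ≤ ∫ θ in (-π)..π, t ^ 2 * Q (circ c t θ)) (hB : 0 ≤ B) :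
    ENNReal.ofReal (B / 4 * (b - a)) ≤ ∫⁻ z, ENNReal.ofReal (Q z) := by
  have hpi := Real.pi_pos
  rw [← lintegral_add_left_eq_self (fun z => ENNReal.ofReal (Q z)) c,
    ← Complex.lintegral_comp_polarCoord_symm]
  have htar : polarCoord.target = Set.Ioi (0:ℝ) ×ˢ Set.Ioo (-π) π := rfl
  rw [htar, Measure.volume_eq_prod, ← Measure.prod_restrict, lintegral_prod]
  swap
  · have : Measurable fun p : ℝ × ℝ => (ENNReal.ofReal p.1 •
        ENNReal.ofReal (Q (c + Complex.polarCoord.symm p))) := by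
      simp only [Complex.polarCoord_symm_apply, smul_eq_mul]
      refine Measurable.mul (by fun_prop) (ENNReal.measurable_ofReal.comp ?_)
      refine Continuous.measurable (hQ.comp (by fun_prop))
    exact this.aemeasurable
  calc ENNReal.ofReal (B / 4 * (b - a)) = ∫⁻ x in Set.Icc a b, ENNReal.ofReal (B / 4) := by
        rw [setLIntegral_const, Real.volume_Icc, ENNReal.ofReal_mul (by positivity)]
    _ ≤ ∫⁻ x in Set.Icc a b, ∫⁻ y in Set.Ioo (-π) π, ENNReal.ofReal (x, y).1 •
        ENNReal.ofReal (Q (c + Complex.polarCoord.symm (x, y))) := by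
        refine setLIntegral_mono' measurableSet_Icc fun x hx => ?_
        have hx0 : 0 < x := by linarith [hx.1]
        have hcont : Continuous fun y => x * Q (circ c x y) :=
          (hQ.comp (circ_cont c x)).const_mul x
        have e1 : ∫⁻ y in Set.Ioo (-π) π, ENNReal.ofReal (x, y).1 •
            ENNReal.ofReal (Q (c + Complex.polarCoord.symm (x, y))) =
            ∫⁻ y in Set.Ioc (-π) π, ENNReal.ofReal (x * Q (circ c x y)) := by
          rw [Measure.restrict_congr_set Ioo_ae_eq_Ioc]
          refine lintegral_congr fun y => ?_
          rw [ENNReal.ofReal_mul hx0.le, smul_eq_mul, circ]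
        rw [e1, ← ofReal_integral_eq_lintegral_ofReal
          ((hcont.intervalIntegrable (-π) π).1)
          (Filter.Eventually.of_forall fun y => mul_nonneg hx0.le (hQ0 _)),
          ← intervalIntegral.integral_of_le (by linarith)]
        refine ENNReal.ofReal_le_ofReal ?_
        have h1 := h x hx
        rw [intervalIntegral.integral_const_mul] at h1 ⊢
        set J := ∫ y in (-π)..π, Q (circ c x y)
        have hJ : 0 ≤ J := intervalIntegral.integral_nonneg (by linarith) fun y _ => hQ0 _
        have hx4 : x ≤ 4 := hx.2.trans hb
        have : x ^ 2 * J ≤ 4 * (x * J) := by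
          nlinarith [mul_nonneg hx0.le hJ]
        linarith
    _ ≤ _ := by
        refine lintegral_mono_set fun x hx => ?_
        exact lt_of_lt_of_le (by linarith) hx.1

lemma main_norm {K : ℝ} (hK : 1 ≤ K) {φ : ℂ → ℂ} (hφ : IsC1QCPlane K φ) (h0 : φ 0 = 0) :
    ∃ m M : ℝ, 0 < m ∧ 0 < M ∧ ball 0 m ⊆ φ '' ball 0 1 ∧ φ '' ball 0 2 ⊆ closedBall 0 M ∧
      Real.log (M / m) ≤ 512 * π ^ 2 * K := by
  have hpi := Real.pi_gt_three
  obtain ⟨h, hh⟩ := qc_homeo hφ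
  have hh' : φ = h := funext fun z => (hh z).symm
  have h0' : h 0 = 0 := by rw [hh, h0]
  obtain ⟨p, hp, hpb⟩ := topP h h0'
  obtain ⟨q, hq, hqb⟩ := topQ h h0'
  have hpos : ∀ z, z ≠ 0 → 0 < ‖h z‖ := fun z hz => norm_pos_iff.2 fun hz0 =>
    hz (h.injective (hz0.trans h0'.symm))
  have hm : 0 < ‖h p‖ := hpos p (by rintro rfl; simp at hp)
  have hM0 : 0 < ‖h q‖ := hpos q (by rintro rfl; simp at hq)
  refine ⟨‖h p‖, ‖h q‖, hm, hM0, by rw [hh']; exact hpb, by rw [hh']; exact hqb, ?_⟩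
  set m := ‖h p‖ with hm_def
  set M := ‖h q‖ with hM_def
  set L := Real.log (M / m) with hL
  have hlog2 := Real.log_two_lt_d9
  have hlog2' := Real.log_two_gt_d9
  by_cases hcase : L ≤ 2 * Real.log 2
  · nlinarith
  push Not at hcase
  have hM : m < M := by
    have : 0 < Real.log (M / m) := by linarith
    have h1 := (Real.log_pos_iff (by positivity)).1 this
    rwa [one_lt_div hm] at h1
  obtain ⟨c, hc1, hc2, hc3, hc4, hc5, hc6⟩ := geom p q hp hq
  set S := L / 2 with hS
  have hS0 : 0 < S := by linarith
  have hcirc : ∀ t ∈ Set.uIcc ‖c‖ ‖p - c‖, S ^ 2 / (2 * π) ≤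
      ∫ θ in (-π)..π, t ^ 2 * (dens m M (φ (circ c t θ)) * ‖fderiv ℝ φ (circ c t θ)‖ ^ 2) := by
    intro t ht
    have ht1 : 1 ≤ t := (le_min hc2 hc4).trans ht.1
    obtain ⟨z, hz, hz2⟩ := topE h h0' p c t ht
    obtain ⟨w, hw, hw2⟩ := topF h q c (norm_pos_iff.1 hM0) t (hc1.trans ht1)
    exact circle_bound hφ.1 hm hM c (by linarith) hz hw (by rw [← hh]; exact hz2)
      (by rw [← hh]; exact hw2) hS0 (by linarith)
  have hlow := polar_lower (Q_cont hφ.1 hm hM)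
    (fun z => mul_nonneg (dens_nonneg hm hM _) (sq_nonneg _)) c
    (le_min hc2 hc4) min_le_max (max_le hc3 hc5) hcirc (by positivity)
  have hfin := hlow.trans (energy hK hφ hm hM)
  rw [ENNReal.ofReal_le_ofReal_iff (by have : 0 < L := by linarith
                                       positivity), max_sub_min_eq_abs'] at hfin
  rw [abs_sub_comm] at hfin
  have h8 : S ^ 2 / (2 * π) / 4 * (1 / 8) ≤ K * (2 * π * L) := le_trans (by gcongr) hfin
  have h9 : S ^ 2 / (2 * π) / 4 * (1 / 8) = L * (L / (256 * π)) := by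
    rw [hS]; field_simp; ring
  rw [h9] at h8
  have hL0 : 0 < L := by linarith
  have h10 : L / (256 * π) ≤ K * (2 * π) := by
    refine le_of_mul_le_mul_left ?_ hL0
    linarith
  rw [div_le_iff₀ (by positivity)] at h10
  linarith

lemma qc_rescale {K : ℝ} {φ : ℂ → ℂ} (hφ : IsC1QCPlane K φ) (z₀ : ℂ) {r : ℝ} (hr : 0 < r) :
    IsC1QCPlane K (fun z => r⁻¹ • (φ (z₀ + r • z) - φ z₀)) := by
  obtain ⟨h1, h2, h3⟩ := hφ
  have hd : ∀ z, fderiv ℝ (fun z => r⁻¹ • (φ (z₀ + r • z) - φ z₀)) z = fderiv ℝ φ (z₀ + r • z) := by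
    intro z
    have e1 : HasFDerivAt (fun z : ℂ => z₀ + r • z) (r • ContinuousLinearMap.id ℝ ℂ) z :=
      ((hasFDerivAt_id z).const_smul r).const_add z₀
    have e2 := ((h1.differentiable (by norm_num)) (z₀ + r • z)).hasFDerivAt
    have e3 := ((HasFDerivAt.comp z e2 e1).sub_const (φ z₀)).const_smul r⁻¹
    refine (HasFDerivAt.fderiv e3).trans ?_
    ext v <;> simp [hr.ne']
  refine ⟨?_, ⟨?_, ?_⟩, fun z => by rw [hd]; exact h3 _⟩
  · have : ContDiff ℝ 1 (fun z => φ (z₀ + r • z)) := h1.comp (by fun_prop)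
    fun_prop
  · intro x y hxy
    have := smul_right_injective ℂ (inv_ne_zero hr.ne') hxy
    have := h2.injective (sub_left_injective this)
    exact smul_right_injective ℂ hr.ne' (add_right_injective _ this)
  · intro w
    obtain ⟨z, hz⟩ := h2.surjective (φ z₀ + r • w)
    refine ⟨r⁻¹ • (z - z₀), ?_⟩
    simp [hr.ne', hz]

lemma vol_image {K : ℝ} {φ : ℂ → ℂ} (hφ : IsC1QCPlane K φ) (s : Set ℂ) (hs : MeasurableSet s) :
    ∫⁻ z in s, ENNReal.ofReal (fderiv ℝ φ z).det = volume (φ '' s) := by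
  rw [← lintegral_abs_det_fderiv_eq_addHaar_image (volume : Measure ℂ) (f' := fderiv ℝ φ) hs
    (fun x _ => ((hφ.1.differentiable (by norm_num)) x).hasFDerivAt.hasFDerivWithinAt)
    (hφ.2.1.injective.injOn)]
  refine lintegral_congr fun z => ?_
  rw [abs_of_pos (hφ.2.2 z).1]

lemma const_bound {K L : ℝ} (hK : 1 ≤ K) (hL : L ≤ 512 * π ^ 2 * K) :
    2 * L ≤ K * π ^ 2 * (2 + π ^ 4) ^ 2 / (2 * Real.log 3) := by
  have hpi := Real.pi_gt_three
  have h3 : Real.log 3 ≤ 2 := by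
    have := Real.log_le_sub_one_of_pos (show (0:ℝ) < 3 by norm_num); linarith
  have h3' : 0 < Real.log 3 := Real.log_pos (by norm_num)
  have h4 : (81:ℝ) ≤ π ^ 4 := by
    have := pow_le_pow_left₀ (by norm_num) hpi.le 4
    linarith
  rw [le_div_iff₀ (by positivity)]
  have h5 : (6889:ℝ) ≤ (2 + π ^ 4) ^ 2 := by nlinarith
  have hX : 0 ≤ K * π ^ 2 := by positivity
  calc 2 * L * (2 * Real.log 3) ≤ 2 * (512 * π ^ 2 * K) * (2 * Real.log 3) := by gcongr
    _ ≤ 2 * (512 * π ^ 2 * K) * (2 * 2) := by gcongr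
    _ = K * π ^ 2 * 4096 := by ring
    _ ≤ K * π ^ 2 * (2 + π ^ 4) ^ 2 := by gcongr; linarith

lemma vol_doubling {K : ℝ} (hK : 1 ≤ K) {φ : ℂ → ℂ} (hφ : IsC1QCPlane K φ) (z₀ : ℂ) {r : ℝ}
    (hr : 0 < r) :
    volume (φ '' Metric.ball z₀ (2 * r))
        ≤ ENNReal.ofReal (Real.exp (K * π ^ 2 * (2 + π ^ 4) ^ 2 / (2 * Real.log 3))) *
          volume (φ '' Metric.ball z₀ r) ∧ volume (φ '' Metric.ball z₀ (2 * r)) < ⊤ := by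
  obtain ⟨m, M, hm, hM, h1, h2, h3⟩ := main_norm hK (qc_rescale hφ z₀ hr) (by simp)
  have i1 : ball (φ z₀) (r * m) ⊆ φ '' ball z₀ r := by
    intro w hw
    have hw' : r⁻¹ • (w - φ z₀) ∈ ball (0:ℂ) m := by
      rw [mem_ball, dist_eq_norm] at hw
      rw [mem_ball_zero_iff, norm_smul, norm_inv, Real.norm_eq_abs, abs_of_pos hr,
        inv_mul_lt_iff₀ hr]
      exact hw
    obtain ⟨z, hz, hzw⟩ := h1 hw'
    refine ⟨z₀ + r • z, ?_, ?_⟩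
    · rw [mem_ball_zero_iff] at hz
      rw [mem_ball, dist_eq_norm, add_sub_cancel_left, norm_smul, Real.norm_eq_abs, abs_of_pos hr]
      nlinarith
    · exact sub_left_injective (smul_right_injective ℂ (inv_ne_zero hr.ne') hzw)
  have i2 : φ '' ball z₀ (2 * r) ⊆ closedBall (φ z₀) (r * M) := by
    rintro _ ⟨z, hz, rfl⟩
    have hz' : r⁻¹ • (z - z₀) ∈ ball (0:ℂ) 2 := by
      rw [mem_ball, dist_eq_norm] at hz
      rw [mem_ball_zero_iff, norm_smul, norm_inv, Real.norm_eq_abs, abs_of_pos hr,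
        inv_mul_lt_iff₀ hr]
      linarith
    have := h2 ⟨_, hz', rfl⟩
    simp only [smul_smul, mul_inv_cancel₀ hr.ne', one_smul, add_sub_cancel] at this
    rw [mem_closedBall_zero_iff, norm_smul, norm_inv, Real.norm_eq_abs, abs_of_pos hr,
      inv_mul_le_iff₀ hr] at this
    rwa [mem_closedBall, dist_eq_norm]
  have v2 := measure_mono (μ := volume) i2
  have v1 := measure_mono (μ := volume) i1
  rw [Complex.volume_closedBall] at v2
  rw [Complex.volume_ball] at v1
  constructor
  · refine v2.trans (le_trans ?_ (mul_le_mul_right v1 _))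
    rw [← mul_assoc]
    gcongr
    rw [← ENNReal.ofReal_pow (by positivity), ← ENNReal.ofReal_pow (by positivity),
      ← ENNReal.ofReal_mul (by positivity)]
    refine ENNReal.ofReal_le_ofReal ?_
    have hMm : M / m = Real.exp (Real.log (M / m)) := (Real.exp_log (by positivity)).symm
    have e : (r * M) ^ 2 = (M / m) ^ 2 * (r * m) ^ 2 := by field_simp
    rw [e]
    gcongr
    rw [hMm, ← Real.exp_nat_mul]
    refine Real.exp_le_exp.2 ?_
    push_cast
    exact const_bound hK h3
  · refine v2.trans_lt ?_
    exact ENNReal.mul_lt_top (by simp) (by simp)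

/-- Doubling inequality for the measure generated by the Jacobian of a `C¹`
`K`-quasiconformal homeomorphism of the plane:
`∬_{D(z₀,2r)} J(z,φ) ≤ exp{Kπ²(2+π⁴)²/(2 log 3)} ∬_{D(z₀,r)} J(z,φ)`,
equivalently `|φ(D(z₀,2r))| ≤ exp{Kπ²(2+π⁴)²/(2 log 3)}·|φ(D(z₀,r))|`. -/
theorem jacobian_doubling
    (K : ℝ) (hK : 1 ≤ K) (φ : ℂ → ℂ) (hφ : IsC1QCPlane K φ)
    (z₀ : ℂ) (r : ℝ) (hr : 0 < r) :
    ((∫ z in Metric.ball z₀ (2 * r), (fderiv ℝ φ z).det)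
        ≤ Real.exp (K * π ^ 2 * (2 + π ^ 4) ^ 2 / (2 * Real.log 3)) *
          ∫ z in Metric.ball z₀ r, (fderiv ℝ φ z).det) ∧
    volume (φ '' Metric.ball z₀ (2 * r))
        ≤ ENNReal.ofReal (Real.exp (K * π ^ 2 * (2 + π ^ 4) ^ 2 / (2 * Real.log 3))) *
          volume (φ '' Metric.ball z₀ r) := by
  obtain ⟨hv, hfin⟩ := vol_doubling hK hφ z₀ hr
  refine ⟨?_, hv⟩
  have hint : ∀ s : Set ℂ, MeasurableSet s →
      ∫ z in s, (fderiv ℝ φ z).det = (volume (φ '' s)).toReal := by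
    intro s hs
    rw [← vol_image hφ s hs, integral_eq_lintegral_of_nonneg_ae
      (Filter.Eventually.of_forall fun z => (hφ.2.2 z).1.le)]
    exact (ContinuousLinearMap.continuous_det.comp
      (hφ.1.continuous_fderiv (by norm_num))).aestronglyMeasurable
  rw [hint _ measurableSet_ball, hint _ measurableSet_ball]
  have hfin1 : volume (φ '' ball z₀ r) ≠ ⊤ :=
    ((measure_mono (Set.image_mono (ball_subset_ball (by linarith)))).trans_lt hfin).ne
  have := ENNReal.toReal_mono (ENNReal.mul_ne_top ENNReal.ofReal_ne_top hfin1) hv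
  rwa [ENNReal.toReal_mul, ENNReal.toReal_ofReal (Real.exp_pos _).le] at this
end

section
/- Let Ω ⊂ ℂ be a C¹ K-quasidisc and let φ : 𝔻 → Ω be a conformal mapping of the unit disc onto Ω. Then for every p with 1 ≤ p and p(K² − 1) < 2K², the complex derivative satisfies ∬_𝔻 |φ′(z)|^p dxdy < ∞. -/
open MeasureTheory Metric Real
open scoped ENNReal NNReal

lemma aux_inverse (φ : ℂ → ℂ) (hφd : DifferentiableOn ℂ φ (Metric.ball 0 1))
    (hφi : Set.InjOn φ (Metric.ball 0 1)) :
    ∃ ψ : ℂ → ℂ, DifferentiableOn ℂ ψ (φ '' ball 0 1) ∧ ∀ z ∈ ball (0:ℂ) 1, ψ (φ z) = z := by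
  have hl : ∀ z ∈ ball (0:ℂ) 1, Function.invFunOn φ (ball 0 1) (φ z) = z :=
    fun z hz => hφi.leftInvOn_invFunOn hz
  set ψ := Function.invFunOn φ (ball (0:ℂ) 1) with hψ
  have han : AnalyticOnNhd ℂ φ (ball 0 1) := hφd.analyticOnNhd isOpen_ball
  have hmap : ∀ z ∈ ball (0:ℂ) 1, nhds (φ z) ≤ Filter.map φ (nhds z) := by
    intro z hz
    rcases (han z hz).eventually_constant_or_nhds_le_map_nhds with h | h
    · exfalso
      have h2 : ∀ᶠ y in nhds z, y = z := by
        filter_upwards [h, isOpen_ball.mem_nhds hz] with y hy hy2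
        exact hφi hy2 hz hy
      have h3 : ∀ᶠ y in nhdsWithin z {z}ᶜ, False := by
        filter_upwards [h2.filter_mono nhdsWithin_le_nhds, self_mem_nhdsWithin] with y hy hy2
        exact hy2 hy
      exact h3.exists.elim (fun _ h => h)
    · exact h
  have hopen : ∀ z ∈ ball (0:ℂ) 1, φ '' ball 0 1 ∈ nhds (φ z) := fun z hz =>
    hmap z hz (Filter.image_mem_map (isOpen_ball.mem_nhds hz))
  have hcont : ∀ z ∈ ball (0:ℂ) 1, ContinuousAt ψ (φ z) := by
    intro z hz
    unfold ContinuousAt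
    rw [hl z hz]
    intro U hU
    have : φ '' (U ∩ ball 0 1) ∈ nhds (φ z) :=
      hmap z hz (Filter.image_mem_map (Filter.inter_mem hU (isOpen_ball.mem_nhds hz)))
    rw [Filter.mem_map]
    refine Filter.mem_of_superset this ?_
    rintro _ ⟨y, hy, rfl⟩
    change ψ (φ y) ∈ U
    rw [hl y hy.2]; exact hy.1
  have hdiff0 : ∀ z ∈ ball (0:ℂ) 1, deriv φ z ≠ 0 → DifferentiableAt ℂ ψ (φ z) := by
    intro z hz h0
    refine (HasDerivAt.of_local_left_inverse (f := φ) (f' := deriv φ z) (hcont z hz) ?_ h0 ?_).differentiableAt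
    · rw [hl z hz]; exact (han z hz).differentiableAt.hasDerivAt
    · filter_upwards [hopen z hz] with y hy
      obtain ⟨x, hx, rfl⟩ := hy
      rw [hl x hx]
  refine ⟨ψ, ?_, hl⟩
  rintro _ ⟨z, hz, rfl⟩
  refine DifferentiableAt.differentiableWithinAt ?_
  refine (Complex.analyticAt_of_differentiable_on_punctured_nhds_of_continuousAt ?_ (hcont z hz)).differentiableAt
  rcases (han z hz).deriv.eventually_eq_zero_or_eventually_ne_zero with h | h
  · exfalso
    obtain ⟨r, hr, hr2⟩ := Metric.eventually_nhds_iff_ball.1 (h.and (isOpen_ball.mem_nhds hz))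
    have hc : ∀ y ∈ ball z r, φ y = φ z := by
      intro y hy
      refine (convex_ball z r).is_const_of_fderivWithin_eq_zero (𝕜 := ℂ) (f := φ)
        (hφd.mono fun x hx => (hr2 x hx).2) ?_ hy (mem_ball_self hr)
      intro x hx
      rw [fderivWithin_of_isOpen isOpen_ball hx]
      ext; simp [(hr2 x hx).1]
    have : z + (r/2 : ℝ) = z := by
      have hm : z + (r/2 : ℝ) ∈ ball z r := by
        simp [abs_of_pos hr, hr]
      exact hφi (hr2 _ hm).2 hz (hc _ hm)
    have : (r/2 : ℝ) = (0:ℂ) := by simpa using this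
    norm_cast at this; linarith
  · have hc : Filter.Tendsto ψ (nhdsWithin (φ z) {φ z}ᶜ) (nhds z) := by
      have := (hcont z hz).tendsto
      rw [hl z hz] at this
      exact this.mono_left nhdsWithin_le_nhds
    rw [eventually_nhdsWithin_iff] at h
    have h4 := hc.eventually h
    filter_upwards [h4, mem_nhdsWithin_of_mem_nhds (hopen z hz), self_mem_nhdsWithin] with y h5 h6 h7
    obtain ⟨x, hx, rfl⟩ := h6
    rw [hl x hx] at h5
    apply hdiff0 x hx (h5 _)
    rintro rfl
    exact h7 rfl

lemma aux_schwarz (h : ℂ → ℂ) (hd : DifferentiableOn ℂ h (ball 0 1))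
    (hm : Set.MapsTo h (ball 0 1) (ball 0 1)) (ζ : ℂ) (hζ : ζ ∈ ball (0:ℂ) 1) :
    (1 - ‖h 0‖) * (1 - ‖ζ‖) / 4 ≤ 1 - ‖h ζ‖ := by
  have key : ∀ a b : ℂ, ‖1 - starRingEnd ℂ a * b‖ ^ 2 - ‖b - a‖ ^ 2 = (1 - ‖a‖^2) * (1 - ‖b‖^2) := by
    intro a b
    simp only [← Complex.normSq_eq_norm_sq, Complex.normSq_apply]
    simp
    ring
  have hlow : ∀ a b : ℂ, ‖a‖ < 1 → ‖b‖ < 1 → 1 - ‖a‖ ≤ ‖1 - starRingEnd ℂ a * b‖ := by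
    intro a b ha hb
    have := norm_sub_norm_le (1:ℂ) (starRingEnd ℂ a * b)
    simp at this
    nlinarith [norm_nonneg a]
  set a := h 0 with ha0
  have ha : ‖a‖ < 1 := by simpa using hm (mem_ball_self one_pos)
  have hb : ∀ x ∈ ball (0:ℂ) 1, ‖h x‖ < 1 := fun x hx => by simpa using hm hx
  have hne : ∀ x ∈ ball (0:ℂ) 1, 1 - starRingEnd ℂ a * h x ≠ 0 := by
    intro x hx h0
    have := hlow a (h x) ha (hb x hx)
    rw [h0] at this; simp at this; linarith
  have hs := Complex.norm_le_norm_of_mapsTo_ball (R := 1) (z := ζ)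
    (f := fun x => (h x - a) / (1 - starRingEnd ℂ a * h x)) ?_ ?_ (by simp [ha0]) (by simpa using hζ)
  rotate_left
  · exact (hd.sub_const a).div ((differentiableOn_const _).sub (hd.const_mul _)) hne
  · intro x hx
    have := key a (h x)
    have h1 := hb x hx
    have : ‖h x - a‖ ≤ ‖1 - starRingEnd ℂ a * h x‖ := by
      refine le_of_sq_le_sq ?_ (norm_nonneg _) 
      nlinarith [norm_nonneg a, norm_nonneg (h x), mul_nonneg (sub_nonneg.2 ((sq_le_one_iff₀ (norm_nonneg a)).2 ha.le)) (sub_nonneg.2 ((sq_le_one_iff₀ (norm_nonneg _)).2 h1.le))]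
    simp only [mem_closedBall, dist_zero_right, norm_div]
    exact div_le_one_of_le₀ this (norm_nonneg _)
  simp only [norm_div] at hs
  rw [div_le_iff₀ (norm_pos_iff.2 (hne ζ hζ))] at hs
  have h1 := hb ζ hζ
  have h2 : ‖ζ‖ < 1 := by simpa using hζ
  have h3 := key a (h ζ)
  have h4 := hlow a (h ζ) ha h1
  have p1 := norm_nonneg a
  have p2 := norm_nonneg (h ζ)
  have p3 := norm_nonneg ζ
  have p4 := norm_nonneg (h ζ - a)
  set A := ‖a‖
  set t := ‖h ζ‖
  set r := ‖ζ‖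
  set N := ‖1 - starRingEnd ℂ a * h ζ‖
  have h5 : ‖h ζ - a‖^2 ≤ r^2 * N^2 := by rw [← mul_pow]; gcongr
  have h6 : (1 - r^2) * (1-A)^2 ≤ (1 - r^2) * N^2 := by
    have : 0 ≤ 1 - r^2 := by nlinarith
    have : 0 ≤ 1 - A := by linarith
    gcongr
  have h7 : (1 - r^2) * (1-A)^2 ≤ (1-A^2)*(1-t^2) := by nlinarith
  have h8 : (1-r^2)*(1-A) ≤ (1+A)*(1-t^2) := by
    have : 0 < 1 - A := by linarith
    refine le_of_mul_le_mul_left ?_ this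
    nlinarith
  have h9 : (1-r)*(1-A) ≤ (1-r^2)*(1-A) := by
    apply mul_le_mul_of_nonneg_right _ (by linarith); nlinarith
  have h10 : (1+A)*(1-t^2) ≤ 2 * (2 * (1-t)) := by
    apply mul_le_mul (by linarith) (by nlinarith) (by nlinarith) (by norm_num)
  nlinarith

lemma aux_geom (Φ : ℂ → ℂ) (hC : ContDiff ℝ 1 Φ) (hB : Function.Bijective Φ)
    (hJ : ∀ z : ℂ, 0 < (fderiv ℝ Φ z).det) :
    ∃ F : ℂ → ℝ, Continuous F ∧ Φ '' ball 0 1 = {w | F w < 0} ∧ IsCompact {w | F w ≤ 0} ∧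
      ∃ m > 0, ∃ a > 0, ∀ η > 0, ∃ r > 0, ∀ w, -a ≤ F w → F w ≤ 0 → ∃ G : ℝ, ∃ n : ℂ, m ≤ G ∧ ‖n‖ = 1 ∧
        ∀ y : ℂ, ‖y‖ ≤ r → |F (w + y) - F w + G * (starRingEnd ℂ n * y).re| ≤ η * ‖y‖ := by
  have hCd : Differentiable ℝ Φ := hC.differentiable one_ne_zero
  let e : ℂ → (ℂ ≃L[ℝ] ℂ) := fun z => (fderiv ℝ Φ z).toContinuousLinearEquivOfDetNeZero (hJ z).ne'
  have he : ∀ z, HasFDerivAt Φ (e z : ℂ →L[ℝ] ℂ) z := fun z => by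
    have : (e z : ℂ →L[ℝ] ℂ) = fderiv ℝ Φ z := by ext <;> rfl
    rw [this]; exact (hCd z).hasFDerivAt
  have hopen : IsOpenMap Φ := by
    apply IsOpenMap.of_nhds_le
    intro z
    exact ((hC.contDiffAt.hasStrictFDerivAt' (he z) one_ne_zero).map_nhds_eq_of_equiv).ge
  let H : ℂ ≃ₜ ℂ := (Equiv.ofBijective Φ hB).toHomeomorphOfContinuousOpen hC.continuous hopen
  have hH : ∀ z, H z = Φ z := fun z => rfl
  have hs : ContDiff ℝ 1 H.symm := H.contDiff_symm he hC
  let F : ℂ → ℝ := fun w => ‖H.symm w‖ ^ 2 - 1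
  have hF : ContDiff ℝ 1 F := (hs.norm_sq ℝ).sub contDiff_const
  have hFd : Differentiable ℝ F := hF.differentiable one_ne_zero
  have hFc : Continuous (fderiv ℝ F) := hF.continuous_fderiv one_ne_zero
  have hFΦ : ∀ z, F (Φ z) = ‖z‖^2 - 1 := fun z => by
    change ‖H.symm (H z)‖^2 - 1 = _
    rw [H.symm_apply_apply]
  have hcomp : IsCompact {w | F w ≤ 0} := by
    have : {w | F w ≤ 0} = Φ '' closedBall 0 1 := by
      ext w
      obtain ⟨z, rfl⟩ := hB.2 w
      rw [hB.1.mem_set_image]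
      simp [hFΦ, sq_le_one_iff_abs_le_one]
    rw [this]
    exact (isCompact_closedBall _ _).image hC.continuous
  have hne : ∀ w, -(1/2) ≤ F w → fderiv ℝ F w ≠ 0 := by
    intro w hw h0
    obtain ⟨z, rfl⟩ := hB.2 w
    have h1 : HasFDerivAt (fun z => F (Φ z)) ((fderiv ℝ F (Φ z)).comp (fderiv ℝ Φ z)) z :=
      (hFd _).hasFDerivAt.comp z (hCd z).hasFDerivAt
    rw [h0] at h1
    simp only [hFΦ] at h1
    have h2 := ((hasStrictFDerivAt_norm_sq z).hasFDerivAt).sub_const (1:ℝ)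
    have h3 := congrArg (fun L => L z) (h1.unique h2)
    simp at h3
    rw [hFΦ] at hw
    simp [h3] at hw
    norm_num at hw
  have hK : IsCompact {w | -(1/2) ≤ F w ∧ F w ≤ 0} := by
    have : {w | -(1/2) ≤ F w ∧ F w ≤ 0} = {w | F w ≤ 0} ∩ {w | -(1/2) ≤ F w} := by
      ext; simp [and_comm]
    rw [this]
    exact hcomp.inter_right (isClosed_le continuous_const hF.continuous)
  have hm : ∃ m > 0, ∀ w, -(1/2) ≤ F w → F w ≤ 0 → m ≤ ‖fderiv ℝ F w‖ := by
    rcases Set.eq_empty_or_nonempty {w | -(1/2) ≤ F w ∧ F w ≤ 0} with h | h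
    · refine ⟨1, one_pos, fun w h1 h2 => ?_⟩
      have : w ∈ {w | -(1/2) ≤ F w ∧ F w ≤ 0} := ⟨h1, h2⟩
      rw [h] at this; exact this.elim
    · obtain ⟨x, hx, hx2⟩ := hK.exists_isMinOn h hFc.norm.continuousOn
      exact ⟨_, norm_pos_iff.2 (hne x hx.1), fun w h1 h2 => hx2 ⟨h1, h2⟩⟩
  obtain ⟨m, hm0, hm⟩ := hm
  refine ⟨F, hF.continuous, ?_, hcomp, m, hm0, 1/2, by norm_num, fun η hη => ?_⟩
  · ext w
    obtain ⟨z, rfl⟩ := hB.2 w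
    rw [hB.1.mem_set_image]
    simp [hFΦ, sq_lt_one_iff_abs_lt_one]
  · have hU := (hcomp.cthickening (r := 1)).uniformContinuousOn_of_continuous (f := fderiv ℝ F) hFc.continuousOn
    rw [Metric.uniformContinuousOn_iff] at hU
    obtain ⟨δ, hδ, hU⟩ := hU η hη
    refine ⟨min 1 (δ/2), by positivity, fun w h1 h2 => ?_⟩
    set g := (InnerProductSpace.toDual ℝ ℂ).symm (fderiv ℝ F w) with hg
    have hgn : ‖g‖ = ‖fderiv ℝ F w‖ := by simp [hg]
    have hg0 : 0 < ‖g‖ := by rw [hgn]; exact norm_pos_iff.2 (hne w h1)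
    refine ⟨‖g‖, -(g / (‖g‖ : ℂ)), by rw [hgn]; exact hm w h1 h2, by simp [hg0.ne'], fun y hy => ?_⟩
    have hL : ‖g‖ * (starRingEnd ℂ (-(g / (‖g‖ : ℂ))) * y).re = - fderiv ℝ F w y := by
      have : fderiv ℝ F w y = inner ℝ g y := by simp [hg]
      rw [this, Complex.inner]
      rw [← Complex.re_ofReal_mul]
      have : ((‖g‖:ℝ):ℂ) ≠ 0 := by exact_mod_cast hg0.ne'
      rw [← Complex.neg_re]
      congr 1
      simp
      field_simp
    rw [hL]
    have hmv := (convex_closedBall w (min 1 (δ/2))).norm_image_sub_le_of_norm_hasFDerivWithin_le' (𝕜 := ℝ) (f := F)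
      (f' := fderiv ℝ F) (φ := fderiv ℝ F w) (C := η) (x := w) (y := w + y)
      (fun x _ => (hFd x).hasFDerivAt.hasFDerivWithinAt) ?_ (mem_closedBall_self (by positivity)) (by simpa using hy)
    · simp only [add_sub_cancel_left, Real.norm_eq_abs] at hmv
      rw [← sub_eq_add_neg]; exact hmv
    · intro x hx
      rw [mem_closedBall] at hx
      rw [← dist_eq_norm]
      refine (hU x ?_ w ?_ ?_).le
      · exact mem_cthickening_of_dist_le x w 1 _ h2 (hx.trans (min_le_left _ _))
      · exact self_subset_cthickening _ h2
      · have := hx.trans (min_le_right _ _); linarith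

lemma aux_int (q : ℝ) (C : ℝ) (g : ℂ → ℂ) (p : ℝ) (hp : 1 ≤ p) (hq : q * p = -(1/2)) (hC : 0 ≤ C)
    (h : ∀ z ∈ ball (0:ℂ) 1, ‖g z‖ ≤ C * (1 - ‖z‖) ^ q) :
    ∫⁻ z in Metric.ball (0 : ℂ) 1, (‖g z‖₊ : ℝ≥0∞) ^ p < ⊤ := by
  have hi : IntegrableOn (fun z : ℂ => C ^ p * (1 - ‖z‖) ^ (-(1/2) : ℝ)) (ball 0 1) := by
    rw [integrableOn_fun_norm_addHaar (f := fun t => C ^ p * (1 - t) ^ (-(1/2) : ℝ)) (E := ℂ) (r := 1) volume]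
    have h0 : IntervalIntegrable (fun t : ℝ => t ^ (-(1/2) : ℝ)) volume 0 1 :=
      intervalIntegral.intervalIntegrable_rpow' (by norm_num)
    have h1 := (h0.comp_sub_left 1).symm
    simp only [sub_self, sub_zero] at h1
    have h2 := ((h1.const_mul (C^p)).continuousOn_mul (g := fun t => t ^ (Module.finrank ℝ ℂ - 1)) (by fun_prop))
    rw [intervalIntegrable_iff_integrableOn_Ioo_of_le zero_le_one] at h2
    exact h2
  refine lt_of_le_of_lt ?_ hi.2
  refine setLIntegral_mono' measurableSet_ball fun z hz => ?_
  have hz1 : 0 < 1 - ‖z‖ := by simpa using hz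
  rw [← enorm_eq_nnnorm, ← ofReal_norm, ← ofReal_norm, ENNReal.ofReal_rpow_of_nonneg (norm_nonneg _) (by linarith)]
  apply ENNReal.ofReal_le_ofReal
  calc ‖g z‖ ^ p ≤ (C * (1 - ‖z‖) ^ q) ^ p := by
        apply Real.rpow_le_rpow (norm_nonneg _) (h z hz) (by linarith)
    _ = C ^ p * (1 - ‖z‖) ^ (-(1/2) : ℝ) := by
        rw [Real.mul_rpow hC (by positivity), ← Real.rpow_mul hz1.le, hq]
    _ ≤ _ := le_abs_self _

lemma aux_outer (φ : ℂ → ℂ) (hφd : DifferentiableOn ℂ φ (Metric.ball 0 1)) (z b : ℂ) (s : ℝ) (hs : 0 < s)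
    (hz : z ∈ ball (0:ℂ) 1) (hb : ∀ x ∈ ball (0:ℂ) 1, s / 2 ≤ ‖φ x - b‖) (hzb : ‖φ z - b‖ = 4 * s) :
    ‖deriv φ z‖ ≤ 64 * s / (1 - ‖z‖) := by
  have hz1 : 0 < 1 - ‖z‖ := by simpa using hz
  have hne : ∀ x ∈ ball (0:ℂ) 1, φ x - b ≠ 0 := fun x hx h0 => by
    have := hb x hx
    rw [h0] at this; simp at this; linarith
  have hsub : closedBall z ((1 - ‖z‖)/2) ⊆ ball 0 1 := by
    intro x hx
    rw [mem_closedBall, dist_eq_norm] at hx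
    have := norm_le_norm_add_norm_sub' x z
    simp; linarith
  have hgd : DifferentiableOn ℂ (fun x => (φ x - b)⁻¹) (ball 0 1) := (hφd.sub_const b).fun_inv hne
  have h1 := Complex.norm_deriv_le_of_forall_mem_sphere_norm_le (c := z) (R := (1 - ‖z‖)/2) (C := 2 / s)
    (f := fun x => (φ x - b)⁻¹) (by linarith) ?_ ?_
  · have hd : HasDerivAt φ (deriv φ z) z := (hφd.differentiableAt (isOpen_ball.mem_nhds hz)).hasDerivAt
    rw [((hd.sub_const b).fun_inv (hne z hz)).deriv, norm_div, norm_neg, norm_pow, hzb] at h1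
    rw [div_le_iff₀ (by positivity)] at h1
    refine h1.trans (le_of_eq ?_)
    field_simp
    norm_num
  · exact DifferentiableOn.diffContOnCl_ball (hgd.mono hsub) subset_rfl
  · intro x hx
    have := hb x (hsub (sphere_subset_closedBall hx))
    rw [norm_inv]
    calc ‖φ x - b‖⁻¹ ≤ (s/2)⁻¹ := by gcongr
      _ = 2 / s := by rw [inv_div]

lemma aux_cone (β : ℝ) (hβ : 0 < β) (hβ1 : β < 1) (ζ : ℂ) (hζ : ζ ∈ ball (0:ℂ) 1) :
    0 < ‖(1 + ζ) ^ (β : ℂ)‖ ∧ ‖(1 + ζ) ^ (β : ℂ)‖ ≤ 2 ∧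
    Real.cos (β * (π / 2)) * ‖(1 + ζ) ^ (β : ℂ)‖ ≤ ((1 + ζ) ^ (β : ℂ)).re := by
  have hz : ‖ζ‖ < 1 := by simpa using hζ
  have hre : 0 < (1 + ζ).re := by
    have := (abs_le.1 (Complex.abs_re_le_norm ζ)).1
    simp; linarith
  have hne : 1 + ζ ≠ 0 := fun h => by rw [h] at hre; simp at hre
  have hn : ‖(1 + ζ) ^ (β : ℂ)‖ = ‖1 + ζ‖ ^ β := by
    rw [Complex.norm_cpow_real]
  have h2 : ‖1 + ζ‖ ≤ 2 := by
    have := norm_add_le 1 ζ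
    simp at this; linarith
  have hr : ((1 + ζ) ^ (β : ℂ)).re = ‖1 + ζ‖ ^ β * Real.cos (β * (1 + ζ).arg) := by
    rw [Complex.cpow_ofReal_re]; congr 2; ring
  rw [hn, hr]
  have hpos := norm_pos_iff.2 hne
  refine ⟨by positivity, ?_, ?_⟩
  · calc ‖1 + ζ‖ ^ β ≤ 2 ^ β := by gcongr
      _ ≤ 2 ^ (1:ℝ) := Real.rpow_le_rpow_of_exponent_le (by norm_num) hβ1.le
      _ = 2 := by simp
  · rw [mul_comm]
    gcongr
    have ha : |(1 + ζ).arg| ≤ π / 2 := Complex.abs_arg_le_pi_div_two_iff.2 hre.le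
    rw [← Real.cos_abs (β * (1 + ζ).arg), abs_mul, abs_of_pos hβ]
    apply Real.cos_le_cos_of_nonneg_of_le_pi (by positivity)
    · nlinarith [Real.pi_pos]
    · gcongr

set_option maxHeartbeats 2000000 in
lemma aux_point (φ : ℂ → ℂ) (hφd : DifferentiableOn ℂ φ (Metric.ball 0 1))
    (hφi : Set.InjOn φ (Metric.ball 0 1)) (F : ℂ → ℝ) (hFc : Continuous F)
    (him : φ '' ball 0 1 = {w | F w < 0}) (hcomp : IsCompact {w | F w ≤ 0})
    (m : ℝ) (hm : 0 < m) (a : ℝ) (ha : 0 < a)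
    (H : ∀ η > 0, ∃ r > 0, ∀ w, -a ≤ F w → F w ≤ 0 → ∃ G : ℝ, ∃ n : ℂ, m ≤ G ∧ ‖n‖ = 1 ∧
        ∀ y : ℂ, ‖y‖ ≤ r → |F (w + y) - F w + G * (starRingEnd ℂ n * y).re| ≤ η * ‖y‖)
    (β : ℝ) (hβ : 0 < β) (hβ1 : β < 1) :
    ∃ C, 0 ≤ C ∧ ∀ z ∈ ball (0:ℂ) 1, ‖deriv φ z‖ ≤ C * (1 - ‖z‖) ^ (β - 1) := by
  obtain ⟨ψ, hψd, hψ⟩ := aux_inverse φ hφd hφi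
  have hψm : Set.MapsTo ψ {w | F w < 0} (ball 0 1) := by
    rw [← him]
    rintro _ ⟨z, hz, rfl⟩
    rw [hψ z hz]; exact hz
  rw [him] at hψd
  have hFm : ∀ z ∈ ball (0:ℂ) 1, F (φ z) < 0 := fun z hz => by
    have : φ z ∈ {w | F w < 0} := him ▸ Set.mem_image_of_mem _ hz
    exact this
  have hKc : ∀ c > 0, IsCompact {w | F w ≤ -c} ∧ {w | F w ≤ -c} ⊆ {w | F w < 0} := by
    intro c hc
    refine ⟨hcomp.of_isClosed_subset (isClosed_le hFc continuous_const) ?_, ?_⟩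
    · intro w hw; simp only [Set.mem_setOf_eq] at hw ⊢; linarith
    · intro w hw; simp only [Set.mem_setOf_eq] at hw ⊢; linarith
  set κ₀ := Real.cos (β * (π / 2)) with hκ₀
  have hκ₀p : 0 < κ₀ := by
    apply Real.cos_pos_of_mem_Ioo
    constructor <;> nlinarith [Real.pi_pos]
  set η := min (m * κ₀ / 2) (m / 4) with hη
  have hηp : 0 < η := by positivity
  have hη1 : 2 * η ≤ m * κ₀ := by have := min_le_left (m * κ₀ / 2) (m / 4); linarith
  have hη2 : 4 * η ≤ m := by have := min_le_right (m * κ₀ / 2) (m / 4); linarith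
  obtain ⟨r, hr, H⟩ := H η hηp
  set R := r / 5 with hR
  have hRp : 0 < R := by positivity
  set a' := min a (m * R) with ha'
  have ha'p : 0 < a' := by positivity
  -- uniform bound for ψ on a compact set
  obtain ⟨κ, hκ, hκb⟩ : ∃ κ > 0, ∀ w, F w ≤ -(m * R / 2) → κ ≤ 1 - ‖ψ w‖ := by
    obtain ⟨hc1, hc2⟩ := hKc (m * R / 2) (by positivity)
    rcases Set.eq_empty_or_nonempty {w | F w ≤ -(m * R / 2)} with h | h
    · refine ⟨1, one_pos, fun w h1 => ?_⟩
      have : w ∈ {w | F w ≤ -(m * R / 2)} := h1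
      rw [h] at this; exact this.elim
    · obtain ⟨x, hx, hx2⟩ := hc1.exists_isMinOn h (f := fun w => 1 - ‖ψ w‖)
        (continuousOn_const.sub (hψd.continuousOn.mono hc2).norm)
      exact ⟨1 - ‖ψ x‖, by simpa using hψm (hc2 hx), fun w h1 => hx2 h1⟩
  -- far bound
  obtain ⟨C₁, hC₁⟩ : ∃ C₁, ∀ z ∈ ball (0:ℂ) 1, F (φ z) ≤ -a' → ‖deriv φ z‖ ≤ C₁ := by
    obtain ⟨hc1, hc2⟩ := hKc a' ha'p
    have hc3 : IsCompact (ψ '' {w | F w ≤ -a'}) := hc1.image_of_continuousOn (hψd.continuousOn.mono hc2)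
    have hsub : ψ '' {w | F w ≤ -a'} ⊆ ball 0 1 := by
      rintro _ ⟨w, hw, rfl⟩; exact hψm (hc2 hw)
    obtain ⟨C, hC⟩ := hc3.exists_bound_of_continuousOn (f := deriv φ)
      ((hφd.deriv isOpen_ball).continuousOn.mono hsub)
    exact ⟨C, fun z hz h => hC z ⟨φ z, h, hψ z hz⟩⟩
  set C₂ := 64 * R * (4 / κ) ^ β with hC₂
  have hC₂p : 0 ≤ C₂ := by positivity
  refine ⟨max C₁ C₂, le_max_of_le_right hC₂p, fun z hz => ?_⟩
  have hz1 : 0 < 1 - ‖z‖ := by simpa using hz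
  rcases le_or_gt (F (φ z)) (-a') with hfar | hnear
  · have h1 : 1 ≤ (1 - ‖z‖) ^ (β - 1) :=
      Real.one_le_rpow_of_pos_of_le_one_of_nonpos hz1 (by linarith [norm_nonneg z]) (by linarith)
    calc ‖deriv φ z‖ ≤ C₁ := hC₁ z hz hfar
      _ ≤ max C₁ C₂ := le_max_left _ _
      _ ≤ _ := le_mul_of_one_le_right (le_max_of_le_right hC₂p) h1
  set w := φ z with hw
  set δ := - F w with hδ
  have hδp : 0 < δ := by have := hFm z hz; linarith
  have hδa : δ ≤ a := by have := min_le_left a (m * R); linarith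
  have hδR : δ ≤ m * R := by have := min_le_right a (m * R); linarith
  obtain ⟨G, n, hG, hn, hF⟩ := H w (by linarith) (by linarith)
  have hGp : 0 < G := by linarith
  set s := δ / (2 * G) with hs
  have hsp : 0 < s := by positivity
  have hsG : G * s = δ / 2 := by rw [hs]; field_simp
  have hsR : s ≤ R := by
    rw [hs, div_le_iff₀ (by positivity)]
    nlinarith
  have hnn : starRingEnd ℂ n * n = 1 := by
    rw [mul_comm, Complex.mul_conj, Complex.normSq_eq_norm_sq, hn]; simp
  have hηs : 4 * (η * s) ≤ G * s := by nlinarith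
  have hout : ‖deriv φ z‖ ≤ 64 * s / (1 - ‖z‖) := by
    apply aux_outer φ hφd z (w - 4 * s * n) s hsp hz
    · intro x hx
      by_contra! hcon
      have h1 := hFm x hx
      set y := φ x - (w - 4 * s * n) with hy
      have h2 : φ x = w + (y - 4 * s * n) := by rw [hy]; ring
      have hyn : ‖y - 4 * s * n‖ ≤ ‖y‖ + 4 * s := by
        refine (norm_sub_le _ _).trans (le_of_eq ?_)
        simp [hn, abs_of_pos hsp]
      have h3 := (abs_le.1 (hF (y - 4 * s * n) (by linarith))).1
      rw [← h2] at h3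
      have h4 : (starRingEnd ℂ n * (y - 4 * s * n)).re = (starRingEnd ℂ n * y).re - 4 * s := by
        have : starRingEnd ℂ n * (y - 4 * s * n) = starRingEnd ℂ n * y - ((4 * s : ℝ) : ℂ) := by
          push_cast
          linear_combination (-(4 * s) : ℂ) * hnn
        rw [this, Complex.sub_re, Complex.ofReal_re]
      have h5 : (starRingEnd ℂ n * y).re ≤ ‖y‖ := by
        refine (Complex.re_le_norm _).trans (le_of_eq ?_)
        simp [hn]
      rw [h4] at h3
      have h6 : η * ‖y - 4 * s * n‖ ≤ η * (‖y‖ + 4 * s) := by gcongr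
      have h7 : G * (starRingEnd ℂ n * y).re ≤ G * ‖y‖ := by gcongr
      have h8 : G * ‖y‖ ≤ G * (s / 2) := by gcongr
      have h9 : η * ‖y‖ ≤ η * (s / 2) := by gcongr
      nlinarith
    · simp [← hw, hn, abs_of_pos hsp]
  -- inner estimate
  let f : ℂ → ℂ := fun ζ => w + (R * n * (1 + ζ) ^ (β : ℂ) - s * n)
  have hfest : ∀ ζ ∈ ball (0:ℂ) 1, F (f ζ) ≤ -(3 / 8) * δ - R * (G * ((1 + ζ) ^ (β : ℂ)).re)
      + R * (η * ‖(1 + ζ) ^ (β : ℂ)‖) := by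
    intro ζ hζ
    obtain ⟨c1, c2, c3⟩ := aux_cone β hβ hβ1 ζ hζ
    set q := (1 + ζ) ^ (β : ℂ) with hq
    have hyn : ‖R * n * q - s * n‖ ≤ R * ‖q‖ + s := by
      refine (norm_sub_le _ _).trans (le_of_eq ?_)
      simp [hn, abs_of_pos hsp, abs_of_pos hRp]
    have hle : R * ‖q‖ ≤ R * 2 := by gcongr
    have h3 := (abs_le.1 (hF (R * n * q - s * n) (by linarith))).2
    have h4 : (starRingEnd ℂ n * (R * n * q - s * n)).re = R * q.re - s := by
      have : starRingEnd ℂ n * (R * n * q - s * n) = R * q - s := by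
        linear_combination (R * q - s : ℂ) * hnn
      rw [this, Complex.sub_re, Complex.ofReal_re, Complex.re_ofReal_mul]
    rw [h4] at h3
    have h6 : η * ‖R * n * q - s * n‖ ≤ η * (R * ‖q‖ + s) := by gcongr
    change F (w + (R * n * q - s * n)) ≤ _
    nlinarith
  have hfm : Set.MapsTo f (ball 0 1) {w | F w < 0} := by
    intro ζ hζ
    have h1 := hfest ζ hζ
    obtain ⟨c1, c2, c3⟩ := aux_cone β hβ hβ1 ζ hζ
    set q := (1 + ζ) ^ (β : ℂ) with hq
    have h2 : η * ‖q‖ ≤ G * q.re := by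
      calc η * ‖q‖ ≤ (m * κ₀) * ‖q‖ := by gcongr; linarith
        _ = m * (κ₀ * ‖q‖) := by ring
        _ ≤ G * q.re := by
          apply mul_le_mul hG c3 (by positivity) hGp.le
    have h3 := mul_le_mul_of_nonneg_left h2 hRp.le
    change F (f ζ) < 0
    linarith
  have hf0 : F (f 0) ≤ -(m * R / 2) := by
    have h1 := hfest 0 (by simp)
    simp only [add_zero, Complex.one_cpow, Complex.one_re, norm_one, mul_one] at h1
    nlinarith
  have hfd : DifferentiableOn ℂ f (ball 0 1) := by
    intro ζ hζ
    apply DifferentiableAt.differentiableWithinAt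
    have hre : 0 < (1 + ζ).re := by
      have h1 : ‖ζ‖ < 1 := by simpa using hζ
      have := (abs_le.1 (Complex.abs_re_le_norm ζ)).1
      simp; linarith
    have : DifferentiableAt ℂ (fun ζ : ℂ => (1 + ζ) ^ (β : ℂ)) ζ :=
      DifferentiableAt.cpow_const (by fun_prop) (Or.inl hre)
    exact ((this.const_mul _).sub_const _).const_add _
  set t := (s / R) ^ (1 / β) with ht
  have htp : 0 < t := by positivity
  have ht1 : t ≤ 1 := Real.rpow_le_one (by positivity) (by rw [div_le_one hRp]; exact hsR) (by positivity)
  have htβ : t ^ β = s / R := by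
    rw [ht, ← Real.rpow_mul (by positivity)]; simp [hβ.ne']
  have hζ : ((-1 + t : ℝ) : ℂ) ∈ ball (0:ℂ) 1 := by
    rw [mem_ball_zero_iff, Complex.norm_real, Real.norm_eq_abs, abs_lt]; constructor <;> linarith
  have hζn : ‖((-1 + t : ℝ) : ℂ)‖ = 1 - t := by
    rw [Complex.norm_real, Real.norm_eq_abs, abs_of_nonpos (by linarith)]; ring
  have hfw : f ((-1 + t : ℝ) : ℂ) = w := by
    change w + (R * n * (1 + ((-1 + t : ℝ) : ℂ)) ^ (β : ℂ) - s * n) = w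
    have : (1 + ((-1 + t : ℝ) : ℂ)) ^ (β : ℂ) = ((s / R : ℝ) : ℂ) := by
      rw [← htβ, Complex.ofReal_cpow htp.le]; congr 1; push_cast; ring
    rw [this]
    push_cast
    have : (R : ℂ) ≠ 0 := by exact_mod_cast hRp.ne'
    field_simp
    ring
  have hS := aux_schwarz (fun ζ => ψ (f ζ)) (hψd.comp hfd hfm) (hψm.comp hfm) _ hζ
  simp only [hfw, hζn] at hS
  rw [hw, hψ z hz] at hS
  have hκ1 := hκb _ hf0
  have htz : t ≤ 4 / κ * (1 - ‖z‖) := by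
    have : κ * t ≤ (1 - ‖ψ (f 0)‖) * t := by gcongr
    rw [div_mul_eq_mul_div, le_div_iff₀ hκ]
    nlinarith
  have hsz : s ≤ R * ((4 / κ) ^ β * (1 - ‖z‖) ^ β) := by
    rw [← Real.mul_rpow (by positivity) hz1.le]
    have : s = R * t ^ β := by rw [htβ]; field_simp
    rw [this]
    gcongr
  calc ‖deriv φ z‖ ≤ 64 * s / (1 - ‖z‖) := hout
    _ ≤ 64 * (R * ((4 / κ) ^ β * (1 - ‖z‖) ^ β)) / (1 - ‖z‖) := by gcongr
    _ = C₂ * (1 - ‖z‖) ^ (β - 1) := by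
      rw [Real.rpow_sub hz1, Real.rpow_one, hC₂]; ring
    _ ≤ max C₁ C₂ * (1 - ‖z‖) ^ (β - 1) := by gcongr; exact le_max_right _ _

theorem conformal_derivative_integrability_quasidisc
    (K : ℝ) (hK : 1 ≤ K) (Φ : ℂ → ℂ) (hΦ : IsC1QCPlane K Φ)
    (Ω : Set ℂ) (hΩ : Ω = Φ '' Metric.ball 0 1)
    (φ : ℂ → ℂ) (hφd : DifferentiableOn ℂ φ (Metric.ball 0 1))
    (hφi : Set.InjOn φ (Metric.ball 0 1)) (hφim : φ '' Metric.ball 0 1 = Ω)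
    (p : ℝ) (hp : 1 ≤ p) (hpK : p * (K ^ 2 - 1) < 2 * K ^ 2) :
    ∫⁻ z in Metric.ball (0 : ℂ) 1, (‖deriv φ z‖₊ : ℝ≥0∞) ^ p < ⊤ := by
  obtain ⟨F, hFc, him, hcomp, m, hm, a, ha, H⟩ := aux_geom Φ hΦ.1 hΦ.2.1 (fun z => (hΦ.2.2 z).1)
  have hp0 : 0 < p := by linarith
  have h1 : 1 / (2 * p) ≤ 1 / 2 := by
    apply one_div_le_one_div_of_le <;> linarith
  have h2 : 0 < 1 / (2 * p) := by positivity
  obtain ⟨C, hC, hb⟩ := aux_point φ hφd hφi F hFc (by rw [hφim, hΩ, him]) hcomp m hm a ha H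
    (1 - 1 / (2 * p)) (by linarith) (by linarith)
  refine aux_int (1 - 1 / (2 * p) - 1) C (deriv φ) p hp ?_ hC hb
  field_simp
  ring
end
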